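/- arXiv:2108.05687 — 3 statements merged into one kernel-verified Lean document; each statement's English description precedes it below -/
import Mathlib

section
/- For every graph H and constants λ, β > 0 there exist γ, ε, C > 0 such that, for every sufficiently large n and every m ≥ C·n^{2−1/m₂(H)}, the conditional probability Pr[Z_H ≤ γ·n^{v(H)}·(m/n²)^{e(H)} | G_{n,m}^H is (ε,λ)-lower-regular] is at most β^m, where Z_H denotes the number of canonical copies of H in G_{n,m}^H. -/
open Finset

variable {k n : ℕ}

/-- Number of edges of `G ⊆ K_n^H` between class `i` restricted to `A` and class `j`
restricted to `B`, counted as ordered pairs `(u, v) ∈ V_i × V_j`. -/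
noncomputable def pairCountIn (G : SimpleGraph (Fin k × Fin n)) (i j : Fin k)
    (A B : Finset (Fin n)) : ℕ :=
  Nat.card {p : Fin n × Fin n // p.1 ∈ A ∧ p.2 ∈ B ∧ G.Adj (i, p.1) (j, p.2)}

/-- Number of edges of `G ⊆ K_n^H` between classes `V_i` and `V_j`. -/
noncomputable def pairCount (G : SimpleGraph (Fin k × Fin n)) (i j : Fin k) : ℕ :=
  Nat.card {p : Fin n × Fin n // G.Adj (i, p.1) (j, p.2)}

/-- The density `d(A, B)` of the bipartite graph `G(V_i, V_j)` between `A ⊆ V_i`, `B ⊆ V_j`. -/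
noncomputable def density (G : SimpleGraph (Fin k × Fin n)) (i j : Fin k)
    (A B : Finset (Fin n)) : ℝ :=
  (pairCountIn G i j A B : ℝ) / ((A.card : ℝ) * (B.card : ℝ))

/-- The pair `(V_i, V_j)` of `G` is `(ε, λ)`-lower-regular. -/
def LowerRegularPair (ε lam : ℝ) (G : SimpleGraph (Fin k × Fin n)) (i j : Fin k) : Prop :=
  ∀ A B : Finset (Fin n), ε * n ≤ (A.card : ℝ) → ε * n ≤ (B.card : ℝ) →
    lam * density G i j Finset.univ Finset.univ ≤ density G i j A B

/-- The pair `(V_i, V_j)` of `G` is `(ε, δ)`-lower-regular for a function `δ`. -/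
def FnLowerRegularPair (ε : ℝ) (δ : ℝ → ℝ) (G : SimpleGraph (Fin k × Fin n)) (i j : Fin k) :
    Prop :=
  ∀ A B : Finset (Fin n), ε * n ≤ (A.card : ℝ) → ε * n ≤ (B.card : ℝ) →
    δ (min (A.card : ℝ) (B.card : ℝ) / n) * density G i j Finset.univ Finset.univ
      < density G i j A B

/-- `G` is a subgraph of `K_n^H`: edges only between classes `V_i, V_j` with `ij ∈ E(H)`. -/
def IsSubgraphKnH (H : SimpleGraph (Fin k)) (G : SimpleGraph (Fin k × Fin n)) : Prop :=
  ∀ ⦃x y : Fin k × Fin n⦄, G.Adj x y → H.Adj x.1 y.1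

/-- `G ∈ 𝒢(H, n, m)`: a subgraph of `K_n^H` with exactly `m` edges between `V_i` and `V_j`
for each edge `ij` of `H`. -/
def MemFamily (H : SimpleGraph (Fin k)) (m : ℕ) (G : SimpleGraph (Fin k × Fin n)) : Prop :=
  IsSubgraphKnH H G ∧ ∀ i j, H.Adj i j → pairCount G i j = m

/-- `f` selects a canonical copy of `H` in `G ⊆ K_n^H` (vertex `i` goes to `V_i`). -/
def IsCanonicalCopy (H : SimpleGraph (Fin k)) (G : SimpleGraph (Fin k × Fin n))
    (f : Fin k → Fin n) : Prop :=
  ∀ ⦃i j⦄, H.Adj i j → G.Adj (i, f i) (j, f j)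

/-- The number of canonical copies of `H` in `G ⊆ K_n^H`. -/
noncomputable def copyCount (H : SimpleGraph (Fin k)) (G : SimpleGraph (Fin k × Fin n)) : ℕ :=
  Nat.card {f : Fin k → Fin n // IsCanonicalCopy H G f}

/-- `deg_H(e, G)`: the number of canonical copies of `H` in `G` containing both coordinates
of the pair `e ∈ V_a × V_b`. -/
noncomputable def degPair (H : SimpleGraph (Fin k)) (G : SimpleGraph (Fin k × Fin n))
    (a b : Fin k) (e : Fin n × Fin n) : ℕ :=
  Nat.card {f : Fin k → Fin n // IsCanonicalCopy H G f ∧ f a = e.1 ∧ f b = e.2}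

/-- The number of edges of a graph. -/
noncomputable def edgeCount (H : SimpleGraph (Fin k)) : ℕ := Nat.card H.edgeSet

/-- The 2-density `m₂(H) = max{(e(H')-1)/(v(H')-2) : H' ⊆ H, v(H') > 2}`, where a subgraph
is given by a vertex set `V'` and an edge subgraph `H'` with all edges inside `V'`. -/
noncomputable def twoDensity (H : SimpleGraph (Fin k)) : ℝ :=
  sSup {q : ℝ | ∃ (V' : Finset (Fin k)) (H' : SimpleGraph (Fin k)),
    H' ≤ H ∧ (∀ ⦃x y⦄, H'.Adj x y → x ∈ V' ∧ y ∈ V') ∧ 2 < V'.card ∧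
    q = ((edgeCount H' : ℝ) - 1) / ((V'.card : ℝ) - 2)}

/-!
A container argument. Suppose first that `λ < 1` and that two edges of `H` share a vertex.

View the maps `φ : V(H) → [n]` as the edges of an `e(H)`-partite hypergraph, with `φ` projecting to
the pair `(φ i, φ j)` at the edge `ij` of `H`. The definition of `m₂(H)` bounds its codegrees when
`m ≥ n ^ (2 - 1/m₂(H))`, so every tuple of edge sets spanning few copies of `H` lies in a container
which is determined by a small fingerprint and itself spans fewer than `κ n ^ v(H)` copies.

By counting in dense graphs, such a container is very sparse in some large rectangle `A ×ˢ B` of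
some edge of `H`. A lower-regular graph with `m` edges inside the container has many edges in
`A ×ˢ B`, all of them in this sparse part, and the probability of that is at most `β' ^ m` with
`β'` as small as we like. Fingerprints are so small that the union bound over them costs only a
factor `2 ^ m`, and since at least half of all `m`-sets are lower-regular, conditioning on
lower-regularity costs only a constant factor.

If `H` is a matching, the number of canonical copies is determined by `m`. If `λ ≥ 1`, then no
rectangle of half the size is sparser than the whole graph, which forces the graphs between the
classes to be complete bipartite.
-/

namespace KLR

section Containers

variable {Ω ι P : Type*} [DecidableEq P] {π : Ω → ι → P} {q B c : ℝ}
  {L T : Finset ι} {F X : Finset Ω} {S : Finset P} {j : ι}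

/-- The number of `ω ∈ F` whose projections to the coordinates in `T` agree with `x`. -/
def codegree (π : Ω → ι → P) (F : Finset Ω) (T : Finset ι) (x : ι → P) : ℕ :=
  #{ω ∈ F | ∀ j ∈ T, π ω j = x j}

/-- The codegree condition of the container method. View `F` as an `L`-partite hypergraph whose
edges are the tuples `(π ω j)_{j ∈ L}`; prescribing a nonempty set `T ⊆ L` of coordinates leaves
at most `B * q ^ (#T - 1)` edges. One factor `q` is moved to the left to avoid truncated
subtraction. -/
def CodegreeBounded (π : Ω → ι → P) (q B : ℝ) (L : Finset ι) (F : Finset Ω) : Prop :=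
  ∀ T ⊆ L, T.Nonempty → ∀ x, codegree π F T x * q ≤ B * q ^ #T

lemma CodegreeBounded.subset {F' : Finset Ω} (hF : CodegreeBounded π q B L F) (hq : 0 ≤ q)
    (h : F' ⊆ F) : CodegreeBounded π q B L F' := fun T hT hT₀ x =>
  (mul_le_mul_of_nonneg_right (mod_cast card_le_card (filter_subset_filter _ h)) hq).trans
    (hF T hT hT₀ x)

lemma codegreeBounded_empty (hq : 0 ≤ q) (hB : 0 ≤ B) : CodegreeBounded π q B L ∅ := by
  intro T _ _ x
  simp only [codegree, filter_empty, card_empty, Nat.cast_zero, zero_mul]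
  positivity

lemma CodegreeBounded.card_fiber_le (hF : CodegreeBounded π q B L F) (hq : 0 < q) (hj : j ∈ L)
    (x : P) : (#{ω ∈ F | π ω j = x} : ℝ) ≤ B := by
  have h := hF {j} (singleton_subset_iff.2 hj) (singleton_nonempty j) fun _ => x
  simp only [codegree, mem_singleton, forall_eq, card_singleton, pow_one] at h
  exact le_of_mul_le_mul_right h hq

lemma CodegreeBounded.card_filter_mem_le (hF : CodegreeBounded π q B L F) (hq : 0 < q)
    (hj : j ∈ L) (S : Finset P) : (#{ω ∈ F | π ω j ∈ S} : ℝ) ≤ #S * B := by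
  have h : ∀ ω ∈ ({ω ∈ F | π ω j ∈ S} : Finset Ω), π ω j ∈ S := fun ω hω => (mem_filter.1 hω).2
  rw [card_eq_sum_card_fiberwise h, ← nsmul_eq_mul]
  push_cast
  refine sum_le_card_nsmul _ _ _ fun x _ => ?_
  exact (mod_cast card_le_card (filter_subset_filter _ (filter_subset _ _)) :
    (_ : ℝ) ≤ _).trans (hF.card_fiber_le hq hj x)

lemma sum_card_fiber_le {α β : Type*} [DecidableEq β] (s : Finset α) (t : Finset β) (f : α → β) :
    ∑ b ∈ t, #{a ∈ s | f a = b} ≤ #s := by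
  simp only [card_eq_sum_ones, sum_fiberwise_eq_sum_filter]
  exact sum_le_sum_of_subset (filter_subset _ _)

lemma mul_card_le_card_of_card_fibers_le {β : Type*} [DecidableEq β] {f : Ω → β}
    (h : ∀ ω ∈ F, c * #{ω' ∈ F | f ω' = f ω} ≤ #{ω' ∈ X | f ω' = f ω}) : c * #F ≤ #X := by
  calc c * #F = ∑ b ∈ F.image f, c * #{ω ∈ F | f ω = b} := by
        rw [← mul_sum, card_eq_sum_card_image f F]
        push_cast
        rfl
    _ ≤ ∑ b ∈ F.image f, (#{ω ∈ X | f ω = b} : ℝ) := by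
        refine sum_le_sum fun b hb => ?_
        obtain ⟨ω, hω, rfl⟩ := mem_image.1 hb
        exact h ω hω
    _ ≤ #X := mod_cast sum_card_fiber_le _ _ _

lemma CodegreeBounded.card_saturated_le (hF : CodegreeBounded π q B L F) (hT : T ⊆ L)
    (hT₀ : T.Nonempty) (hc : 0 ≤ c) (hq : 0 ≤ q) (X : Finset Ω) :
    c * q * #{ω ∈ F | c * B * q ^ #T ≤ codegree π X T (π ω)} ≤ #X := by
  classical
  refine mul_card_le_card_of_card_fibers_le (f := fun ω => T.restrict (π ω)) fun ω hω => ?_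
  simp only [funext_iff, restrict, Subtype.forall]
  calc c * q * (#{ω' ∈ {ω ∈ F | c * B * q ^ #T ≤ codegree π X T (π ω)} |
          ∀ j ∈ T, π ω' j = π ω j} : ℝ)
      ≤ c * q * codegree π F T (π ω) := by
        refine mul_le_mul_of_nonneg_left (mod_cast card_le_card ?_) (mul_nonneg hc hq)
        exact filter_subset_filter _ (filter_subset _ _)
    _ = c * (codegree π F T (π ω) * q) := by ring
    _ ≤ c * (B * q ^ #T) := mul_le_mul_of_nonneg_left (hF T hT hT₀ _) hc
    _ ≤ codegree π X T (π ω) := by rw [← mul_assoc]; exact (mem_filter.1 hω).2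

open Classical in
/-- The members of `F` no projection of which has almost exhausted its codegree in `X`: they may
still be added to `X` in the greedy construction of a fingerprint. -/
noncomputable def unsaturated (π : Ω → ι → P) (q B c : ℝ) (L : Finset ι) (F X : Finset Ω) :
    Finset Ω :=
  {ω ∈ F | ∀ T ⊆ L, T.Nonempty → codegree π X T (π ω) < c * B * q ^ #T}

lemma CodegreeBounded.card_le_card_unsaturated_add (hF : CodegreeBounded π q B L F) (hc : 0 ≤ c)
    (hq : 0 ≤ q) (X : Finset Ω) :
    c * q * #F ≤ c * q * #(unsaturated π q B c L F X) + 2 ^ #L * #X := by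
  classical
  have hcover : F ⊆ unsaturated π q B c L F X ∪ {T ∈ L.powerset | T.Nonempty}.biUnion
      fun T => {ω ∈ F | c * B * q ^ #T ≤ codegree π X T (π ω)} := by
    intro ω hω
    simp only [unsaturated, mem_union, mem_filter, mem_biUnion, mem_powerset, hω, true_and]
    by_contra! h
    obtain ⟨⟨T, hTL, hT₀, hT⟩, h⟩ := h
    exact absurd (h T ⟨hTL, hT₀⟩) (not_lt.2 hT)
  have hcard : (#F : ℝ) ≤ #(unsaturated π q B c L F X) +
      ∑ T ∈ L.powerset with T.Nonempty, (#{ω ∈ F | c * B * q ^ #T ≤ codegree π X T (π ω)} : ℝ) :=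
    mod_cast (card_le_card hcover).trans
      ((card_union_le _ _).trans (by gcongr; exact card_biUnion_le))
  calc c * q * (#F : ℝ) ≤ c * q * #(unsaturated π q B c L F X) + ∑ T ∈ L.powerset with T.Nonempty,
        c * q * (#{ω ∈ F | c * B * q ^ #T ≤ codegree π X T (π ω)} : ℝ) := by
        rw [← mul_sum, ← mul_add]
        gcongr
    _ ≤ c * q * #(unsaturated π q B c L F X) + ∑ T ∈ L.powerset with T.Nonempty, (#X : ℝ) := by
        gcongr with T hT
        rw [mem_filter, mem_powerset] at hT
        exact hF.card_saturated_le hT.1 hT.2 hc hq X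
    _ ≤ _ := by
        rw [sum_const, nsmul_eq_mul]
        gcongr
        exact mod_cast (card_filter_le _ _).trans_eq (card_powerset L)

lemma codegree_union_le [DecidableEq Ω] (X Y : Finset Ω) (T : Finset ι) (x : ι → P) :
    codegree π (X ∪ Y) T x ≤ codegree π X T x + codegree π Y T x := by
  simp only [codegree, filter_union]
  exact card_union_le _ _

lemma CodegreeBounded.codegree_fiber_le [DecidableEq ι] (hF : CodegreeBounded π q B L F)
    (hq : 0 < q) (hj : j ∈ L) (hT : T ⊆ L.erase j) (y : P) (x : ι → P) :
    (codegree π {ω ∈ F | π ω j = y} T x : ℝ) ≤ B * q ^ #T := by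
  have hjT : j ∉ T := fun h => notMem_erase j L (hT h)
  have heq : codegree π {ω ∈ F | π ω j = y} T x =
      codegree π F (insert j T) (Function.update x j y) := by
    simp only [codegree, filter_filter, forall_mem_insert, Function.update_self]
    refine congrArg card (filter_congr fun ω _ => and_congr_right fun _ => ?_)
    refine forall₂_congr fun i hi => ?_
    rw [Function.update_of_ne (ne_of_mem_of_not_mem hi hjT)]
  have h := hF (insert j T) (insert_subset hj (hT.trans (erase_subset _ _))) (insert_nonempty _ _)
    (Function.update x j y)
  rw [card_insert_of_notMem hjT, pow_succ, ← mul_assoc] at h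
  exact heq ▸ le_of_mul_le_mul_right h hq

lemma CodegreeBounded.union_fiber [DecidableEq Ω] [DecidableEq ι] (hF : CodegreeBounded π q B L F)
    (hq : 0 < q) (hj : j ∈ L) (hX : CodegreeBounded π q ((c + 1) * q * B) (L.erase j) X) (y : P) :
    CodegreeBounded π q ((c + 1) * q * B) (L.erase j)
      (X ∪ {ω ∈ unsaturated π q B c (L.erase j) F X | π ω j = y}) := by
  set Y := ({ω ∈ unsaturated π q B c (L.erase j) F X | π ω j = y} : Finset Ω) with hY
  intro T hT hT₀ x
  have hunion : (codegree π (X ∪ Y) T x : ℝ) ≤ codegree π X T x + codegree π Y T x :=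
    mod_cast codegree_union_le X Y T x
  rcases Nat.eq_zero_or_pos (codegree π Y T x) with h | h
  · rw [h, Nat.cast_zero, add_zero] at hunion
    exact (mul_le_mul_of_nonneg_right hunion hq.le).trans (hX T hT hT₀ x)
  · obtain ⟨ω, hω⟩ := card_pos.1 h
    simp only [hY, unsaturated, mem_filter] at hω
    have hXT : (codegree π X T x : ℝ) < c * B * q ^ #T := by
      convert hω.1.1.2 T hT hT₀ using 2
      exact congrArg card (filter_congr fun ω' _ => forall₂_congr fun i hi => by rw [hω.2 i hi])
    have hYT : (codegree π Y T x : ℝ) ≤ B * q ^ #T := by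
      refine le_trans (mod_cast card_le_card (filter_subset_filter _ ?_))
        (hF.codegree_fiber_le hq hj hT y x)
      exact filter_subset_filter _ (filter_subset _ _)
    calc (codegree π (X ∪ Y) T x : ℝ) * q ≤ (c * B * q ^ #T + B * q ^ #T) * q := by
          gcongr; linarith
      _ = (c + 1) * q * B * q ^ #T := by ring

/-- `X` is a candidate for the members of `F` whose projection to the coordinate `j` lies in the
fingerprint `S`, thinned out to keep its codegrees in the coordinates `L` small. -/
structure IsCandidate (π : Ω → ι → P) (q B : ℝ) (L : Finset ι) (F : Finset Ω) (j : ι)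
    (S : Finset P) (X : Finset Ω) : Prop where
  subset : X ⊆ F
  proj_mem : ∀ ω ∈ X, π ω j ∈ S
  codegreeBounded : CodegreeBounded π q B L X

lemma exists_isCandidate_maximal (hq : 0 ≤ q) (hB : 0 ≤ B) (L : Finset ι) (F : Finset Ω) (j : ι)
    (S : Finset P) : ∃ X, IsCandidate π q B L F j S X ∧
      ∀ X', IsCandidate π q B L F j S X' → #X' ≤ #X := by
  classical
  have hne : ({X ∈ F.powerset | IsCandidate π q B L F j S X} : Finset (Finset Ω)).Nonempty :=
    ⟨∅, mem_filter.2 ⟨empty_mem_powerset F, empty_subset F, by simp, codegreeBounded_empty hq hB⟩⟩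
  obtain ⟨X, hX, hmax⟩ := exists_max_image _ card hne
  exact ⟨X, (mem_filter.1 hX).2, fun X' hX' =>
    hmax X' (mem_filter.2 ⟨mem_powerset.2 hX'.subset, hX'⟩)⟩

lemma card_le_mul_card_heavy_add [Fintype P] {f : Ω → P} (hB : ∀ x, (#{ω ∈ F | f ω = x} : ℝ) ≤ B)
    {t : ℝ} (ht : 0 ≤ t) :
    (#F : ℝ) ≤ B * #{x ∈ F.image f | t ≤ #{ω ∈ F | f ω = x}} + t * Fintype.card P := by
  calc (#F : ℝ) = ∑ x ∈ F.image f, (#{ω ∈ F | f ω = x} : ℝ) :=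
        mod_cast card_eq_sum_card_image f F
    _ ≤ ∑ x ∈ F.image f, ((if t ≤ #{ω ∈ F | f ω = x} then B else 0) + t) := by
        refine sum_le_sum fun x _ => ?_
        split_ifs with h
        · linarith [hB x]
        · linarith
    _ = B * #{x ∈ F.image f | t ≤ #{ω ∈ F | f ω = x}} + t * #(F.image f) := by
        rw [sum_add_distrib, ← sum_filter, sum_const, sum_const, nsmul_eq_mul, nsmul_eq_mul]
        ring
    _ ≤ _ := by gcongr; exact card_le_univ _

section DecidableIndex

variable [DecidableEq ι]

lemma IsCandidate.union_fiber (hX : IsCandidate π q ((c + 1) * q * B) (L.erase j) F j S X)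
    [DecidableEq Ω] (hF : CodegreeBounded π q B L F) (hq : 0 < q) (hj : j ∈ L) (x : P) :
    IsCandidate π q ((c + 1) * q * B) (L.erase j) F j (insert x S)
      (X ∪ {ω ∈ unsaturated π q B c (L.erase j) F X | π ω j = x}) where
  subset := union_subset hX.subset ((filter_subset _ _).trans (filter_subset _ _))
  proj_mem ω hω := by
    rcases mem_union.1 hω with h | h
    · exact mem_insert_of_mem (hX.proj_mem ω h)
    · exact (mem_filter.1 h).2 ▸ mem_insert_self _ _
  codegreeBounded := hF.union_fiber hq hj hX.codegreeBounded x

lemma CodegreeBounded.half_card_le_card_unsaturated (hF : CodegreeBounded π q B L F) (hq : 0 < q)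
    (hj : j ∈ L) (hc : 2 ^ (#L + 1) ≤ c) (hXF : (#X : ℝ) ≤ q * #F)
    (hS : 4 * (#S * B) ≤ (#F : ℝ)) :
    (#F : ℝ) / 2 ≤ #{ω ∈ unsaturated π q B c (L.erase j) F X | π ω j ∉ S} := by
  have hc₀ : 0 < c := lt_of_lt_of_le (by positivity) hc
  set U := unsaturated π q B c (L.erase j) F X
  have hU : (#F : ℝ) ≤ #U + #F / 4 := by
    have hUX := (show CodegreeBounded π q B (L.erase j) F from fun T hT =>
      hF T (hT.trans (erase_subset _ _))).card_le_card_unsaturated_add hc₀.le hq.le X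
    have hpow : (2 : ℝ) ^ #(L.erase j) * #X ≤ c / 4 * (q * #F) := by
      rw [← card_erase_add_one hj, pow_succ, pow_succ] at hc
      gcongr
      linarith
    refine le_of_mul_le_mul_left ?_ (mul_pos hc₀ hq)
    linarith
  have hsplit : (#U : ℝ) = #{ω ∈ U | π ω j ∈ S} + #{ω ∈ U | π ω j ∉ S} :=
    mod_cast (card_filter_add_card_filter_not _).symm
  have hUS : (#{ω ∈ U | π ω j ∈ S} : ℝ) ≤ #S * B :=
    (hF.subset hq.le (filter_subset _ _)).card_filter_mem_le hq hj S
  linarith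

/-- The outcome of the container algorithm on `E`: a small fingerprint `S` inside `E`, from which
alone one reads off sets `R S` disjoint from `E`, one of them a large part of a projection
of `F`. -/
structure IsFingerprint (π : Ω → ι → P) (s : ℕ) (a : ℝ) (F : Finset Ω)
    (R : (ι → Finset P) → ι → Finset P) (E S : ι → Finset P) : Prop where
  subset : ∀ j, S j ⊆ E j
  card_le : ∀ j, #(S j) ≤ s
  disjoint : ∀ j, Disjoint (E j) (R S j)
  exists_large : ∃ j, R S j ⊆ F.image (π · j) ∧ a ≤ #(R S j)

lemma IsFingerprint.update {s : ℕ} {a : ℝ} {R R' : (ι → Finset P) → ι → Finset P}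
    {E S' : ι → Finset P} (hS' : IsFingerprint π s a X R' E S') (hXF : X ⊆ F) (hSE : S ⊆ E j)
    (hSs : #S ≤ s) (hR : R (Function.update S' j S) = R' S') :
    IsFingerprint π s a F R E (Function.update S' j S) where
  subset := by
    refine Function.forall_update_iff S' (fun i T => T ⊆ E i) |>.2 ⟨hSE, fun i _ => hS'.subset i⟩
  card_le := by
    refine Function.forall_update_iff S' (fun _ T => #T ≤ s) |>.2 ⟨hSs, fun i _ => hS'.card_le i⟩
  disjoint i := hR ▸ hS'.disjoint i
  exists_large := by
    obtain ⟨i, hi, ha⟩ := hS'.exists_large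
    exact ⟨i, hR ▸ hi.trans (image_subset_image hXF), hR ▸ ha⟩

lemma isFingerprint_update_empty {s : ℕ} {a : ℝ} {R : (ι → Finset P) → ι → Finset P}
    {E : ι → Finset P} {D : Finset P} (hSE : S ⊆ E j) (hSs : #S ≤ s) (hED : Disjoint (E j) D)
    (hDF : D ⊆ F.image (π · j)) (ha : a ≤ #D)
    (hR : R (Function.update (fun _ => ∅) j S) = Function.update (fun _ => ∅) j D) :
    IsFingerprint π s a F R E (Function.update (fun _ => ∅) j S) where
  subset := Function.forall_update_iff _ (fun i T => T ⊆ E i) |>.2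
    ⟨hSE, fun i _ => empty_subset _⟩
  card_le := Function.forall_update_iff _ (fun _ T => #T ≤ s) |>.2
    ⟨hSs, fun i _ => by rw [card_empty]; exact Nat.zero_le s⟩
  disjoint := by
    rw [hR]
    exact Function.forall_update_iff _ (fun i T => Disjoint (E i) T) |>.2
      ⟨hED, fun i _ => disjoint_empty_right _⟩
  exists_large := ⟨j, by rwa [hR, Function.update_self], by rwa [hR, Function.update_self]⟩

lemma IsCandidate.card_filter_le {E : ι → Finset P} (hX : IsCandidate π q B (L.erase j) F j S X)
    (hSE : S ⊆ E j) :
    #{ω ∈ X | ∀ i ∈ L.erase j, π ω i ∈ E i} ≤ #{ω ∈ F | ∀ i ∈ L, π ω i ∈ E i} := by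
  refine card_le_card fun ω hω => ?_
  rw [mem_filter] at hω ⊢
  refine ⟨hX.subset hω.1, fun i hi => ?_⟩
  obtain rfl | hij := eq_or_ne i j
  · exact hSE (hX.proj_mem ω hω.1)
  · exact hω.2 i (mem_erase.2 ⟨hij, hi⟩)

lemma IsCandidate.many_or_exists_isFingerprint {s r : ℕ} {a B' : ℝ}
    {R R' : (ι → Finset P) → ι → Finset P} {E : ι → Finset P} (hq : 0 ≤ q) (hj : j ∈ L)
    (hX : IsCandidate π q B' (L.erase j) F j S X) (hbig : q / 8 * #F ≤ #X) (hSE : S ⊆ E j)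
    (hSs : #S ≤ s)
    (h : (q / 8) ^ r * #X ≤ (#{ω ∈ X | ∀ i ∈ L.erase j, π ω i ∈ E i} : ℝ) ∨
      ∃ S', IsFingerprint π s a X R' E S' ∧ ∀ i ∉ L.erase j, S' i = ∅)
    (hR : ∀ S', S' j = ∅ → R (Function.update S' j S) = R' S') :
    (q / 8) ^ (r + 1) * #F ≤ (#{ω ∈ F | ∀ i ∈ L, π ω i ∈ E i} : ℝ) ∨
      ∃ S', IsFingerprint π s a F R E S' ∧ ∀ i ∉ L, S' i = ∅ := by
  refine h.imp (fun hmany => ?_) fun ⟨S', hS', hSL⟩ => ?_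
  · calc (q / 8) ^ (r + 1) * #F = (q / 8) ^ r * (q / 8 * #F) := by ring
      _ ≤ (q / 8) ^ r * #X := by gcongr
      _ ≤ _ := hmany.trans (mod_cast hX.card_filter_le hSE)
  · refine ⟨Function.update S' j S, hS'.update hX.subset hSE hSs (hR S' ?_), fun i hi => ?_⟩
    · exact hSL j (notMem_erase j L)
    · rw [Function.update_of_ne (ne_of_mem_of_not_mem hj hi).symm]
      exact hSL i fun h => hi (mem_of_mem_erase h)

lemma IsCandidate.exists_heavy_points [Fintype P]
    (hX : IsCandidate π q ((c + 1) * q * B) (L.erase j) F j S X)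
    (hF : CodegreeBounded π q B L F) (hq : 0 < q) (hj : j ∈ L) (hc : 2 ^ (#L + 1) ≤ c)
    (hF₀ : F.Nonempty) (hXF : (#X : ℝ) ≤ q * #F) (hS : 4 * (#S * B) ≤ (#F : ℝ)) :
    ∃ D ⊆ F.image (π · j), (#F : ℝ) ≤ 4 * B * #D ∧ ∀ x ∈ D, x ∉ S ∧
      ∃ X', IsCandidate π q ((c + 1) * q * B) (L.erase j) F j (insert x S) X' ∧
        #X + #F / (8 * Fintype.card P) ≤ (#X' : ℝ) := by
  classical
  set U := unsaturated π q B c (L.erase j) F X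
  set F' : Finset Ω := {ω ∈ U | π ω j ∉ S}
  have hF'F : F' ⊆ F := (filter_subset _ _).trans (filter_subset _ _)
  refine ⟨{x ∈ F'.image (π · j) | #F / (8 * Fintype.card P) ≤ (#{ω ∈ F' | π ω j = x} : ℝ)},
    (filter_subset _ _).trans (image_subset_image hF'F), ?_, fun x hx => ?_⟩
  · have hP : (0 : ℝ) < Fintype.card P := mod_cast Fintype.card_pos_iff.2 ⟨π hF₀.choose j⟩
    have hhalf : (#F : ℝ) / 2 ≤ #F' := hF.half_card_le_card_unsaturated hq hj hc hXF hS
    have hheavy := card_le_mul_card_heavy_add (t := #F / (8 * Fintype.card P))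
      ((hF.subset hq.le hF'F).card_fiber_le hq hj) (by positivity)
    have hlight : (#F : ℝ) / (8 * Fintype.card P) * Fintype.card P = #F / 8 := by field_simp
    linarith
  · rw [mem_filter] at hx
    obtain ⟨ω, hω, rfl⟩ := mem_image.1 hx.1
    have hωS : π ω j ∉ S := (mem_filter.1 hω).2
    refine ⟨hωS, _, hX.union_fiber hF hq hj (π ω j), ?_⟩
    rw [card_union_of_disjoint]
    · push_cast
      gcongr
      exact hx.2.trans (mod_cast card_le_card (filter_subset_filter _ (filter_subset _ _)))
    · refine disjoint_left.2 fun ω' h h' => hωS ?_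
      exact (mem_filter.1 h').2 ▸ hX.proj_mem ω' h

lemma CodegreeBounded.exists_fingerprint [Fintype P] (hF : CodegreeBounded π q B L F)
    (hq : 0 < q) (hB : 0 < B) (hj : j ∈ L) (hc : 2 ^ (#L + 1) ≤ c) (hF₀ : F.Nonempty) {s : ℕ}
    (hs : (s : ℝ) = q * Fintype.card P) (hsF : 4 * (s * B) ≤ (#F : ℝ)) :
    ∃ (X : Finset P → Finset Ω) (D : Finset P → Finset P),
      (∀ S, IsCandidate π q ((c + 1) * q * B) (L.erase j) F j S (X S)) ∧
      ∀ E : Finset P, ∃ S ⊆ E, #S ≤ s ∧ (q / 8 * #F ≤ #(X S) ∨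
        Disjoint E (D S) ∧ D S ⊆ F.image (π · j) ∧ (#F : ℝ) ≤ 4 * B * #(D S)) := by
  have hc₀ : 0 < c := lt_of_lt_of_le (by positivity) hc
  have hP : (0 : ℝ) < Fintype.card P := mod_cast Fintype.card_pos_iff.2 ⟨π hF₀.choose j⟩
  choose X hX hXmax using
    exists_isCandidate_maximal (π := π) hq.le (B := (c + 1) * q * B) (by positivity) (L.erase j) F j
  have hD (S : Finset P) (hSs : #S ≤ s) (hSX : (#(X S) : ℝ) ≤ q * #F) :=
    (hX S).exists_heavy_points hF hq hj hc hF₀ hSX (le_trans (by gcongr) hsF)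
  choose! D hDF hD_card hD_ext using hD
  refine ⟨X, D, hX, fun E => ?_⟩
  -- A maximal `S ⊆ E` with large `X S` works: a point of `E ∩ D S` would extend it.
  set 𝒮 : Finset (Finset P) :=
    {S ∈ E.powerset | #S ≤ s ∧ #S * (#F / (8 * Fintype.card P)) ≤ (#(X S) : ℝ)} with h𝒮
  obtain ⟨S, hS, hSmax⟩ := exists_max_image 𝒮 card ⟨∅, by simp [h𝒮]⟩
  obtain ⟨hSE, hSs, hSX⟩ : S ⊆ E ∧ #S ≤ s ∧ #S * (#F / (8 * Fintype.card P)) ≤ (#(X S) : ℝ) := by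
    simpa [h𝒮] using hS
  refine ⟨S, hSE, hSs, or_iff_not_imp_left.2 fun hsmall => ?_⟩
  rw [not_le] at hsmall
  have hXq : (#(X S) : ℝ) ≤ q * #F := by nlinarith [(#F).cast_nonneg (α := ℝ)]
  refine ⟨disjoint_left.2 fun x hxE hxD => ?_, hDF S hSs hXq, hD_card S hSs hXq⟩
  obtain ⟨hxS, X', hX', hX'_card⟩ := hD_ext S hSs hXq x hxD
  have hlt : #S < s := by
    refine lt_of_le_of_ne hSs fun h => hsmall.not_ge ?_
    rw [h, hs] at hSX
    exact le_trans (by field_simp; rfl) hSX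
  have hmem : insert x S ∈ 𝒮 := by
    have hmono : (#X' : ℝ) ≤ #(X (insert x S)) := mod_cast hXmax _ X' hX'
    rw [h𝒮, mem_filter, mem_powerset, card_insert_of_notMem hxS]
    refine ⟨insert_subset hxE hSE, hlt, ?_⟩
    push_cast
    linarith
  have := hSmax _ hmem
  rw [card_insert_of_notMem hxS] at this
  omega

end DecidableIndex

lemma exists_fingerprint_function [Fintype P] {α : ℝ} {s : ℕ} (hq : 0 < q) (hqα : q ≤ α)
    (hs : (s : ℝ) = q * Fintype.card P) : ∀ (L : Finset ι) (F : Finset Ω) (B : ℝ), 0 < B →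
      CodegreeBounded π q B L F → F.Nonempty → 2 ^ (#L + 1) ≤ c →
      4 * (8 * (c + 1)) ^ #L * (α * Fintype.card P) * B ≤ #F →
      ∃ R : (ι → Finset P) → ι → Finset P, ∀ E : ι → Finset P,
        (q / 8) ^ #L * #F ≤ (#{ω ∈ F | ∀ j ∈ L, π ω j ∈ E j} : ℝ) ∨
        ∃ S, IsFingerprint π s (α * Fintype.card P) F R E S ∧ ∀ j ∉ L, S j = ∅ := by
  classical
  intro L
  induction h : #L generalizing L with
  | zero =>
    intro F B _ _ _ _ _
    refine ⟨fun _ _ => ∅, fun E => Or.inl ?_⟩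
    simp [card_eq_zero.1 h]
  | succ r ih =>
    intro F B hB hF hF₀ hc hFB
    obtain ⟨j, hj⟩ : L.Nonempty := card_pos.1 (by omega)
    have hP : (0 : ℝ) < Fintype.card P := mod_cast Fintype.card_pos_iff.2 ⟨π hF₀.choose j⟩
    have hα : 0 < α := hq.trans_le hqα
    have hc₀ : 0 < c := lt_of_lt_of_le (by positivity) hc
    have hqF : 0 < q / 8 * #F := mul_pos (by positivity) (mod_cast hF₀.card_pos)
    have hαF : 4 * (α * Fintype.card P * B) ≤ (#F : ℝ) := by
      have hone : 1 ≤ (8 * (c + 1)) ^ (r + 1) := one_le_pow₀ (by linarith)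
      linarith [le_mul_of_one_le_left (by positivity : 0 ≤ 4 * (α * Fintype.card P * B)) hone]
    obtain ⟨X, D, hX, hXD⟩ := hF.exists_fingerprint hq hB hj (h ▸ hc) hF₀ hs
      (le_trans (by rw [hs]; gcongr) hαF)
    have hrec (S : Finset P) (hS : q / 8 * #F ≤ #(X S)) := ih (L.erase j)
      (by rw [card_erase_of_mem hj, h, Nat.add_sub_cancel]) (X S) ((c + 1) * q * B) (by positivity)
      (hX S).codegreeBounded (card_pos.1 (mod_cast hqF.trans_le hS))
      (le_trans (by gcongr <;> norm_num) hc)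
      (le_trans (by
        have := mul_le_mul_of_nonneg_left hFB (show 0 ≤ q / 8 by positivity)
        rw [pow_succ] at this
        linarith) hS)
    choose! R hR using hrec
    refine ⟨fun S => if q / 8 * #F ≤ #(X (S j)) then R (S j) (Function.update S j ∅)
      else Function.update (fun _ => ∅) j (D (S j)), fun E => ?_⟩
    obtain ⟨T, hTE, hTs, hT⟩ := hXD (E j)
    by_cases hbig : q / 8 * #F ≤ #(X T)
    · refine (hX T).many_or_exists_isFingerprint (R' := R T) hq.le hj hbig hTE hTs (hR T hbig E)
        fun S hS => ?_
      simp only [Function.update_self, if_pos hbig, Function.update_idem]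
      rw [Function.update_eq_self_iff.2 hS.symm]
    · obtain ⟨hdisj, hDF, hDcard⟩ := hT.resolve_left hbig
      refine Or.inr ⟨Function.update (fun _ => ∅) j T,
        isFingerprint_update_empty hTE hTs hdisj hDF ?_
          (by simp only [Function.update_self, if_neg hbig]), fun i hi => ?_⟩
      · refine le_of_mul_le_mul_left (a := 4 * B) ?_ (by positivity)
        linarith
      · exact Function.update_of_ne (ne_of_mem_of_not_mem hj hi).symm _ _

variable [Fintype Ω] [Fintype ι]

/-- The members of `Ω` all of whose projections lie in the prescribed sets `A j`. -/
def spanned (π : Ω → ι → P) (A : ι → Finset P) : Finset Ω := {ω | ∀ j, π ω j ∈ A j}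

lemma IsFingerprint.sum_card_sdiff_lt {s r : ℕ} {a : ℝ} {R : (ι → Finset P) → ι → Finset P}
    {A E S' : ι → Finset P} (hS : IsFingerprint π s a (spanned π A) R E S')
    (hA : ∑ j, (#(A j) : ℝ) < (r + 1 : ℕ) * a) : ∑ j, (#((A \ R S') j) : ℝ) < r * a := by
  classical
  obtain ⟨i, hi, ha⟩ := hS.exists_large
  have hiA : R S' i ⊆ A i := by
    refine hi.trans fun x hx => ?_
    obtain ⟨ω, hω, rfl⟩ := mem_image.1 hx
    exact (mem_filter.1 hω).2 i
  have hsdiff : (#((A \ R S') i) : ℝ) + a ≤ #(A i) := by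
    rw [← card_sdiff_add_card_eq_card hiA]
    push_cast
    gcongr
    rfl
  have hle : ∀ j ∈ univ.erase i, (#((A \ R S') j) : ℝ) ≤ #(A j) := fun j _ =>
    mod_cast card_le_card sdiff_subset
  rw [← sum_erase_add _ _ (mem_univ i)] at hA ⊢
  push_cast at hA
  linarith [sum_le_sum hle]

/-- The container theorem: a family `E` spanning few members of `Ω` lies in a family `C 𝒮` that
is determined by `r` fingerprints in `E` and spans fewer than `M` members of `Ω`. -/
theorem exists_containers [Fintype P] {α M : ℝ} {s : ℕ} (hq : 0 < q) (hqα : q ≤ α)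
    (hs : (s : ℝ) = q * Fintype.card P) (hB : 0 < B) (hM : 0 < M)
    (hdeg : CodegreeBounded π q B univ univ) (hc : 2 ^ (Fintype.card ι + 1) ≤ c)
    (hBM : 4 * (8 * (c + 1)) ^ Fintype.card ι * (α * Fintype.card P) * B ≤ M) (r : ℕ) :
    ∀ A : ι → Finset P, ∑ j, (#(A j) : ℝ) < r * (α * Fintype.card P) →
      ∃ C : (Fin r → ι → Finset P) → ι → Finset P, ∀ E ≤ A,
        (#(spanned π E) : ℝ) < (q / 8) ^ Fintype.card ι * M →
        ∃ 𝒮, (∀ t, 𝒮 t ≤ E) ∧ (∀ t j, #(𝒮 t j) ≤ s) ∧ E ≤ C 𝒮 ∧ (#(spanned π (C 𝒮)) : ℝ) < M := by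
  induction r with
  | zero =>
    intro A hA
    rw [Nat.cast_zero, zero_mul] at hA
    exact absurd hA (not_lt.2 (sum_nonneg fun _ _ => Nat.cast_nonneg _))
  | succ r ih =>
    intro A hA
    rcases lt_or_ge (#(spanned π A) : ℝ) M with hAM | hAM
    · exact ⟨fun _ => A, fun E hE _ => ⟨fun _ _ => ∅, fun _ _ => empty_subset _,
        fun _ _ => by rw [card_empty]; exact Nat.zero_le s, hE, hAM⟩⟩
    obtain ⟨R, hR⟩ := exists_fingerprint_function hq hqα hs univ (spanned π A) B hB
      (hdeg.subset hq.le (subset_univ _)) (card_pos.1 (mod_cast hM.trans_le hAM)) hc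
      (hBM.trans hAM)
    have hrec (S : ι → Finset P) := ih (A \ R S)
    choose! C hC using hrec
    refine ⟨fun 𝒮 => C (𝒮 0) (Fin.tail 𝒮), fun E hE hfew => ?_⟩
    rcases hR E with hmany | ⟨S, hS, -⟩
    · refine absurd hfew (not_lt.2 ?_)
      refine (mul_le_mul_of_nonneg_left hAM (by positivity)).trans (hmany.trans ?_)
      refine mod_cast card_le_card fun ω hω => ?_
      simp only [spanned, mem_filter, mem_univ, true_and, forall_const] at hω ⊢
      exact hω.2
    · obtain ⟨𝒮, h𝒮E, h𝒮s, hEC, hCM⟩ := hC S (hS.sum_card_sdiff_lt hA) E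
        (fun j => subset_sdiff.2 ⟨hE j, hS.disjoint j⟩) hfew
      refine ⟨Fin.cons S 𝒮, Fin.cases hS.subset h𝒮E, Fin.cases hS.card_le h𝒮s, ?_⟩
      exact ⟨hEC, hCM⟩

end Containers

section DenseCounting

variable {V : Type*} {H : SimpleGraph V} {G : SimpleGraph (V × Fin n)} {δ : ℝ → ℝ}
  {ε x y : ℝ}

open Classical in
/-- Between any two sufficiently large subsets of classes of `G` that correspond to an edge of `H`,
the density is at least `δ` of the smaller of their relative sizes. -/
def HereditarilyDense (ε : ℝ) (δ : ℝ → ℝ) (H : SimpleGraph V) (G : SimpleGraph (V × Fin n)) :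
    Prop :=
  ∀ i j, H.Adj i j → ∀ A B : Finset (Fin n), ε * n ≤ #A → ε * n ≤ #B →
    δ (min (#A : ℝ) #B / n) * (#A * #B) ≤ #{p ∈ A ×ˢ B | G.Adj (i, p.1) (j, p.2)}

open Classical in
lemma HereditarilyDense.card_low_degree_lt (hG : HereditarilyDense ε δ H G) (hn : 0 < n)
    (hmono : MonotoneOn δ (Set.Ioi 0)) (hy : 0 < y) (hεy : ε ≤ y) {i j : V} (hij : H.Adj i j)
    {A B : Finset (Fin n)} (hB : y * n ≤ #B) :
    (#{u ∈ A | (#{w ∈ B | G.Adj (i, u) (j, w)} : ℝ) < δ y * #B} : ℝ) < y * n := by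
  set D : Finset (Fin n) := {u ∈ A | (#{w ∈ B | G.Adj (i, u) (j, w)} : ℝ) < δ y * #B}
  by_contra! hD
  have hn' : (0 : ℝ) < n := mod_cast hn
  have hD₀ : D.Nonempty := card_pos.1 (mod_cast (mul_pos hy hn').trans_le hD)
  have hlower : δ y * (#D * #B) ≤ #{p ∈ D ×ˢ B | G.Adj (i, p.1) (j, p.2)} := by
    refine le_trans ?_ (hG i j hij D B (hD.trans' (by gcongr)) (hB.trans' (by gcongr)))
    have hyD : y ≤ min (#D : ℝ) #B / n := (le_div_iff₀ hn').2 (le_min hD hB)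
    exact mul_le_mul_of_nonneg_right (hmono hy (hy.trans_le hyD) hyD) (by positivity)
  have hupper : (#{p ∈ D ×ˢ B | G.Adj (i, p.1) (j, p.2)} : ℝ) < ∑ _u ∈ D, δ y * #B := by
    rw [card_filter, sum_product]
    simp only [← card_filter]
    push_cast
    exact sum_lt_sum_of_nonempty hD₀ fun u hu => (mem_filter.1 hu).2
  rw [sum_const, nsmul_eq_mul] at hupper
  linarith

open Classical in
lemma HereditarilyDense.exists_high_degree (hG : HereditarilyDense ε δ H G) (hn : 0 < n)
    (hmono : MonotoneOn δ (Set.Ioi 0)) (hy : 0 < y) (hεy : ε ≤ y) {v : V} {W : Finset V}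
    (hyx : y * #W ≤ x / 2) (hyx' : y ≤ x) {A : V → Finset (Fin n)} (hv : x * n ≤ #(A v))
    (hA : ∀ i ∈ W, x * n ≤ #(A i)) :
    ∃ U ⊆ A v, x / 2 * n ≤ #U ∧ ∀ u ∈ U, ∀ i ∈ W, H.Adj v i →
      δ y * #(A i) ≤ #{w ∈ A i | G.Adj (v, u) (i, w)} := by
  set U : Finset (Fin n) := {u ∈ A v | ∀ i ∈ W, H.Adj v i →
      δ y * #(A i) ≤ #{w ∈ A i | G.Adj (v, u) (i, w)}} with hU
  set D : V → Finset (Fin n) := fun i =>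
    {u ∈ A v | (#{w ∈ A i | G.Adj (v, u) (i, w)} : ℝ) < δ y * #(A i)} with hD
  have hcover : A v ⊆ U ∪ {i ∈ W | H.Adj v i}.biUnion D := by
    intro u hu
    simp only [hU, hD, mem_union, mem_filter, mem_biUnion, hu, true_and]
    by_contra! h
    obtain ⟨⟨i, hi, hvi, hlt⟩, h⟩ := h
    exact absurd (h i ⟨hi, hvi⟩) (not_le.2 hlt)
  have hsum : (#(({i ∈ W | H.Adj v i}).biUnion D) : ℝ) ≤ #W * (y * n) := by
    refine (Nat.cast_le.2 card_biUnion_le).trans ?_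
    rw [Nat.cast_sum]
    refine (sum_le_card_nsmul _ _ (y * n) fun i hi => ?_).trans ?_
    · rw [mem_filter] at hi
      exact (hG.card_low_degree_lt hn hmono hy hεy hi.2 ((hA i hi.1).trans' (by gcongr))).le
    · rw [nsmul_eq_mul]
      gcongr
      exact filter_subset _ _
  have hcard : (#(A v) : ℝ) ≤ #U + #(({i ∈ W | H.Adj v i}).biUnion D) :=
    mod_cast (card_le_card hcover).trans (card_union_le _ _)
  have := mul_le_mul_of_nonneg_right hyx (Nat.cast_nonneg (α := ℝ) n)
  exact ⟨U, filter_subset _ _, by linarith, fun u hu => (mem_filter.1 hu).2⟩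

open Classical in
/-- The canonical copies in `∏ A i` of the subgraph of `H` induced by `W`; the classes outside `W`
are unconstrained. -/
noncomputable def partialCopies [Fintype V] (H : SimpleGraph V) (G : SimpleGraph (V × Fin n))
    (W : Finset V) (A : V → Finset (Fin n)) : Finset (V → Fin n) :=
  {φ ∈ Fintype.piFinset A | ∀ i ∈ W, ∀ j ∈ W, H.Adj i j → G.Adj (i, φ i) (j, φ j)}

open Classical in
/-- The classes that remain for an extension of `v ↦ u` to the vertices in `W`. -/
noncomputable def link (H : SimpleGraph V) (G : SimpleGraph (V × Fin n)) (W : Finset V)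
    (A : V → Finset (Fin n)) (v : V) (u : Fin n) : V → Finset (Fin n) :=
  Function.update (fun i => {w ∈ A i | i ∈ W → H.Adj v i → G.Adj (v, u) (i, w)}) v {u}

open Classical in
lemma partialCopies_link_subset [Fintype V] {A : V → Finset (Fin n)} {v : V} {u : Fin n}
    (hu : u ∈ A v) (W : Finset V) : partialCopies H G W (link H G W A v u) ⊆
      {φ ∈ partialCopies H G (insert v W) A | φ v = u} := by
  intro φ hφ
  simp only [partialCopies, link, mem_filter, Fintype.mem_piFinset] at hφ ⊢
  obtain ⟨hφA, hφW⟩ := hφ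
  rw [Function.forall_update_iff _ (fun i T => φ i ∈ T), mem_singleton] at hφA
  obtain ⟨rfl, hφA⟩ := hφA
  simp only [mem_filter] at hφA
  have hadj {i : V} (hi : i ∈ W) (h : H.Adj v i) : G.Adj (v, φ v) (i, φ i) := (hφA i h.ne').2 hi h
  refine ⟨⟨fun i => ?_, ?_⟩, rfl⟩
  · obtain rfl | hi := eq_or_ne i v
    exacts [hu, (hφA i hi).1]
  · simp only [forall_mem_insert]
    exact ⟨⟨fun h => absurd h H.irrefl, fun j hj h => hadj hj h⟩,
      fun i hi => ⟨fun h => (hadj hi h.symm).symm, fun j hj h => hφW i hi j hj h⟩⟩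

open Classical in
lemma partialCopies_empty [Fintype V] (A : V → Finset (Fin n)) :
    partialCopies H G ∅ A = Fintype.piFinset A := by
  simp only [partialCopies, notMem_empty, IsEmpty.forall_iff, implies_true, filter_true]

open Classical in
lemma le_card_link {W : Finset V} {A : V → Finset (Fin n)} {v : V} {u : Fin n} (hv : v ∉ W)
    (hδ : 0 ≤ δ y) (hδ' : δ y ≤ 1) (hA : ∀ i ∈ W, x * n ≤ #(A i))
    (hu : ∀ i ∈ W, H.Adj v i → δ y * #(A i) ≤ #{w ∈ A i | G.Adj (v, u) (i, w)}) {i : V}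
    (hi : i ∈ W) : δ y * x * n ≤ #(link H G W A v u i) := by
  rw [link, Function.update_of_ne (ne_of_mem_of_not_mem hi hv), mul_assoc]
  refine (mul_le_mul_of_nonneg_left (hA i hi) hδ).trans ?_
  by_cases hvi : H.Adj v i
  · simpa only [hi, hvi, forall_const] using hu i hi hvi
  · simp only [hvi, IsEmpty.forall_iff, implies_true, filter_true]
    exact mul_le_of_le_one_left (Nat.cast_nonneg _) hδ'

lemma link_nonempty {W : Finset V} {A : V → Finset (Fin n)} (hA : ∀ i, (A i).Nonempty) {v : V}
    {u : Fin n} (hW : ∀ i ∈ W, (link H G W A v u i).Nonempty) (i : V) :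
    (link H G W A v u i).Nonempty := by
  classical
  by_cases hi : i ∈ W
  · exact hW i hi
  · rw [link, Function.update_apply]
    split_ifs
    · exact singleton_nonempty u
    · simpa only [hi, IsEmpty.forall_iff, filter_true] using hA i

/-- Counting lemma for dense graphs whose density is only bounded below hereditarily. The vertices
in `W` are embedded one by one; the classes shrink by a constant factor at each step. -/
theorem exists_le_card_partialCopies [Fintype V] (H : SimpleGraph V) (hδ : ∀ x, 0 < x → 0 < δ x)
    (hδ' : ∀ x, δ x ≤ 1) (hmono : MonotoneOn δ (Set.Ioi 0)) (W : Finset V) :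
    ∀ x : ℝ, 0 < x → ∃ ε κ : ℝ, 0 < ε ∧ 0 < κ ∧ ∀ n : ℕ, 0 < n → ∀ G : SimpleGraph (V × Fin n),
      HereditarilyDense ε δ H G → ∀ A : V → Finset (Fin n), (∀ i ∈ W, x * n ≤ #(A i)) →
        (∀ i, (A i).Nonempty) → κ * n ^ #W ≤ #(partialCopies H G W A) := by
  classical
  induction W using Finset.induction with
  | empty =>
    refine fun x _ => ⟨1, 1, one_pos, one_pos, fun n _ G _ A _ hA => ?_⟩
    rw [card_empty, pow_zero, mul_one, partialCopies_empty, Nat.one_le_cast, Nat.one_le_iff_ne_zero]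
    exact (card_pos.2 (Fintype.piFinset_nonempty.2 hA)).ne'
  | insert v W hv ih =>
    intro x hx
    obtain ⟨y, hy, hyx, hyx'⟩ : ∃ y : ℝ, 0 < y ∧ y * #W ≤ x / 2 ∧ y ≤ x := by
      refine ⟨x / (2 * (#W + 1)), by positivity, ?_, ?_⟩
      · rw [div_mul_eq_mul_div, div_le_div_iff₀ (by positivity) two_pos]
        linarith
      · exact div_le_self hx.le (by linarith [(#W).cast_nonneg (α := ℝ)])
    obtain ⟨ε, κ, hε, hκ, hcount⟩ := ih (δ y * x) (mul_pos (hδ y hy) hx)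
    refine ⟨min ε y, x / 2 * κ, lt_min hε hy, by positivity, fun n hn G hG A hAW hA => ?_⟩
    have hn' : (0 : ℝ) < n := mod_cast hn
    rw [forall_mem_insert] at hAW
    obtain ⟨U, hUA, hU, hdeg⟩ :=
      hG.exists_high_degree hn hmono hy (min_le_right ε y) hyx hyx' hAW.1 hAW.2
    have hG' : HereditarilyDense ε δ H G := fun i j hij A B hA hB =>
      hG i j hij A B (hA.trans' (by gcongr; exact min_le_left ε y))
        (hB.trans' (by gcongr; exact min_le_left ε y))
    have hfiber : ∀ u ∈ U, κ * n ^ #W ≤ #{φ ∈ partialCopies H G (insert v W) A | φ v = u} := by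
      intro u hu
      have hlink := fun i hi => le_card_link hv (hδ y hy).le (hδ' y) hAW.2 (hdeg u hu) (i := i) hi
      have hne := link_nonempty hA fun i hi => card_pos.1
        (mod_cast (show 0 < δ y * x * n by have := hδ y hy; positivity).trans_le (hlink i hi))
      exact (hcount n hn G hG' _ hlink hne).trans
        (mod_cast card_le_card (partialCopies_link_subset (hUA hu) W))
    calc x / 2 * κ * n ^ #(insert v W) = x / 2 * n * (κ * n ^ #W) := by
          rw [card_insert_of_notMem hv]; ring
      _ ≤ #U * (κ * n ^ #W) := by gcongr
      _ ≤ ∑ u ∈ U, (#{φ ∈ partialCopies H G (insert v W) A | φ v = u} : ℝ) := by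
          rw [← nsmul_eq_mul]
          exact card_nsmul_le_sum _ _ _ hfiber
      _ ≤ _ := mod_cast sum_card_fiber_le _ _ _

end DenseCounting

section RandomSubsets

variable {α : Type*} [Fintype α] [DecidableEq α] {m l j : ℕ} {T Q D E : Finset α} {ρ : ℝ}

/-- The `m`-element sets containing `T`; counting them conditions a random `m`-set on containing
`T`. -/
def supersets (m : ℕ) (T : Finset α) : Finset (Finset α) := {E ∈ powersetCard m univ | T ⊆ E}

lemma mem_supersets : E ∈ supersets m T ↔ #E = m ∧ T ⊆ E := by
  rw [supersets, mem_filter, mem_powersetCard_univ]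

lemma card_supersets (h : #T ≤ m) :
    #(supersets m T) = (Fintype.card α - #T).choose (m - #T) := by
  rw [← card_compl, ← card_powersetCard]
  refine card_nbij' (· \ T) (· ∪ T) (fun E hE => ?_) (fun E hE => ?_) (fun E hE => ?_)
    fun E hE => ?_
  · rw [mem_coe, mem_supersets] at hE
    rw [mem_coe, mem_powersetCard, card_sdiff_of_subset hE.2, hE.1]
    exact ⟨fun x hx => mem_compl.2 (mem_sdiff.1 hx).2, rfl⟩
  · rw [mem_coe, mem_powersetCard] at hE
    rw [mem_coe, mem_supersets, card_union_of_disjoint (subset_compl_iff_disjoint_right.1 hE.1)]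
    exact ⟨by omega, subset_union_right⟩
  · exact sdiff_union_of_subset (mem_supersets.1 hE).2
  · exact union_sdiff_cancel_right (subset_compl_iff_disjoint_right.1 (mem_powersetCard.1 hE).1)

lemma card_supersets_insert_le (hm : m ≤ Fintype.card α) {a : α} (ha : a ∉ T) :
    #(supersets m (insert a T)) * Fintype.card α ≤ m * #(supersets m T) := by
  have hcard := card_insert_of_notMem ha
  rcases lt_or_ge m (#T + 1) with h | h
  · have hempty : supersets m (insert a T) = ∅ := eq_empty_of_forall_notMem fun E hE => by
      have := card_le_card (mem_supersets.1 hE).2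
      have := (mem_supersets.1 hE).1
      omega
    rw [hempty, card_empty, zero_mul]
    exact Nat.zero_le _
  · obtain ⟨b, rfl⟩ := Nat.exists_eq_add_of_le h
    obtain ⟨d, hd⟩ := Nat.exists_eq_add_of_le hm
    rw [card_supersets (by omega), card_supersets (by omega), hcard, hd,
      show #T + 1 + b + d - (#T + 1) = b + d by omega, show #T + 1 + b - (#T + 1) = b by omega,
      show #T + 1 + b + d - #T = b + d + 1 by omega, show #T + 1 + b - #T = b + 1 by omega]
    have hpascal : (b + d).choose b ≤ (b + d + 1).choose (b + 1) :=
      Nat.choose_succ_succ (b + d) b ▸ Nat.le_add_right _ _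
    nlinarith [Nat.add_one_mul_choose_eq (b + d) b]

lemma card_supersets_union_le (hm : m ≤ Fintype.card α) {Y : Finset α} (hTY : Disjoint T Y) :
    #(supersets m (T ∪ Y)) * Fintype.card α ^ #Y ≤ m ^ #Y * #(supersets m T) := by
  induction Y using Finset.induction with
  | empty => simp only [union_empty, card_empty, pow_zero, mul_one, one_mul, le_refl]
  | insert y Y hy ih =>
    rw [disjoint_insert_right] at hTY
    have hyTY : y ∉ T ∪ Y := fun h => (mem_union.1 h).elim hTY.1 hy
    rw [union_insert, card_insert_of_notMem hy, pow_succ', pow_succ', ← mul_assoc]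
    calc #(supersets m (insert y (T ∪ Y))) * Fintype.card α * Fintype.card α ^ #Y
        ≤ m * #(supersets m (T ∪ Y)) * Fintype.card α ^ #Y :=
          Nat.mul_le_mul_right _ (card_supersets_insert_le hm hyTY)
      _ = m * (#(supersets m (T ∪ Y)) * Fintype.card α ^ #Y) := mul_assoc _ _ _
      _ ≤ m * (m ^ #Y * #(supersets m T)) := Nat.mul_le_mul_left _ (ih hTY.2)
      _ = m * m ^ #Y * #(supersets m T) := (mul_assoc _ _ _).symm

lemma card_le_card_inter_mul_choose_le (hm : m ≤ Fintype.card α) (hTQ : Disjoint T Q) (l j : ℕ) :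
    #{E ∈ supersets m T | l ≤ #(E ∩ Q)} * l.choose j * Fintype.card α ^ j ≤
      (#Q).choose j * (m ^ j * #(supersets m T)) := by
  set 𝓔 := {E ∈ supersets m T | l ≤ #(E ∩ Q)} with h𝓔
  have hcount : ∀ E ∈ 𝓔, l.choose j ≤ #{Y ∈ powersetCard j Q | Y ⊆ E} := by
    intro E hE
    have heq : {Y ∈ powersetCard j Q | Y ⊆ E} = powersetCard j (E ∩ Q) := by
      ext Y
      simp only [mem_filter, mem_powersetCard, subset_inter_iff]
      tauto
    rw [heq, card_powersetCard]
    exact Nat.choose_le_choose j (mem_filter.1 hE).2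
  have hdouble := sum_card_bipartiteAbove_eq_sum_card_bipartiteBelow
    (s := 𝓔) (t := powersetCard j Q) fun E Y => Y ⊆ E
  calc #𝓔 * l.choose j * Fintype.card α ^ j
      ≤ (∑ Y ∈ powersetCard j Q, #{E ∈ 𝓔 | Y ⊆ E}) * Fintype.card α ^ j := by
        gcongr
        exact (card_nsmul_le_sum _ _ _ hcount).trans_eq hdouble
    _ ≤ ∑ Y ∈ powersetCard j Q, #(supersets m (T ∪ Y)) * Fintype.card α ^ j := by
        rw [sum_mul]
        gcongr
        refine fun E hE => ?_
        simp only [h𝓔, mem_filter, mem_supersets] at hE ⊢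
        exact ⟨hE.1.1.1, union_subset hE.1.1.2 hE.2⟩
    _ ≤ ∑ _Y ∈ powersetCard j Q, m ^ j * #(supersets m T) := by
        refine sum_le_sum fun Y hY => ?_
        rw [mem_powersetCard] at hY
        exact hY.2 ▸ card_supersets_union_le hm (hTQ.mono_right hY.1)
    _ = (#Q).choose j * (m ^ j * #(supersets m T)) := by
        rw [sum_const, card_powersetCard, smul_eq_mul]

lemma choose_mul_pow_le (q l j : ℕ) : q.choose j * (l + 1 - j) ^ j ≤ q ^ j * l.choose j := by
  refine Nat.le_of_mul_le_mul_left ?_ j.factorial_pos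
  calc j.factorial * (q.choose j * (l + 1 - j) ^ j)
      = q.descFactorial j * (l + 1 - j) ^ j := by
        rw [Nat.descFactorial_eq_factorial_mul_choose, mul_assoc]
    _ ≤ q ^ j * l.descFactorial j := by
        gcongr
        exacts [Nat.descFactorial_le_pow q j, Nat.pow_sub_le_descFactorial l j]
    _ = j.factorial * (q ^ j * l.choose j) := by
        rw [Nat.descFactorial_eq_factorial_mul_choose]
        ring

/-- Upper tail of a hypergeometric variable, by counting the `j`-element subsets of `E ∩ Q`. -/
lemma card_le_card_inter_le (hm : m ≤ Fintype.card α) (hα : 0 < Fintype.card α)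
    (hTQ : Disjoint T Q) (hjl : j ≤ l)
    (hρ : (#Q * m : ℝ) ≤ ρ * ((l + 1 - j) * Fintype.card α)) :
    (#{E ∈ supersets m T | l ≤ #(E ∩ Q)} : ℝ) ≤ ρ ^ j * #(supersets m T) := by
  have hcast : ((l + 1 - j : ℕ) : ℝ) = l + 1 - j := by
    rw [Nat.cast_sub (by omega), Nat.cast_add_one]
  have hα' : (0 : ℝ) < Fintype.card α := mod_cast hα
  have hl : (0 : ℝ) < l + 1 - j := hcast ▸ (mod_cast (by omega : 0 < l + 1 - j))
  have hchoose : (0 : ℝ) < l.choose j := mod_cast Nat.choose_pos hjl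
  have hcount : (#{E ∈ supersets m T | l ≤ #(E ∩ Q)} * l.choose j * Fintype.card α ^ j : ℝ) ≤
      (#Q).choose j * (m ^ j * #(supersets m T)) :=
    mod_cast card_le_card_inter_mul_choose_le hm hTQ l j
  have hratio : ((#Q).choose j * (l + 1 - j) ^ j : ℝ) ≤ #Q ^ j * l.choose j :=
    hcast ▸ (mod_cast choose_mul_pow_le #Q l j)
  generalize (l + 1 - j : ℝ) = d at *
  refine le_of_mul_le_mul_right ?_ (mul_pos hchoose (pow_pos (mul_pos hl hα') j))
  calc (#{E ∈ supersets m T | l ≤ #(E ∩ Q)} : ℝ) * (l.choose j * (d * Fintype.card α) ^ j)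
      = (#{E ∈ supersets m T | l ≤ #(E ∩ Q)} * l.choose j * Fintype.card α ^ j) * d ^ j := by ring
    _ ≤ (#Q).choose j * (m ^ j * #(supersets m T)) * d ^ j := by gcongr
    _ = (#Q).choose j * d ^ j * (m ^ j * #(supersets m T)) := by ring
    _ ≤ #Q ^ j * l.choose j * (m ^ j * #(supersets m T)) := by gcongr
    _ = (#Q * m) ^ j * (l.choose j * #(supersets m T)) := by ring
    _ ≤ (ρ * (d * Fintype.card α)) ^ j * (l.choose j * #(supersets m T)) :=
        mul_le_mul_of_nonneg_right (pow_le_pow_left₀ (by positivity) hρ j) (by positivity)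
    _ = ρ ^ j * #(supersets m T) * (l.choose j * (d * Fintype.card α) ^ j) := by ring

lemma filter_card_inter_lt_subset (D : Finset α) (m : ℕ) (x : ℝ) :
    {E ∈ powersetCard m (univ : Finset α) | (#(E ∩ D) : ℝ) < x} ⊆
      {E ∈ supersets m (∅ : Finset α) | ⌈m - x⌉₊ ≤ #(E ∩ Dᶜ)} := by
  intro E hE
  rw [mem_filter, mem_powersetCard_univ] at hE
  refine mem_filter.2 ⟨mem_supersets.2 ⟨hE.1, empty_subset E⟩, Nat.ceil_le.2 ?_⟩
  have hsplit : (#(E ∩ D) + #(E ∩ Dᶜ) : ℝ) = m := by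
    rw [← sdiff_eq_inter_compl]
    exact mod_cast hE.1 ▸ card_inter_add_card_sdiff E D
  linarith

lemma card_card_inter_lt_le {lam θ : ℝ} (hlam : 0 ≤ lam) (hlam' : lam ≤ 1)
    (hm : m ≤ Fintype.card α) (hα : 0 < Fintype.card α) (hD : (#D : ℝ) = θ * Fintype.card α) :
    (#{E ∈ powersetCard m univ | (#(E ∩ D) : ℝ) < lam * θ * m} : ℝ) ≤
      Real.exp (-((1 - lam) / 2 * θ) ^ 2 * m) * (Fintype.card α).choose m := by
  have hα' : (0 : ℝ) < Fintype.card α := mod_cast hα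
  have hθ : 0 ≤ θ := nonneg_of_mul_nonneg_left (hD ▸ Nat.cast_nonneg _) hα'
  have hθ' : θ ≤ 1 := by
    have : (#D : ℝ) ≤ Fintype.card α := mod_cast card_le_univ D
    exact (mul_le_iff_le_one_left hα').1 (hD ▸ this)
  set κ := (1 - lam) / 2 with hκ
  have hκ₀ : 0 ≤ κ := by linarith
  set j := ⌈κ * θ * m⌉₊
  set l := ⌈m - lam * θ * m⌉₊
  have hjl : j ≤ l := by
    refine Nat.ceil_mono ?_
    rw [← one_sub_mul]
    exact mul_le_mul_of_nonneg_right (by nlinarith) (Nat.cast_nonneg m)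
  have hρ : (#Dᶜ * m : ℝ) ≤ (1 - κ * θ) * ((l + 1 - j) * Fintype.card α) := by
    have hj := Nat.ceil_lt_add_one (show 0 ≤ κ * θ * m by positivity)
    have hl := Nat.le_ceil (m - lam * θ * m)
    have hκθ : 0 ≤ 1 - κ * θ := by nlinarith
    rw [card_compl, Nat.cast_sub (card_le_univ D), hD]
    calc (Fintype.card α - θ * Fintype.card α) * m
        ≤ (1 - κ * θ) * ((m - lam * θ * m - κ * θ * m) * Fintype.card α) := by
          have : 0 ≤ κ * (lam + κ) * θ ^ 2 * (m * Fintype.card α) := by positivity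
          rw [hκ] at this ⊢
          linarith
      _ ≤ (1 - κ * θ) * ((l + 1 - j) * Fintype.card α) := mul_le_mul_of_nonneg_left
          (mul_le_mul_of_nonneg_right (by linarith) hα'.le) hκθ
  have htail := card_le_card_inter_le hm hα (disjoint_empty_left Dᶜ) hjl hρ
  calc (#{E ∈ powersetCard m univ | (#(E ∩ D) : ℝ) < lam * θ * m} : ℝ)
      ≤ (1 - κ * θ) ^ j * #(supersets m (∅ : Finset α)) :=
        (Nat.cast_le.2 (card_le_card (filter_card_inter_lt_subset D m _))).trans htail
    _ = (1 - κ * θ) ^ j * (Fintype.card α).choose m := by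
        rw [card_supersets (card_empty ▸ Nat.zero_le m), card_empty, Nat.sub_zero, Nat.sub_zero]
    _ ≤ Real.exp (-(κ * θ)) ^ j * (Fintype.card α).choose m := by
        gcongr
        · nlinarith
        · exact Real.one_sub_le_exp_neg _
    _ ≤ Real.exp (-(κ * θ) ^ 2 * m) * (Fintype.card α).choose m := by
        rw [← Real.exp_nat_mul]
        refine mul_le_mul_of_nonneg_right (Real.exp_le_exp.2 ?_) (Nat.cast_nonneg _)
        have := mul_le_mul_of_nonneg_left (Nat.le_ceil (κ * θ * m)) (mul_nonneg hκ₀ hθ)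
        linarith

end RandomSubsets

lemma card_small_subsets_mul_pow_le {α : Type*} {s : ℕ} {y : ℝ} (hy : 0 ≤ y) (hy' : y ≤ 1)
    (E : Finset α) :
    (#{S ∈ E.powerset | #S ≤ s} : ℝ) * y ^ s ≤ (1 + y) ^ #E := by
  calc (#{S ∈ E.powerset | #S ≤ s} : ℝ) * y ^ s ≤ ∑ S ∈ E.powerset with #S ≤ s, y ^ #S := by
        rw [← nsmul_eq_mul]
        refine card_nsmul_le_sum _ _ _ fun S hS => ?_
        exact pow_le_pow_of_le_one hy hy' (mem_filter.1 hS).2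
    _ ≤ ∑ S ∈ E.powerset, y ^ #S :=
        sum_le_sum_of_subset_of_nonneg (filter_subset _ _) fun _ _ _ => by positivity
    _ = (1 + y) ^ #E := by
        rw [add_comm, ← sum_pow_mul_eq_add_pow y 1 E]
        simp only [one_pow, mul_one]

section LowerRegular

variable {ε lam : ℝ} {m : ℕ}

/-- `(ε, lam)`-lower-regularity of the bipartite graph with edge set `E` between two classes of
size `n`, with the denominators of the densities cleared. -/
def IsLowerRegular (ε lam : ℝ) (E : Finset (Fin n × Fin n)) : Prop :=
  ∀ A B : Finset (Fin n), ε * n ≤ #A → ε * n ≤ #B →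
    lam * #E * (#A * #B) ≤ #(E ∩ A ×ˢ B) * (n : ℝ) ^ 2

lemma card_fin_prod_fin : Fintype.card (Fin n × Fin n) = n ^ 2 := by
  rw [Fintype.card_prod, Fintype.card_fin, sq]

lemma card_card_inter_product_lt_le (hε : 0 ≤ ε) (hlam : 0 ≤ lam) (hlam' : lam ≤ 1) (hn : 0 < n)
    (hm : m ≤ n ^ 2) {A B : Finset (Fin n)} (hA : ε * n ≤ #A) (hB : ε * n ≤ #B) :
    (#{E ∈ powersetCard m univ | (#(E ∩ A ×ˢ B) : ℝ) * (n : ℝ) ^ 2 < lam * #E * (#A * #B)} : ℝ) ≤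
      Real.exp (-((1 - lam) / 2 * ε ^ 2) ^ 2 * m) * (n ^ 2).choose m := by
  have hn' : (0 : ℝ) < n := mod_cast hn
  set θ : ℝ := #A * #B / n ^ 2 with hθ
  have hεθ : ε ^ 2 ≤ θ := by
    rw [le_div_iff₀ (by positivity)]
    calc ε ^ 2 * n ^ 2 = ε * n * (ε * n) := by ring
      _ ≤ #A * #B := by gcongr
  have htail := card_card_inter_lt_le (D := A ×ˢ B) (θ := θ) hlam hlam'
    (card_fin_prod_fin ▸ hm) (card_fin_prod_fin ▸ pow_pos hn 2) (by
      rw [card_fin_prod_fin, card_product, hθ]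
      push_cast
      field_simp)
  rw [card_fin_prod_fin] at htail
  calc (#{E ∈ powersetCard m univ | (#(E ∩ A ×ˢ B) : ℝ) * (n : ℝ) ^ 2 < lam * #E * (#A * #B)} : ℝ)
      = #{E ∈ powersetCard m univ | (#(E ∩ A ×ˢ B) : ℝ) < lam * θ * m} := by
        congr 2
        refine filter_congr fun E hE => ?_
        rw [(mem_powersetCard.1 hE).2, ← lt_div_iff₀ (by positivity), hθ,
          show lam * m * (#A * #B : ℝ) / n ^ 2 = lam * (#A * #B / n ^ 2) * m by ring]
    _ ≤ Real.exp (-((1 - lam) / 2 * θ) ^ 2 * m) * (n ^ 2).choose m := htail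
    _ ≤ _ := by
        have : 0 ≤ (1 - lam) / 2 := by linarith
        gcongr

open Classical in
lemma card_not_isLowerRegular_le (hε : 0 ≤ ε) (hlam : 0 ≤ lam) (hlam' : lam ≤ 1) (hn : 0 < n)
    (hm : m ≤ n ^ 2) :
    (#{E ∈ powersetCard m (univ : Finset (Fin n × Fin n)) | ¬ IsLowerRegular ε lam E} : ℝ) ≤
      4 ^ n * (Real.exp (-((1 - lam) / 2 * ε ^ 2) ^ 2 * m) * (n ^ 2).choose m) := by
  set 𝒬 : Finset (Finset (Fin n) × Finset (Fin n)) := {p | ε * n ≤ #p.1 ∧ ε * n ≤ #p.2}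
  have hcover : {E ∈ powersetCard m (univ : Finset (Fin n × Fin n)) | ¬ IsLowerRegular ε lam E} ⊆
      𝒬.biUnion fun p => {E ∈ powersetCard m univ |
        (#(E ∩ p.1 ×ˢ p.2) : ℝ) * (n : ℝ) ^ 2 < lam * #E * (#p.1 * #p.2)} := by
    intro E hE
    obtain ⟨hEm, hE⟩ := mem_filter.1 hE
    unfold IsLowerRegular at hE
    push Not at hE
    obtain ⟨A, B, hA, hB, hAB⟩ := hE
    exact mem_biUnion.2 ⟨(A, B), mem_filter.2 ⟨mem_univ _, hA, hB⟩, mem_filter.2 ⟨hEm, hAB⟩⟩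
  have hcard : #𝒬 ≤ 4 ^ n := by
    refine (card_le_univ _).trans_eq ?_
    rw [Fintype.card_prod, Fintype.card_finset, Fintype.card_fin, ← mul_pow]
    norm_num only
  calc _ ≤ ∑ p ∈ 𝒬, (#{E ∈ powersetCard m univ |
          (#(E ∩ p.1 ×ˢ p.2) : ℝ) * (n : ℝ) ^ 2 < lam * #E * (#p.1 * #p.2)} : ℝ) :=
        (Nat.cast_le.2 ((card_le_card hcover).trans card_biUnion_le)).trans_eq (Nat.cast_sum _ _)
    _ ≤ #𝒬 * (Real.exp (-((1 - lam) / 2 * ε ^ 2) ^ 2 * m) * (n ^ 2).choose m) := by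
        rw [← nsmul_eq_mul]
        refine sum_le_card_nsmul _ _ _ fun p hp => ?_
        obtain ⟨-, hp₁, hp₂⟩ := mem_filter.1 hp
        exact card_card_inter_product_lt_le hε hlam hlam' hn hm hp₁ hp₂
    _ ≤ 4 ^ n * (Real.exp (-((1 - lam) / 2 * ε ^ 2) ^ 2 * m) * (n ^ 2).choose m) := by
        gcongr
        exact mod_cast hcard

lemma four_pow_mul_exp_neg_le (hn : 0 < n) : 4 ^ n * Real.exp (-(4 * n)) ≤ 1 / 2 := by
  have hexp : 4 * Real.exp (-4) ≤ 1 / 2 := by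
    have := Real.quadratic_le_exp_of_nonneg (x := 4) (by norm_num)
    rw [Real.exp_neg, ← div_eq_mul_inv, div_le_div_iff₀ (Real.exp_pos 4) two_pos]
    linarith
  calc 4 ^ n * Real.exp (-(4 * n)) = (4 * Real.exp (-4)) ^ n := by
        rw [mul_pow, ← Real.exp_nat_mul]
        ring_nf
    _ ≤ 4 * Real.exp (-4) := pow_le_of_le_one (by positivity) (by linarith) hn.ne'
    _ ≤ 1 / 2 := hexp

open Classical in
lemma choose_le_two_mul_card_isLowerRegular (hε : 0 ≤ ε) (hlam : 0 ≤ lam) (hlam' : lam ≤ 1)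
    (hn : 0 < n) (hm : m ≤ n ^ 2) (hmn : 4 * (n : ℝ) ≤ ((1 - lam) / 2 * ε ^ 2) ^ 2 * m) :
    ((n ^ 2).choose m : ℝ) ≤
      2 * #{E ∈ powersetCard m (univ : Finset (Fin n × Fin n)) | IsLowerRegular ε lam E} := by
  have hsplit : (#{E ∈ powersetCard m (univ : Finset (Fin n × Fin n)) | IsLowerRegular ε lam E} +
      #{E ∈ powersetCard m (univ : Finset (Fin n × Fin n)) | ¬ IsLowerRegular ε lam E} : ℝ) =
        (n ^ 2).choose m := by
    rw [← card_fin_prod_fin, ← card_univ, ← card_powersetCard]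
    exact mod_cast card_filter_add_card_filter_not _
  have hfew : (#{E ∈ powersetCard m (univ : Finset (Fin n × Fin n)) | ¬ IsLowerRegular ε lam E} : ℝ)
      ≤ 1 / 2 * (n ^ 2).choose m :=
    calc _ ≤ 4 ^ n * (Real.exp (-((1 - lam) / 2 * ε ^ 2) ^ 2 * m) * (n ^ 2).choose m) :=
          card_not_isLowerRegular_le hε hlam hlam' hn hm
      _ ≤ 4 ^ n * (Real.exp (-(4 * n)) * (n ^ 2).choose m) := by
          gcongr
          linarith
      _ = 4 ^ n * Real.exp (-(4 * n)) * (n ^ 2).choose m := (mul_assoc _ _ _).symm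
      _ ≤ 1 / 2 * (n ^ 2).choose m := by
          gcongr
          exact four_pow_mul_exp_neg_le hn
  linarith

end LowerRegular

section UnionBound

lemma card_biUnion_le_mul {σ τ : Type*} [DecidableEq τ] {𝓢 : Finset σ} {𝓔 : Finset τ}
    {X Y : σ → Finset τ} {b M : ℝ} (hb : 0 ≤ b) (hX : ∀ S ∈ 𝓢, X S ⊆ 𝓔)
    (hY : ∀ S ∈ 𝓢, (#(Y S) : ℝ) ≤ b * #(X S)) (hM : ∀ E ∈ 𝓔, (#{S ∈ 𝓢 | E ∈ X S} : ℝ) ≤ M) :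
    (#(𝓢.biUnion Y) : ℝ) ≤ b * (#𝓔 * M) := by
  have hdouble : ∑ S ∈ 𝓢, (#(X S) : ℝ) = ∑ E ∈ 𝓔, (#{S ∈ 𝓢 | E ∈ X S} : ℝ) := by
    rw [← Nat.cast_sum, ← Nat.cast_sum, Nat.cast_inj]
    refine (sum_congr rfl fun S hS => ?_).trans
      (sum_card_bipartiteAbove_eq_sum_card_bipartiteBelow fun S E => E ∈ X S)
    rw [bipartiteAbove, filter_mem_eq_inter, inter_eq_right.2 (hX S hS)]
  calc (#(𝓢.biUnion Y) : ℝ) ≤ ∑ S ∈ 𝓢, (#(Y S) : ℝ) := mod_cast card_biUnion_le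
    _ ≤ b * ∑ E ∈ 𝓔, (#{S ∈ 𝓢 | E ∈ X S} : ℝ) := by
        rw [← hdouble, mul_sum]
        exact sum_le_sum hY
    _ ≤ b * (#𝓔 * M) := by
        rw [← nsmul_eq_mul]
        exact mul_le_mul_of_nonneg_left (sum_le_card_nsmul _ _ _ hM) hb

variable {α ι : Type*} [Fintype ι] [DecidableEq ι]

lemma card_filter_piFinset_apply_le {β : Type*} {X : ι → Finset β} {j : ι}
    {p : β → Prop} [DecidablePred p] {ρ : ℝ} (h : (#{x ∈ X j | p x} : ℝ) ≤ ρ * #(X j)) :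
    (#{f ∈ Fintype.piFinset X | p (f j)} : ℝ) ≤ ρ * #(Fintype.piFinset X) := by
  have hfilter : {f ∈ Fintype.piFinset X | p (f j)} =
      Fintype.piFinset (Function.update X j {x ∈ X j | p x}) := by
    ext f
    simp only [mem_filter, Fintype.mem_piFinset]
    rw [Function.forall_update_iff X fun i S => f i ∈ S, mem_filter]
    exact ⟨fun h => ⟨⟨h.1 j, h.2⟩, fun i _ => h.1 i⟩, fun h => ⟨fun i => by
      by_cases hi : i = j
      exacts [hi ▸ h.1.1, h.2 i hi], h.1.2⟩⟩
  have hprod : ∏ i, #(Function.update X j {x ∈ X j | p x} i) =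
      #{x ∈ X j | p x} * ∏ i ∈ univ.erase j, #(X i) := by
    rw [← mul_prod_erase univ _ (mem_univ j), Function.update_self]
    congr 1
    exact prod_congr rfl fun i hi => by rw [Function.update_of_ne (ne_of_mem_erase hi)]
  rw [hfilter, Fintype.card_piFinset, Fintype.card_piFinset, hprod,
    ← mul_prod_erase univ _ (mem_univ j), Nat.cast_mul, Nat.cast_mul, ← mul_assoc]
  exact mul_le_mul_of_nonneg_right h (Nat.cast_nonneg _)

variable [Fintype α] {m s r : ℕ} {E : ι → Finset α}

/-- The `ι`-tuples of `m`-element sets. -/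
def uniformTuples (ι α : Type*) [Fintype ι] [DecidableEq ι] [Fintype α] (m : ℕ) :
    Finset (ι → Finset α) :=
  Fintype.piFinset fun _ => powersetCard m univ

lemma mem_uniformTuples : E ∈ uniformTuples ι α m ↔ ∀ j, #(E j) = m := by
  simp only [uniformTuples, Fintype.mem_piFinset, mem_powersetCard_univ]

lemma card_uniformTuples :
    #(uniformTuples ι α m) = (Fintype.card α).choose m ^ Fintype.card ι := by
  rw [uniformTuples, Fintype.card_piFinset, prod_const, card_powersetCard, card_univ, card_univ]

lemma card_small_tuples_le {y K : ℝ} (hy : 0 < y) (hy' : y ≤ 1) (hK : (1 + y) ^ m ≤ K * y ^ s)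
    (hE : E ∈ uniformTuples ι α m) :
    (#(Fintype.piFinset fun _ : Fin r =>
      Fintype.piFinset fun j => {S ∈ (E j).powerset | #S ≤ s}) : ℝ) ≤ (K ^ Fintype.card ι) ^ r := by
  have hle (j : ι) : (#{S ∈ (E j).powerset | #S ≤ s} : ℝ) ≤ K := by
    have h := card_small_subsets_mul_pow_le (s := s) hy.le hy' (E j)
    rw [mem_uniformTuples.1 hE j] at h
    exact le_of_mul_le_mul_right (h.trans hK) (pow_pos hy s)
  rw [Fintype.card_piFinset_const, Fintype.card_piFinset, Nat.cast_pow, Nat.cast_prod]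
  refine pow_le_pow_left₀ (prod_nonneg fun _ _ => Nat.cast_nonneg _) ?_ r
  exact (prod_le_prod (fun _ _ => Nat.cast_nonneg _) fun j _ => hle j).trans_eq (prod_const K)

variable [DecidableEq α]

lemma mem_piFinset_supersets {S : ι → Finset α} :
    E ∈ Fintype.piFinset (fun j => supersets m (S j)) ↔ E ∈ uniformTuples ι α m ∧ S ≤ E := by
  simp only [Fintype.mem_piFinset, mem_uniformTuples, mem_supersets, forall_and, Pi.le_def]

open Classical in
/-- The union bound over fingerprints: since `m` is much larger than `s`, summing over the
fingerprints `𝒮` the number of tuples containing `𝒮` only costs the factor `K ^ (card ι * r)`. -/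
lemma card_filter_exists_fingerprint_le {y K b : ℝ} (hy : 0 < y) (hy' : y ≤ 1)
    (hK : (1 + y) ^ m ≤ K * y ^ s) (hb : 0 ≤ b)
    (p : (Fin r → ι → Finset α) → ι → Finset α → Prop)
    (hp : ∀ 𝒮 : Fin r → ι → Finset α, (∀ t i, #(𝒮 t i) ≤ s) → ∃ j,
      (#{E ∈ supersets m (univ.sup 𝒮 j) | p 𝒮 j E} : ℝ) ≤ b * #(supersets m (univ.sup 𝒮 j))) :
    (#{E ∈ uniformTuples ι α m | ∃ 𝒮 : Fin r → ι → Finset α, (∀ t i, #(𝒮 t i) ≤ s) ∧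
        (∀ t, 𝒮 t ≤ E) ∧ ∀ j, p 𝒮 j (E j)} : ℝ) ≤
      b * ((Fintype.card α).choose m ^ Fintype.card ι * (K ^ Fintype.card ι) ^ r) := by
  have hX (𝒮 : Fin r → ι → Finset α) (E : ι → Finset α) :
      E ∈ Fintype.piFinset (fun j => supersets m (univ.sup 𝒮 j)) ↔
        E ∈ uniformTuples ι α m ∧ ∀ t, 𝒮 t ≤ E := by
    rw [mem_piFinset_supersets, Finset.sup_le_iff]
    simp only [mem_univ, true_imp_iff]
  have hbound := card_biUnion_le_mul hb (M := (K ^ Fintype.card ι) ^ r)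
    (𝓢 := {𝒮 : Fin r → ι → Finset α | ∀ t i, #(𝒮 t i) ≤ s})
    (Y := fun 𝒮 => {E ∈ Fintype.piFinset fun j => supersets m (univ.sup 𝒮 j) | ∀ j, p 𝒮 j (E j)})
    (fun 𝒮 _ E hE => ((hX 𝒮 E).1 hE).1) (fun 𝒮 h𝒮 => ?_) fun E hE => ?_
  · rw [card_uniformTuples, Nat.cast_pow] at hbound
    refine (Nat.cast_le.2 (card_le_card fun E hE => ?_)).trans hbound
    obtain ⟨hE, 𝒮, h𝒮, h𝒮E, hp⟩ := mem_filter.1 hE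
    exact mem_biUnion.2 ⟨𝒮, mem_filter.2 ⟨mem_univ _, h𝒮⟩,
      mem_filter.2 ⟨(hX 𝒮 E).2 ⟨hE, h𝒮E⟩, hp⟩⟩
  · obtain ⟨j, hj⟩ := hp 𝒮 (mem_filter.1 h𝒮).2
    refine (Nat.cast_le.2 (card_le_card fun E hE => ?_)).trans (card_filter_piFinset_apply_le hj)
    exact mem_filter.2 ⟨(mem_filter.1 hE).1, (mem_filter.1 hE).2 j⟩
  · refine (Nat.cast_le.2 (card_le_card fun 𝒮 h𝒮 => ?_)).trans (card_small_tuples_le hy hy' hK hE)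
    obtain ⟨h𝒮, hE⟩ := mem_filter.1 h𝒮
    simp only [Fintype.mem_piFinset, mem_filter, mem_powerset]
    exact fun t j => ⟨((hX 𝒮 E).1 hE).2 t j, (mem_filter.1 h𝒮).2 t j⟩

end UnionBound

section Transfer

variable {H : SimpleGraph (Fin k)} {G : SimpleGraph (Fin k × Fin n)} {m : ℕ}

/-- The edges of `H`, each oriented from its smaller to its larger endpoint; they index the
bipartite graphs that make up a subgraph of `K_n^H`. -/
def OrientedEdge (H : SimpleGraph (Fin k)) : Type :=
  {e : Fin k × Fin k // e.1 < e.2 ∧ H.Adj e.1 e.2}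

open Classical in
noncomputable instance : Fintype (OrientedEdge H) :=
  inferInstanceAs (Fintype {e : Fin k × Fin k // e.1 < e.2 ∧ H.Adj e.1 e.2})

instance : DecidableEq (OrientedEdge H) :=
  inferInstanceAs (DecidableEq {e : Fin k × Fin k // e.1 < e.2 ∧ H.Adj e.1 e.2})

lemma OrientedEdge.forall_iff {p : Fin k → Fin k → Prop} (hp : Std.Symm p) :
    (∀ i j, H.Adj i j → p i j) ↔ ∀ e : OrientedEdge H, p e.1.1 e.1.2 := by
  refine ⟨fun h e => h _ _ e.2.2, fun h i j hij => ?_⟩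
  rcases hij.ne.lt_or_gt with hlt | hlt
  · exact h ⟨(i, j), hlt, hij⟩
  · exact hp.symm _ _ (h ⟨(j, i), hlt, hij.symm⟩)

lemma OrientedEdge.sym2_mk_injective :
    Function.Injective fun e : OrientedEdge H => s(e.1.1, e.1.2) := by
  intro e f h
  rcases Sym2.eq_iff.1 h with ⟨h₁, h₂⟩ | ⟨h₁, h₂⟩
  · exact Subtype.ext (Prod.ext h₁ h₂)
  · exact absurd (h₁ ▸ h₂ ▸ e.2.1) f.2.1.asymm

lemma card_orientedEdge : Fintype.card (OrientedEdge H) = edgeCount H := by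
  rw [edgeCount, ← Nat.card_eq_fintype_card]
  refine Nat.card_congr (Equiv.ofBijective
    (fun e : OrientedEdge H => (⟨s(e.1.1, e.1.2), e.2.2⟩ : H.edgeSet)) ⟨?_, ?_⟩)
  · exact fun e f h => OrientedEdge.sym2_mk_injective (congrArg Subtype.val h)
  · rintro ⟨⟨i, j⟩, hij : H.Adj i j⟩
    rcases hij.ne.lt_or_gt with hlt | hlt
    · exact ⟨⟨(i, j), hlt, hij⟩, rfl⟩
    · exact ⟨⟨(j, i), hlt, hij.symm⟩, Subtype.ext Sym2.eq_swap⟩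

open Classical in
/-- The bipartite graphs that `G` induces between the classes joined by the edges of `H`. -/
noncomputable def edgeSets (H : SimpleGraph (Fin k)) (G : SimpleGraph (Fin k × Fin n))
    (e : OrientedEdge H) : Finset (Fin n × Fin n) :=
  {p | G.Adj (e.1.1, p.1) (e.1.2, p.2)}

lemma mem_edgeSets {e : OrientedEdge H} {p : Fin n × Fin n} :
    p ∈ edgeSets H G e ↔ G.Adj (e.1.1, p.1) (e.1.2, p.2) := by
  simp only [edgeSets, mem_filter, mem_univ, true_and]

/-- The subgraph of `K_n^H` whose bipartite graphs are prescribed by `E`. -/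
def ofEdgeSets (E : OrientedEdge H → Finset (Fin n × Fin n)) : SimpleGraph (Fin k × Fin n) where
  Adj x y := ∃ e : OrientedEdge H, (x.1 = e.1.1 ∧ y.1 = e.1.2 ∧ (x.2, y.2) ∈ E e) ∨
    (y.1 = e.1.1 ∧ x.1 = e.1.2 ∧ (y.2, x.2) ∈ E e)
  symm := ⟨fun _ _ ⟨e, h⟩ => ⟨e, h.symm⟩⟩
  loopless := ⟨fun _ ⟨e, h⟩ => by
    rcases h with ⟨h₁, h₂, -⟩ | ⟨h₁, h₂, -⟩ <;> exact e.2.1.ne (h₁.symm.trans h₂)⟩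

lemma isSubgraphKnH_ofEdgeSets (E : OrientedEdge H → Finset (Fin n × Fin n)) :
    IsSubgraphKnH H (ofEdgeSets E) := by
  rintro x y ⟨e, ⟨h₁, h₂, -⟩ | ⟨h₁, h₂, -⟩⟩
  · exact h₁ ▸ h₂ ▸ e.2.2
  · exact h₁ ▸ h₂ ▸ e.2.2.symm

lemma edgeSets_ofEdgeSets (E : OrientedEdge H → Finset (Fin n × Fin n)) :
    edgeSets H (ofEdgeSets E) = E := by
  ext e p
  rw [mem_edgeSets]
  refine ⟨?_, fun h => ⟨e, Or.inl ⟨rfl, rfl, h⟩⟩⟩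
  rintro ⟨f, ⟨h₁, h₂, h⟩ | ⟨h₁, h₂, -⟩⟩
  · rwa [show e = f from Subtype.ext (Prod.ext h₁ h₂)]
  · exact absurd (h₁.trans_lt (f.2.1.trans_eq h₂.symm)) e.2.1.asymm

lemma ofEdgeSets_edgeSets (hG : IsSubgraphKnH H G) : ofEdgeSets (edgeSets H G) = G := by
  ext x y
  refine ⟨?_, fun h => ?_⟩
  · rintro ⟨e, ⟨h₁, h₂, h⟩ | ⟨h₁, h₂, h⟩⟩ <;> rw [mem_edgeSets, ← h₁, ← h₂] at h
    exacts [h, h.symm]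
  · rcases (hG h).ne.lt_or_gt with hlt | hlt
    · exact ⟨⟨(x.1, y.1), hlt, hG h⟩, Or.inl ⟨rfl, rfl, mem_edgeSets.2 h⟩⟩
    · exact ⟨⟨(y.1, x.1), hlt, (hG h).symm⟩, Or.inr ⟨rfl, rfl, mem_edgeSets.2 h.symm⟩⟩

lemma pairCountIn_eq_card (e : OrientedEdge H) (A B : Finset (Fin n)) :
    pairCountIn G e.1.1 e.1.2 A B = #(edgeSets H G e ∩ A ×ˢ B) := by
  classical
  rw [pairCountIn, Nat.subtype_card]
  intro p
  rw [mem_inter, mem_edgeSets, mem_product, and_comm, and_assoc]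

lemma pairCount_eq_card (e : OrientedEdge H) :
    pairCount G e.1.1 e.1.2 = #(edgeSets H G e) := by
  rw [pairCount, Nat.subtype_card _ fun p => mem_edgeSets]

lemma pairCountIn_comm (i j : Fin k) (A B : Finset (Fin n)) :
    pairCountIn G i j A B = pairCountIn G j i B A :=
  Nat.card_congr <| (Equiv.prodComm _ _).subtypeEquiv fun p => by
    rw [Equiv.prodComm_apply, Prod.fst_swap, Prod.snd_swap, G.adj_comm, and_left_comm]

lemma pairCount_comm (i j : Fin k) : pairCount G i j = pairCount G j i :=
  Nat.card_congr <| (Equiv.prodComm _ _).subtypeEquiv fun p => by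
    rw [Equiv.prodComm_apply, Prod.fst_swap, Prod.snd_swap, G.adj_comm]

lemma density_comm (i j : Fin k) (A B : Finset (Fin n)) :
    density G i j A B = density G j i B A := by
  rw [density, density, pairCountIn_comm, mul_comm]

lemma memFamily_iff :
    MemFamily H m G ↔ IsSubgraphKnH H G ∧ edgeSets H G ∈ uniformTuples _ _ m := by
  rw [MemFamily, OrientedEdge.forall_iff ⟨fun i j h => pairCount_comm j i ▸ h⟩, mem_uniformTuples]
  simp only [pairCount_eq_card]

lemma lowerRegularPair_iff {ε lam : ℝ} (hε : 0 < ε) (hn : 0 < n) (e : OrientedEdge H) :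
    LowerRegularPair ε lam G e.1.1 e.1.2 ↔ IsLowerRegular ε lam (edgeSets H G e) := by
  refine forall_congr' fun A => forall_congr' fun B => forall_congr' fun hA =>
    forall_congr' fun hB => ?_
  have hεn : 0 < ε * n := mul_pos hε (mod_cast hn)
  have hA' : (0 : ℝ) < #A := hεn.trans_le hA
  have hB' : (0 : ℝ) < #B := hεn.trans_le hB
  simp only [density, pairCountIn_eq_card, univ_product_univ, inter_univ, card_univ,
    Fintype.card_fin]
  rw [← mul_div_assoc, div_le_div_iff₀ (by positivity) (by positivity), sq]

lemma lowerRegular_iff {ε lam : ℝ} (hε : 0 < ε) (hn : 0 < n) :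
    (∀ i j, H.Adj i j → LowerRegularPair ε lam G i j) ↔
      ∀ e, IsLowerRegular ε lam (edgeSets H G e) := by
  refine (OrientedEdge.forall_iff ⟨fun i j h A B hA hB => ?_⟩).trans
    (forall_congr' fun e => lowerRegularPair_iff hε hn e)
  rw [density_comm, density_comm j]
  exact h B A hB hA

/-- The pairs of vertices in which the edges of `H` are embedded by `φ`. -/
def edgeImages (H : SimpleGraph (Fin k)) (φ : Fin k → Fin n) (e : OrientedEdge H) : Fin n × Fin n :=
  (φ e.1.1, φ e.1.2)

lemma isCanonicalCopy_iff {φ : Fin k → Fin n} :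
    IsCanonicalCopy H G φ ↔ ∀ e, edgeImages H φ e ∈ edgeSets H G e :=
  (OrientedEdge.forall_iff (p := fun i j => G.Adj (i, φ i) (j, φ j))
    ⟨fun _ _ => G.adj_symm⟩).trans
    (forall_congr' fun e => (mem_edgeSets (p := edgeImages H φ e)).symm)

lemma copyCount_eq_card : copyCount H G = #(spanned (edgeImages H) (edgeSets H G)) := by
  rw [copyCount, Nat.subtype_card]
  intro φ
  rw [spanned, mem_filter, isCanonicalCopy_iff]
  exact and_iff_right (mem_univ φ)

lemma card_memFamily_and {p : SimpleGraph (Fin k × Fin n) → Prop}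
    {p' : (OrientedEdge H → Finset (Fin n × Fin n)) → Prop} [DecidablePred p']
    (h : ∀ G, p G ↔ p' (edgeSets H G)) :
    Nat.card {G : SimpleGraph (Fin k × Fin n) // MemFamily H m G ∧ p G} =
      #{E ∈ uniformTuples (OrientedEdge H) (Fin n × Fin n) m | p' E} := by
  rw [← Fintype.card_coe, ← Nat.card_eq_fintype_card]
  refine Nat.card_congr
    { toFun := fun G => ⟨edgeSets H G.1,
        mem_filter.2 ⟨(memFamily_iff.1 G.2.1).2, (h G.1).1 G.2.2⟩⟩
      invFun := fun E => ⟨ofEdgeSets E.1, memFamily_iff.2 ⟨isSubgraphKnH_ofEdgeSets E.1, ?_⟩, ?_⟩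
      left_inv := fun G => Subtype.ext (ofEdgeSets_edgeSets G.2.1.1)
      right_inv := fun E => Subtype.ext (edgeSets_ofEdgeSets E.1) }
  · rw [edgeSets_ofEdgeSets]
    exact (mem_filter.1 E.2).1
  · rw [h, edgeSets_ofEdgeSets]
    exact (mem_filter.1 E.2).2

open Classical in
lemma card_lowerRegular {ε lam : ℝ} (hε : 0 < ε) (hn : 0 < n) :
    Nat.card {G : SimpleGraph (Fin k × Fin n) //
      MemFamily H m G ∧ ∀ i j, H.Adj i j → LowerRegularPair ε lam G i j} =
      #{E ∈ powersetCard m (univ : Finset (Fin n × Fin n)) | IsLowerRegular ε lam E} ^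
        edgeCount H := by
  rw [card_memFamily_and (p' := fun E => ∀ e, IsLowerRegular ε lam (E e))
    fun G => lowerRegular_iff hε hn, ← card_orientedEdge, ← card_univ, ← prod_const,
    ← Fintype.card_piFinset]
  congr 1
  ext E
  simp only [uniformTuples, mem_filter, Fintype.mem_piFinset, forall_and]

open Classical in
/-- The `(ε, lam)`-lower-regular members of `𝒢(H, n, m)` with at most `x` canonical copies of `H`,
encoded as tuples of bipartite graphs. -/
noncomputable def sparseTuples (H : SimpleGraph (Fin k)) (n m : ℕ) (ε lam x : ℝ) :
    Finset (OrientedEdge H → Finset (Fin n × Fin n)) :=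
  {E ∈ uniformTuples (OrientedEdge H) (Fin n × Fin n) m |
    (∀ e, IsLowerRegular ε lam (E e)) ∧ (#(spanned (edgeImages H) E) : ℝ) ≤ x}

open Classical in
lemma card_lowerRegular_copyCount_le {ε lam x : ℝ} (hε : 0 < ε) (hn : 0 < n) :
    Nat.card {G : SimpleGraph (Fin k × Fin n) //
      MemFamily H m G ∧ (∀ i j, H.Adj i j → LowerRegularPair ε lam G i j) ∧
        (copyCount H G : ℝ) ≤ x} = #(sparseTuples H n m ε lam x) :=
  card_memFamily_and fun G => by rw [lowerRegular_iff hε hn, copyCount_eq_card]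

end Transfer

section Matching

variable {H : SimpleGraph (Fin k)} {m : ℕ}

lemma card_filter_pair_mem_mul {X : Finset (Fin k → Fin n)} {a b : Fin k} (hab : a ≠ b)
    (hX : ∀ φ ∈ X, ∀ u v, Function.update (Function.update φ a u) b v ∈ X)
    (D : Finset (Fin n × Fin n)) :
    #{φ ∈ X | (φ a, φ b) ∈ D} * n ^ 2 = #X * #D := by
  rw [← card_fin_prod_fin, ← card_univ, ← card_product, ← card_product]
  set swap : (Fin k → Fin n) × (Fin n × Fin n) → (Fin k → Fin n) × (Fin n × Fin n) := fun x =>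
    (Function.update (Function.update x.1 a x.2.1) b x.2.2, (x.1 a, x.1 b)) with hswap
  have hpair (x) : ((swap x).1 a, (swap x).1 b) = x.2 := by
    simp only [hswap, Function.update_self, Function.update_of_ne hab]
  have hinv (x) : swap (swap x) = x := by
    refine Prod.ext (funext fun v => ?_) (hpair x)
    by_cases hb : v = b
    · subst hb
      simp only [hswap, Function.update_self]
    · by_cases ha : v = a
      · subst ha
        simp only [hswap, Function.update_self, Function.update_of_ne hb]
      · simp only [hswap, Function.update_of_ne ha, Function.update_of_ne hb]
  refine card_nbij' swap swap (fun x hx => ?_) (fun x hx => ?_) (fun x _ => hinv x)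
    fun x _ => hinv x
  · obtain ⟨hx, -⟩ := mem_product.1 hx
    obtain ⟨hx, hD⟩ := mem_filter.1 hx
    exact mem_product.2 ⟨hX _ hx _ _, hD⟩
  · obtain ⟨hx, hD⟩ := mem_product.1 hx
    exact mem_product.2 ⟨mem_filter.2 ⟨hX _ hx _ _, hpair x ▸ hD⟩, mem_univ _⟩

lemma OrientedEdge.endpoints_ne (hH : ∀ x y z, H.Adj x y → H.Adj x z → y = z)
    {e f : OrientedEdge H} (hef : e ≠ f) :
    (e.1.1 ≠ f.1.1 ∧ e.1.1 ≠ f.1.2) ∧ e.1.2 ≠ f.1.1 ∧ e.1.2 ≠ f.1.2 := by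
  refine ⟨⟨fun h => hef ?_, fun h => hef ?_⟩, fun h => hef ?_, fun h => hef ?_⟩ <;>
    refine OrientedEdge.sym2_mk_injective (Sym2.eq_iff.2 ?_)
  · exact Or.inl ⟨h, hH _ _ _ e.2.2 (h ▸ f.2.2)⟩
  · exact Or.inr ⟨h, hH _ _ _ e.2.2 (h ▸ f.2.2.symm)⟩
  · exact Or.inr ⟨hH _ _ _ e.2.2.symm (h ▸ f.2.2), h⟩
  · exact Or.inl ⟨hH _ _ _ e.2.2.symm (h ▸ f.2.2.symm), h⟩

lemma card_partial_embeddings_matching (hH : ∀ x y z, H.Adj x y → H.Adj x z → y = z)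
    {E : OrientedEdge H → Finset (Fin n × Fin n)} (hE : E ∈ uniformTuples _ _ m)
    (L : Finset (OrientedEdge H)) :
    #{φ : Fin k → Fin n | ∀ e ∈ L, edgeImages H φ e ∈ E e} * (n ^ 2) ^ #L = n ^ k * m ^ #L := by
  induction L using Finset.induction_on with
  | empty => simp
  | insert f L hf ih =>
    set X : Finset (Fin k → Fin n) := {φ | ∀ e ∈ L, edgeImages H φ e ∈ E e} with hX
    have hfilter : ({φ | ∀ e ∈ insert f L, edgeImages H φ e ∈ E e} : Finset (Fin k → Fin n)) =
        {φ ∈ X | (φ f.1.1, φ f.1.2) ∈ E f} := by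
      rw [hX, filter_filter]
      exact filter_congr fun φ _ => by rw [forall_mem_insert, and_comm, edgeImages]
    have hclosed : ∀ φ ∈ X, ∀ u v,
        Function.update (Function.update φ f.1.1 u) f.1.2 v ∈ X := by
      intro φ hφ u v
      refine mem_filter.2 ⟨mem_univ _, fun e he => ?_⟩
      obtain ⟨⟨h₁₁, h₁₂⟩, h₂₁, h₂₂⟩ :=
        OrientedEdge.endpoints_ne hH (ne_of_mem_of_not_mem he hf)
      simp only [edgeImages, Function.update_of_ne h₁₁, Function.update_of_ne h₁₂,
        Function.update_of_ne h₂₁, Function.update_of_ne h₂₂]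
      exact (mem_filter.1 hφ).2 e he
    have hcount := card_filter_pair_mem_mul f.2.1.ne hclosed (E f)
    rw [hfilter, card_insert_of_notMem hf, pow_succ', ← mul_assoc, hcount,
      mem_uniformTuples.1 hE f, mul_right_comm, ih, pow_succ, mul_assoc]

lemma card_spanned_matching (hH : ∀ x y z, H.Adj x y → H.Adj x z → y = z) (hn : 0 < n)
    {E : OrientedEdge H → Finset (Fin n × Fin n)} (hE : E ∈ uniformTuples _ _ m) :
    (#(spanned (edgeImages H) E) : ℝ) = (n : ℝ) ^ k * ((m : ℝ) / (n : ℝ) ^ 2) ^ edgeCount H := by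
  have hcount := card_partial_embeddings_matching hH hE univ
  simp only [mem_univ, true_imp_iff, card_univ, card_orientedEdge] at hcount
  have hn' : (0 : ℝ) < n := mod_cast hn
  rw [div_pow, ← mul_div_assoc, eq_div_iff (by positivity), spanned]
  exact mod_cast hcount

end Matching

section LargeLambda

variable {H : SimpleGraph (Fin k)} {m : ℕ}

lemma eq_zero_of_sum_erase_nonneg {α : Type*} [Fintype α] [DecidableEq α] {f : α → ℝ}
    (h₀ : ∑ x, f x = 0) (h : ∀ a, 0 ≤ ∑ x ∈ univ.erase a, f x) (a : α) : f a = 0 := by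
  have hnonpos (x : α) : f x ≤ 0 := by
    linarith [h x, add_sum_erase univ f (mem_univ x)]
  exact (sum_eq_zero_iff_of_nonpos fun x _ => hnonpos x).1 h₀ a (mem_univ a)

lemma nonneg_of_sum_sum_erase_nonneg {α β : Type*} [Fintype α] [Fintype β] [DecidableEq α]
    [DecidableEq β] {f : α → β → ℝ} (h₀ : ∑ x, ∑ y, f x y = 0)
    (hα : ∀ a, 0 ≤ ∑ x ∈ univ.erase a, ∑ y, f x y) (hβ : ∀ b, 0 ≤ ∑ x, ∑ y ∈ univ.erase b, f x y)
    (h : ∀ a b, 0 ≤ ∑ x ∈ univ.erase a, ∑ y ∈ univ.erase b, f x y) (a : α) (b : β) :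
    0 ≤ f a b := by
  have hrow : ∑ y, f a y = 0 := eq_zero_of_sum_erase_nonneg h₀ hα a
  have hcol : ∑ x, f x b = 0 := by
    refine eq_zero_of_sum_erase_nonneg (f := fun y => ∑ x, f x y) (sum_comm.trans h₀)
      (fun y => ?_) b
    exact sum_comm (f := f) ▸ hβ y
  have hrow' := add_sum_erase univ (f a) (mem_univ b)
  have hcol' := add_sum_erase univ (fun x => ∑ y ∈ univ.erase b, f x y) (mem_univ a)
  have hsplit : ∑ x, ∑ y ∈ univ.erase b, f x y = 0 := by
    have := sum_congr rfl fun x (_ : x ∈ univ) => add_sum_erase univ (f x) (mem_univ b)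
    rw [sum_add_distrib, hcol, h₀, zero_add] at this
    exact this
  linarith [h a b]

lemma sum_sum_indicator_sub (E : Finset (Fin n × Fin n)) (A B : Finset (Fin n)) :
    (∑ x ∈ A, ∑ y ∈ B, ((if (x, y) ∈ E then (n : ℝ) ^ 2 else 0) - #E) : ℝ) =
      #(E ∩ A ×ˢ B) * (n : ℝ) ^ 2 - #E * (#A * #B) := by
  rw [← sum_product' A B fun x y => (if (x, y) ∈ E then (n : ℝ) ^ 2 else 0) - #E, sum_sub_distrib,
    ← sum_filter, sum_const, sum_const, filter_mem_eq_inter, inter_comm, card_product,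
    nsmul_eq_mul, nsmul_eq_mul]
  push_cast
  ring

/-- When `lam ≥ 1`, no pair of large sets can have less than the average density, so none can have
more either, and inclusion-exclusion extends this from large sets to single vertices. -/
lemma IsLowerRegular.eq_univ {lam : ℝ} {E : Finset (Fin n × Fin n)}
    (hE : IsLowerRegular (1 / 2) lam E) (hlam : 1 ≤ lam) (hn : 2 ≤ n) (hE₀ : E.Nonempty) :
    E = univ := by
  have hn' : (2 : ℝ) ≤ n := mod_cast hn
  have huniv : 1 / 2 * (n : ℝ) ≤ #(univ : Finset (Fin n)) := by
    rw [card_univ, Fintype.card_fin]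
    linarith
  have herase (a : Fin n) : 1 / 2 * (n : ℝ) ≤ #(univ.erase a) := by
    rw [card_erase_of_mem (mem_univ a), card_univ, Fintype.card_fin, Nat.cast_pred (by lia)]
    linarith
  have hnonneg {A B : Finset (Fin n)} (hA : 1 / 2 * (n : ℝ) ≤ #A) (hB : 1 / 2 * (n : ℝ) ≤ #B) :
      0 ≤ ∑ x ∈ A, ∑ y ∈ B, ((if (x, y) ∈ E then (n : ℝ) ^ 2 else 0) - #E) := by
    rw [sum_sum_indicator_sub, sub_nonneg]
    refine le_trans ?_ (hE A B hA hB)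
    gcongr
    exact le_mul_of_one_le_left (Nat.cast_nonneg _) hlam
  refine eq_univ_iff_forall.2 fun ⟨a, b⟩ => ?_
  have hab := nonneg_of_sum_sum_erase_nonneg
    (f := fun x y => (if (x, y) ∈ E then (n : ℝ) ^ 2 else 0) - #E) ?_
    (fun a => hnonneg (herase a) huniv) (fun b => hnonneg huniv (herase b))
    (fun a b => hnonneg (herase a) (herase b)) a b
  · by_contra hmem
    rw [if_neg hmem, zero_sub, neg_nonneg] at hab
    exact hab.not_gt (mod_cast hE₀.card_pos)
  · rw [sum_sum_indicator_sub, univ_product_univ, inter_univ, card_univ, Fintype.card_fin]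
    ring

lemma le_card_spanned_of_one_le {lam : ℝ} (hlam : 1 ≤ lam) (hn : 2 ≤ n) (hm : 0 < m)
    {E : OrientedEdge H → Finset (Fin n × Fin n)} (hE : E ∈ uniformTuples _ _ m)
    (hreg : ∀ e, IsLowerRegular (1 / 2) lam (E e)) :
    (n : ℝ) ^ k * ((m : ℝ) / (n : ℝ) ^ 2) ^ edgeCount H ≤ #(spanned (edgeImages H) E) := by
  have hcard (e) : #(E e) = m := mem_uniformTuples.1 hE e
  have hfull (e) : E e = univ :=
    (hreg e).eq_univ hlam hn (card_pos.1 (hcard e ▸ hm))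
  have hspanned : #(spanned (edgeImages H) E) = n ^ k := by
    simp only [spanned, hfull, mem_univ, implies_true, filter_true, card_univ, Fintype.card_fun,
      Fintype.card_fin]
  have hdensity : ((m : ℝ) / (n : ℝ) ^ 2) ^ edgeCount H ≤ 1 := by
    rcases isEmpty_or_nonempty (OrientedEdge H) with hempty | ⟨⟨e⟩⟩
    · rw [← card_orientedEdge, Fintype.card_eq_zero, pow_zero]
    · refine pow_le_one₀ (by positivity) (div_le_one_of_le₀ ?_ (by positivity))
      rw [← hcard e, ← Nat.cast_pow, ← card_fin_prod_fin]
      exact mod_cast card_le_univ _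
  rw [hspanned, Nat.cast_pow]
  exact mul_le_of_le_one_right (by positivity) hdensity

end LargeLambda

section TwoDensity

variable {H : SimpleGraph (Fin k)} {T : Finset (OrientedEdge H)} {W : Finset (Fin k)} {q : ℝ}

lemma div_le_twoDensity {H' : SimpleGraph (Fin k)} (hH' : H' ≤ H)
    (hW : ∀ ⦃x y⦄, H'.Adj x y → x ∈ W ∧ y ∈ W) (hW₂ : 2 < #W) :
    ((edgeCount H' : ℝ) - 1) / (#W - 2) ≤ twoDensity H := by
  refine le_csSup ⟨(Nat.card (Sym2 (Fin k)) : ℝ), ?_⟩ ⟨W, H', hH', hW, hW₂, rfl⟩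
  rintro _ ⟨V', F, -, -, hV', rfl⟩
  have hV' : (3 : ℝ) ≤ #V' := mod_cast hV'
  have hF : (edgeCount F : ℝ) ≤ Nat.card (Sym2 (Fin k)) :=
    mod_cast Nat.card_le_card_of_injective _ Subtype.val_injective
  rw [div_le_iff₀ (by linarith)]
  calc (edgeCount F : ℝ) - 1 ≤ Nat.card (Sym2 (Fin k)) := by linarith
    _ ≤ Nat.card (Sym2 (Fin k)) * ((#V' : ℝ) - 2) :=
      le_mul_of_one_le_right (Nat.cast_nonneg _) (by linarith)

lemma card_sub_one_div_le_twoDensity (hTW : ∀ e ∈ T, e.1.1 ∈ W ∧ e.1.2 ∈ W) (hW : 2 < #W) :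
    ((#T : ℝ) - 1) / (#W - 2) ≤ twoDensity H := by
  set S : Set (Sym2 (Fin k)) := (fun e : OrientedEdge H => s(e.1.1, e.1.2)) '' T with hS
  have hdiag : Disjoint S Sym2.diagSet := by
    rw [Set.disjoint_left]
    rintro _ ⟨e, -, rfl⟩ h
    exact e.2.1.ne h
  have hcount : edgeCount (SimpleGraph.fromEdgeSet S) = #T := by
    rw [edgeCount, SimpleGraph.edgeSet_fromEdgeSet, hdiag.sdiff_eq_left, hS,
      Nat.card_image_of_injective OrientedEdge.sym2_mk_injective]
    exact Nat.card_eq_finsetCard T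
  rw [← hcount]
  refine div_le_twoDensity (fun x y hxy => ?_) (fun x y hxy => ?_) hW <;>
    obtain ⟨⟨e, he, hexy⟩, -⟩ := (SimpleGraph.fromEdgeSet_adj S).1 hxy <;>
    rcases Sym2.eq_iff.1 hexy with ⟨rfl, rfl⟩ | ⟨rfl, rfl⟩
  exacts [e.2.2, e.2.2.symm, hTW e he, (hTW e he).symm]

lemma exists_orientedEdge {x y : Fin k} (h : H.Adj x y) :
    ∃ e : OrientedEdge H, s(e.1.1, e.1.2) = s(x, y) := by
  rcases h.ne.lt_or_gt with hlt | hlt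
  · exact ⟨⟨(x, y), hlt, h⟩, rfl⟩
  · exact ⟨⟨(y, x), hlt, h.symm⟩, Sym2.eq_swap⟩

lemma one_le_twoDensity {x y z : Fin k} (hxy : H.Adj x y) (hxz : H.Adj x z) (hyz : y ≠ z) :
    1 ≤ twoDensity H := by
  obtain ⟨e, he⟩ := exists_orientedEdge hxy
  obtain ⟨f, hf⟩ := exists_orientedEdge hxz
  have hef : e ≠ f := by
    rintro rfl
    exact hyz (Sym2.congr_right.1 (he.symm.trans hf))
  have hcard : #({x, y, z} : Finset (Fin k)) = 3 :=
    card_eq_three.2 ⟨x, y, z, hxy.ne, hxz.ne, hyz, rfl⟩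
  have hmem : ∀ e' ∈ ({e, f} : Finset (OrientedEdge H)),
      e'.1.1 ∈ ({x, y, z} : Finset (Fin k)) ∧ e'.1.2 ∈ ({x, y, z} : Finset (Fin k)) := by
    simp only [mem_insert, mem_singleton, forall_eq_or_imp, forall_eq]
    rcases Sym2.eq_iff.1 he with h | h <;> rcases Sym2.eq_iff.1 hf with h' | h' <;>
      simp only [h, h', true_or, or_true, and_self]
  have h := card_sub_one_div_le_twoDensity hmem (hcard ▸ by norm_num)
  rw [hcard, card_pair hef] at h
  norm_num at h
  exact h

/-- The set of vertices covered by the edges in `T`. -/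
def support (T : Finset (OrientedEdge H)) : Finset (Fin k) := T.biUnion fun e => {e.1.1, e.1.2}

lemma endpoints_mem_support {e : OrientedEdge H} (he : e ∈ T) :
    e.1.1 ∈ support T ∧ e.1.2 ∈ support T :=
  ⟨mem_biUnion.2 ⟨e, he, mem_insert_self _ _⟩,
    mem_biUnion.2 ⟨e, he, mem_insert_of_mem (mem_singleton_self _)⟩⟩

lemma two_le_card_support (hT : T.Nonempty) : 2 ≤ #(support T) := by
  obtain ⟨e, he⟩ := hT
  rw [← card_pair e.2.1.ne]
  exact card_le_card (subset_biUnion_of_mem (fun e : OrientedEdge H => {e.1.1, e.1.2}) he)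

lemma card_le_one_of_card_support_le_two (hT : #(support T) ≤ 2) : #T ≤ 1 := by
  have hpair {e : OrientedEdge H} (he : e ∈ T) : ({e.1.1, e.1.2} : Finset (Fin k)) = support T :=
    eq_of_subset_of_card_le
      (subset_biUnion_of_mem (fun e : OrientedEdge H => ({e.1.1, e.1.2} : Finset (Fin k))) he)
      (hT.trans_eq (card_pair e.2.1.ne).symm)
  refine card_le_one.2 fun e he f hf => OrientedEdge.sym2_mk_injective (Sym2.ext fun v => ?_)
  have hv := Finset.ext_iff.1 ((hpair he).trans (hpair hf).symm) v
  rw [mem_insert, mem_singleton, mem_insert, mem_singleton] at hv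
  rwa [Sym2.mem_iff, Sym2.mem_iff]

lemma card_piFinset_singleton_or_univ (W : Finset (Fin k)) (ψ : Fin k → Fin n) :
    #(Fintype.piFinset fun v => if v ∈ W then {ψ v} else univ) * n ^ #W = n ^ k := by
  have hcard : #(Fintype.piFinset fun v => if v ∈ W then {ψ v} else univ) = n ^ #Wᶜ := by
    rw [Fintype.card_piFinset, ← prod_mul_prod_compl W,
      prod_eq_one fun v hv => by rw [if_pos hv, card_singleton], one_mul, ← prod_const]
    exact prod_congr rfl fun v hv => by rw [if_neg (mem_compl.1 hv), card_univ, Fintype.card_fin]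
  rw [hcard, ← pow_add, card_compl_add_card, Fintype.card_fin]

lemma codegree_edgeImages_mul_pow_le (T : Finset (OrientedEdge H))
    (x : OrientedEdge H → Fin n × Fin n) :
    codegree (edgeImages H) univ T x * n ^ #(support T) ≤ n ^ k := by
  rcases (codegree (edgeImages H) univ T x).eq_zero_or_pos with h₀ | hpos
  · rw [h₀, zero_mul]
    exact Nat.zero_le _
  obtain ⟨ψ, hψ⟩ := card_pos.1 hpos
  refine le_of_le_of_eq ?_ (card_piFinset_singleton_or_univ (support T) ψ)
  refine Nat.mul_le_mul_right _ (card_le_card fun φ hφ => Fintype.mem_piFinset.2 fun v => ?_)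
  simp only [mem_filter, mem_univ, true_and] at hφ hψ
  split_ifs with hv
  · obtain ⟨e, he, hve⟩ := mem_biUnion.1 hv
    obtain ⟨h₁, h₂⟩ := Prod.ext_iff.1 ((hφ e he).trans (hψ e he).symm)
    rw [mem_singleton]
    rcases mem_insert.1 hve with rfl | hve
    exacts [h₁, mem_singleton.1 hve ▸ h₂]
  · exact mem_univ _

lemma one_le_pow_mul_pow (hH : 0 < twoDensity H) (hn : 0 < n)
    (hq : (n : ℝ) ^ (-(1 / twoDensity H)) ≤ q) {w t : ℕ} (hw : w ≠ 0)
    (ht : (t : ℝ) / w ≤ twoDensity H) : 1 ≤ (n : ℝ) ^ w * q ^ t := by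
  have hn' : (1 : ℝ) ≤ n := mod_cast hn
  have hw' : (0 : ℝ) < w := mod_cast Nat.pos_of_ne_zero hw
  have hexp : (t : ℝ) / twoDensity H ≤ w := by
    rwa [div_le_comm₀ hH hw']
  calc (1 : ℝ) = (n : ℝ) ^ w * (n : ℝ) ^ (-(w : ℝ)) := by
        rw [Real.rpow_neg (by positivity), Real.rpow_natCast, mul_inv_cancel₀ (by positivity)]
    _ ≤ (n : ℝ) ^ w * (n : ℝ) ^ (-(1 / twoDensity H) * t) := by
        gcongr
        linarith [show -(1 / twoDensity H) * (t : ℝ) = -(t / twoDensity H) by ring]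
    _ = (n : ℝ) ^ w * ((n : ℝ) ^ (-(1 / twoDensity H))) ^ t := by
        rw [Real.rpow_mul (by positivity), Real.rpow_natCast]
    _ ≤ (n : ℝ) ^ w * q ^ t := by gcongr

/-- This is where the 2-density enters: it is the exponent that makes the extensions of any set of
edges of `H` at most as concentrated as the extensions of a single edge. -/
lemma codegreeBounded_edgeImages (hH : 0 < twoDensity H) (hn : 0 < n)
    (hq : (n : ℝ) ^ (-(1 / twoDensity H)) ≤ q) :
    CodegreeBounded (edgeImages (n := n) H) q ((n : ℝ) ^ k / (n : ℝ) ^ 2) univ univ := by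
  intro T _ hT x
  have hn' : (0 : ℝ) < n := mod_cast hn
  have hq₀ : 0 < q := (Real.rpow_pos_of_pos hn' _).trans_le hq
  obtain ⟨w, hw⟩ := Nat.exists_eq_add_of_le (two_le_card_support hT)
  obtain ⟨t, ht⟩ := Nat.exists_eq_add_of_le hT.card_pos
  have hkey : 1 ≤ (n : ℝ) ^ w * q ^ t := by
    rcases eq_or_ne w 0 with rfl | hw₀
    · have : t = 0 := by
        have := card_le_one_of_card_support_le_two hw.le
        lia
      rw [this, pow_zero, pow_zero, mul_one]
    · refine one_le_pow_mul_pow hH hn hq hw₀ ?_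
      have h := card_sub_one_div_le_twoDensity (fun e => endpoints_mem_support)
        (show 2 < #(support T) by lia)
      rw [hw, ht] at h
      push_cast at h
      rwa [add_sub_cancel_left, add_sub_cancel_left] at h
  have hdeg : (codegree (edgeImages H) univ T x : ℝ) * (n : ℝ) ^ #(support T) ≤ (n : ℝ) ^ k :=
    mod_cast codegree_edgeImages_mul_pow_le T x
  rw [div_mul_eq_mul_div, le_div_iff₀ (by positivity)]
  calc (codegree (edgeImages H) univ T x : ℝ) * q * (n : ℝ) ^ 2
      ≤ codegree (edgeImages H) univ T x * q * (n : ℝ) ^ 2 * ((n : ℝ) ^ w * q ^ t) :=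
        le_mul_of_one_le_right (by positivity) hkey
    _ = codegree (edgeImages H) univ T x * (n : ℝ) ^ #(support T) * q ^ #T := by
        rw [hw, ht]
        ring
    _ ≤ (n : ℝ) ^ k * q ^ #T := by gcongr

end TwoDensity

section SparseRectangles

variable {m : ℕ} {ε lam β : ℝ}

/-- The density `δ(x)` below which a set of pairs inside a rectangle `A × B` with
`min |A| |B| = x n` is sparse: a random set of `m` pairs then meets it in a `lam / 2` proportion of
`m |A| |B| / n²` pairs with probability at most `β ^ m`. -/
noncomputable def sparseDensity (lam β x : ℝ) : ℝ := lam / 4 * β ^ (4 / (lam * x ^ 2))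

lemma sparseDensity_pos (hlam : 0 < lam) (hβ : 0 < β) (x : ℝ) : 0 < sparseDensity lam β x :=
  mul_pos (by positivity) (Real.rpow_pos_of_pos hβ _)

lemma sparseDensity_le_one (hlam : 0 ≤ lam) (hlam' : lam ≤ 1) (hβ : 0 ≤ β) (hβ' : β ≤ 1) (x : ℝ) :
    sparseDensity lam β x ≤ 1 :=
  mul_le_one₀ (by linarith) (Real.rpow_nonneg hβ _) (Real.rpow_le_one hβ hβ' (by positivity))

lemma sparseDensity_monotoneOn (hlam : 0 < lam) (hβ : 0 < β) (hβ' : β ≤ 1) :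
    MonotoneOn (sparseDensity lam β) (Set.Ioi 0) := by
  intro x hx y _ hxy
  have hx : 0 < x := hx
  refine mul_le_mul_of_nonneg_left ?_ (by positivity)
  exact Real.rpow_le_rpow_of_exponent_ge hβ hβ' (by gcongr)

lemma pow_min_div_mul_le {A B : Finset (Fin n)} (hn : 0 < n) :
    (min (#A : ℝ) #B / n) ^ 2 * (n : ℝ) ^ 2 ≤ #A * #B := by
  have hn' : (0 : ℝ) < n := mod_cast hn
  calc (min (#A : ℝ) #B / n) ^ 2 * (n : ℝ) ^ 2 = min (#A : ℝ) #B * min (#A : ℝ) #B := by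
        field_simp
    _ ≤ #A * #B := by
        gcongr
        exacts [min_le_left _ _, min_le_right _ _]

lemma card_supersets_meeting_sparse_le (hlam : 0 < lam) (hβ : 0 < β) (hβ' : β ≤ 1) (hn : 0 < n)
    (hm : m ≤ n ^ 2) {A B : Finset (Fin n)} (hA : A.Nonempty) (hB : B.Nonempty)
    {T Q : Finset (Fin n × Fin n)} (hTQ : Disjoint T Q)
    (hQ : (#Q : ℝ) ≤ sparseDensity lam β (min (#A : ℝ) #B / n) * (#A * #B)) :
    (#{E ∈ supersets m T | lam / 2 * m * (#A * #B) ≤ #(E ∩ Q) * (n : ℝ) ^ 2} : ℝ) ≤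
      β ^ m * #(supersets m T) := by
  have hn' : (0 : ℝ) < n := mod_cast hn
  have hA' : (0 : ℝ) < #A := mod_cast hA.card_pos
  have hB' : (0 : ℝ) < #B := mod_cast hB.card_pos
  set x := min (#A : ℝ) #B / n with hx
  have hx' : 0 < x := div_pos (lt_min hA' hB') hn'
  set ρ := β ^ (4 / (lam * x ^ 2)) with hρ
  set t := lam / 2 * m * (#A * #B) / (n : ℝ) ^ 2 with ht
  have ht' : 0 ≤ t := by positivity
  have htn : t * n ^ 2 = lam / 2 * m * (#A * #B) := div_mul_cancel₀ _ (by positivity)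
  have hmeet := card_le_card_inter_le (j := ⌈t / 2⌉₊) (l := ⌈t⌉₊) (ρ := ρ)
    (card_fin_prod_fin ▸ hm) (card_fin_prod_fin ▸ pow_pos hn 2) hTQ
    (Nat.ceil_mono (half_le_self ht')) (by
      have hceil : t / 2 ≤ ⌈t⌉₊ + 1 - ⌈t / 2⌉₊ := by
        linarith [Nat.le_ceil t, Nat.ceil_lt_add_one (div_nonneg ht' zero_le_two)]
      rw [card_fin_prod_fin, Nat.cast_pow]
      calc (#Q * m : ℝ) ≤ lam / 4 * ρ * (#A * #B) * m := by gcongr; exact hQ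
        _ = ρ * (t / 2 * n ^ 2) := by linear_combination (-ρ / 2) * htn
        _ ≤ _ := by gcongr)
  have hρt : ρ ^ ⌈t / 2⌉₊ ≤ β ^ m := by
    rw [hρ, ← Real.rpow_natCast, ← Real.rpow_natCast β, ← Real.rpow_mul hβ.le]
    refine Real.rpow_le_rpow_of_exponent_ge hβ hβ' ?_
    have hxt : lam * x ^ 2 * m ≤ 2 * t := by
      refine le_of_mul_le_mul_right ?_ (by positivity : (0 : ℝ) < (n : ℝ) ^ 2)
      calc lam * x ^ 2 * m * n ^ 2 = lam * m * (x ^ 2 * n ^ 2) := by ring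
        _ ≤ lam * m * (#A * #B) :=
            mul_le_mul_of_nonneg_left (pow_min_div_mul_le hn) (by positivity)
        _ = 2 * t * n ^ 2 := by linear_combination (-2) * htn
    rw [div_mul_eq_mul_div, le_div_iff₀ (by positivity)]
    linarith [Nat.le_ceil (t / 2)]
  calc (#{E ∈ supersets m T | lam / 2 * m * (#A * #B) ≤ #(E ∩ Q) * (n : ℝ) ^ 2} : ℝ)
      = #{E ∈ supersets m T | ⌈t⌉₊ ≤ #(E ∩ Q)} := by
        simp only [Nat.ceil_le, ht, div_le_iff₀ (by positivity : (0 : ℝ) < (n : ℝ) ^ 2)]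
    _ ≤ ρ ^ ⌈t / 2⌉₊ * #(supersets m T) := hmeet
    _ ≤ β ^ m * #(supersets m T) := by gcongr

lemma IsLowerRegular.le_card_inter_product_sdiff {E T : Finset (Fin n × Fin n)}
    (hE : IsLowerRegular ε lam E) (hε : 0 ≤ ε) (hlam : 0 ≤ lam) {A B : Finset (Fin n)}
    (hA : ε * n ≤ #A) (hB : ε * n ≤ #B) (hT : (#T : ℝ) ≤ lam / 2 * ε ^ 2 * #E) :
    lam / 2 * #E * (#A * #B) ≤ #((E ∩ A ×ˢ B) \ T) * (n : ℝ) ^ 2 := by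
  have hAB : ε ^ 2 * (n : ℝ) ^ 2 ≤ #A * #B := by
    calc ε ^ 2 * (n : ℝ) ^ 2 = ε * n * (ε * n) := by ring
      _ ≤ #A * #B := by gcongr
  have hTn : (#T : ℝ) * n ^ 2 ≤ lam / 2 * #E * (#A * #B) :=
    calc (#T : ℝ) * n ^ 2 ≤ lam / 2 * ε ^ 2 * #E * n ^ 2 := by gcongr
      _ = lam / 2 * #E * (ε ^ 2 * n ^ 2) := by ring
      _ ≤ _ := by gcongr
  have hsdiff : (#(E ∩ A ×ˢ B) : ℝ) - #T ≤ #((E ∩ A ×ˢ B) \ T) := by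
    rw [sub_le_iff_le_add]
    exact mod_cast card_le_card_sdiff_add_card
  calc lam / 2 * #E * (#A * #B) ≤ (#(E ∩ A ×ˢ B) - #T) * (n : ℝ) ^ 2 := by
        linarith [hE A B hA hB]
    _ ≤ _ := by gcongr

open Classical in
lemma card_isLowerRegular_supersets_le (hε : 0 < ε) (hlam : 0 < lam) (hβ : 0 < β) (hβ' : β ≤ 1)
    (hn : 0 < n) (hm : m ≤ n ^ 2) {A B : Finset (Fin n)} (hA : ε * n ≤ #A) (hB : ε * n ≤ #B)
    {C T : Finset (Fin n × Fin n)} (hT : (#T : ℝ) ≤ lam / 2 * ε ^ 2 * m)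
    (hC : (#(C ∩ A ×ˢ B) : ℝ) ≤ sparseDensity lam β (min (#A : ℝ) #B / n) * (#A * #B)) :
    (#{E ∈ supersets m T | E ⊆ C ∧ IsLowerRegular ε lam E} : ℝ) ≤ β ^ m * #(supersets m T) := by
  have hεn : 0 < ε * n := mul_pos hε (mod_cast hn)
  have hA₀ : A.Nonempty := card_pos.1 (mod_cast hεn.trans_le hA)
  have hB₀ : B.Nonempty := card_pos.1 (mod_cast hεn.trans_le hB)
  refine le_trans ?_ (card_supersets_meeting_sparse_le hlam hβ hβ' hn hm hA₀ hB₀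
    (disjoint_sdiff (s := T) (t := C ∩ A ×ˢ B)) (hC.trans' (mod_cast card_le_card sdiff_subset)))
  refine Nat.cast_le.2 (card_le_card fun E hE => ?_)
  obtain ⟨hE, hEC, hreg⟩ := mem_filter.1 hE
  have hEm : #E = m := (mem_supersets.1 hE).1
  refine mem_filter.2 ⟨hE, ?_⟩
  calc lam / 2 * m * (#A * #B) ≤ #((E ∩ A ×ˢ B) \ T) * (n : ℝ) ^ 2 :=
        hEm ▸ hreg.le_card_inter_product_sdiff hε.le hlam.le hA hB (hEm ▸ hT)
    _ ≤ #(E ∩ ((C ∩ A ×ˢ B) \ T)) * (n : ℝ) ^ 2 := by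
        rw [← inter_sdiff_assoc, ← inter_assoc, inter_eq_left.2 hEC]

end SparseRectangles

section SparseTuples

variable {H : SimpleGraph (Fin k)}

lemma exists_sparse_rectangle (H : SimpleGraph (Fin k)) {δ : ℝ → ℝ} (hδ : ∀ x, 0 < x → 0 < δ x)
    (hδ' : ∀ x, δ x ≤ 1) (hmono : MonotoneOn δ (Set.Ioi 0)) :
    ∃ ε κ : ℝ, 0 < ε ∧ 0 < κ ∧ ∀ n : ℕ, 0 < n → ∀ C : OrientedEdge H → Finset (Fin n × Fin n),
      (#(spanned (edgeImages H) C) : ℝ) < κ * (n : ℝ) ^ k →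
        ∃ e, ∃ A B : Finset (Fin n), ε * n ≤ #A ∧ ε * n ≤ #B ∧
          (#(C e ∩ A ×ˢ B) : ℝ) < δ (min (#A : ℝ) #B / n) * (#A * #B) := by
  classical
  obtain ⟨ε, κ, hε, hκ, hcount⟩ := exists_le_card_partialCopies H hδ hδ' hmono univ 1 one_pos
  refine ⟨ε, κ, hε, hκ, fun n hn C hC => ?_⟩
  by_contra! hdense
  have hG : HereditarilyDense ε δ H (ofEdgeSets C) := by
    have hpair (i j A B) : #{p ∈ A ×ˢ B | (ofEdgeSets C).Adj (i, p.1) (j, p.2)} =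
        pairCountIn (ofEdgeSets C) i j A B := by
      rw [pairCountIn, Nat.subtype_card]
      simp only [mem_filter, mem_product, and_assoc, implies_true]
    simp only [HereditarilyDense, hpair]
    refine (OrientedEdge.forall_iff ⟨fun i j h A B hA hB => ?_⟩).2 fun e A B hA hB => ?_
    · rw [pairCountIn_comm, min_comm, mul_comm (#A : ℝ)]
      exact h B A hB hA
    · rw [pairCountIn_eq_card, edgeSets_ofEdgeSets]
      exact hdense e A B hA hB
  have hcopies : partialCopies H (ofEdgeSets C) univ (fun _ => univ) =
      spanned (edgeImages H) C := by
    ext φ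
    have hφ := isCanonicalCopy_iff (H := H) (G := ofEdgeSets C) (φ := φ)
    rw [edgeSets_ofEdgeSets] at hφ
    simp only [partialCopies, spanned, mem_filter, Fintype.mem_piFinset, mem_univ, true_imp_iff,
      implies_true, true_and, ← hφ]
    exact ⟨fun h i j hij => h i j hij, fun h i j hij => h hij⟩
  have hle := hcount n hn (ofEdgeSets C) hG (fun _ => univ)
    (fun _ _ => by rw [one_mul, card_univ, Fintype.card_fin]) fun _ => ⟨⟨0, hn⟩, mem_univ _⟩
  rw [card_univ, Fintype.card_fin, hcopies] at hle
  exact hC.not_ge hle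

lemma exists_copy_containers (hH : 0 < twoDensity H) {κ : ℝ} (hκ : 0 < κ) :
    ∃ (r : ℕ) (α : ℝ), 0 < α ∧ ∀ n : ℕ, 0 < n → ∀ s : ℕ,
      (n : ℝ) ^ (2 - 1 / twoDensity H) ≤ s → s ≤ α * (n : ℝ) ^ 2 →
        ∃ C : (Fin r → OrientedEdge H → Finset (Fin n × Fin n)) →
            OrientedEdge H → Finset (Fin n × Fin n),
          ∀ E, (#(spanned (edgeImages H) E) : ℝ) <
              (s / (n : ℝ) ^ 2 / 8) ^ edgeCount H * (κ * (n : ℝ) ^ k) →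
            ∃ 𝒮, (∀ t, 𝒮 t ≤ E) ∧ (∀ t j, #(𝒮 t j) ≤ s) ∧ E ≤ C 𝒮 ∧
              (#(spanned (edgeImages H) (C 𝒮)) : ℝ) < κ * (n : ℝ) ^ k := by
  set c : ℝ := 2 ^ (edgeCount H + 1)
  set α : ℝ := κ / (4 * (8 * (c + 1)) ^ edgeCount H) with hα
  have hα' : 0 < α := by positivity
  obtain ⟨r, hr⟩ := exists_nat_gt (edgeCount H / α)
  refine ⟨r, α, hα', fun n hn s hs hsα => ?_⟩
  have hn' : (0 : ℝ) < n := mod_cast hn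
  have hq : (n : ℝ) ^ (-(1 / twoDensity H)) ≤ s / (n : ℝ) ^ 2 := by
    rw [le_div_iff₀ (by positivity), ← Real.rpow_natCast, ← Real.rpow_add hn', Nat.cast_ofNat,
      neg_add_eq_sub]
    exact hs
  obtain ⟨C, hC⟩ := exists_containers (c := c) (M := κ * (n : ℝ) ^ k) (s := s)
    ((Real.rpow_pos_of_pos hn' _).trans_le hq) ((div_le_iff₀ (by positivity)).2 hsα)
    (by rw [card_fin_prod_fin]; push_cast; field_simp) (by positivity) (by positivity)
    (codegreeBounded_edgeImages hH hn hq) (by rw [card_orientedEdge])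
    (by
      rw [card_orientedEdge, card_fin_prod_fin, hα]
      push_cast
      refine le_of_eq ?_
      field_simp
      exact div_self (by positivity)) r (fun _ => univ) (by
      rw [div_lt_iff₀ hα'] at hr
      simp only [card_univ, card_fin_prod_fin, sum_const, card_orientedEdge, nsmul_eq_mul]
      push_cast
      rw [← mul_assoc]
      gcongr)
  refine ⟨C, fun E hE => hC E (fun _ => subset_univ _) ?_⟩
  rwa [card_orientedEdge]

open Classical in
lemma card_sparseTuples_le [Nonempty (OrientedEdge H)] {m r s : ℕ} {ε lam β x y K M : ℝ}
    (hε : 0 < ε) (hlam : 0 < lam) (hβ : 0 < β) (hβ' : β ≤ 1) (hn : 0 < n) (hm : m ≤ n ^ 2)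
    (hs : (r * s : ℝ) ≤ lam / 2 * ε ^ 2 * m) (hy : 0 < y) (hy' : y ≤ 1)
    (hK : (1 + y) ^ m ≤ K * y ^ s)
    (hrect : ∀ C : OrientedEdge H → Finset (Fin n × Fin n), (#(spanned (edgeImages H) C) : ℝ) < M →
      ∃ e, ∃ A B : Finset (Fin n), ε * n ≤ #A ∧ ε * n ≤ #B ∧
        (#(C e ∩ A ×ˢ B) : ℝ) < sparseDensity lam β (min (#A : ℝ) #B / n) * (#A * #B))
    {C : (Fin r → OrientedEdge H → Finset (Fin n × Fin n)) →
      OrientedEdge H → Finset (Fin n × Fin n)}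
    (hC : ∀ E, (#(spanned (edgeImages H) E) : ℝ) ≤ x → ∃ 𝒮, (∀ t, 𝒮 t ≤ E) ∧
      (∀ t j, #(𝒮 t j) ≤ s) ∧ E ≤ C 𝒮 ∧ (#(spanned (edgeImages H) (C 𝒮)) : ℝ) < M) :
    (#(sparseTuples H n m ε lam x) : ℝ) ≤
      β ^ m * ((n ^ 2).choose m ^ edgeCount H * (K ^ edgeCount H) ^ r) := by
  have hunion := card_filter_exists_fingerprint_le (α := Fin n × Fin n) (r := r) hy hy' hK
    (pow_nonneg hβ.le m) (fun 𝒮 (j : OrientedEdge H) E =>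
      (#(spanned (edgeImages H) (C 𝒮)) : ℝ) < M ∧ E ⊆ C 𝒮 j ∧ IsLowerRegular ε lam E)
    fun 𝒮 h𝒮 => ?_
  · rw [card_orientedEdge, card_fin_prod_fin] at hunion
    refine (Nat.cast_le.2 (card_le_card fun E hE => ?_)).trans hunion
    simp only [sparseTuples, mem_filter] at hE
    obtain ⟨hE, hreg, hx⟩ := hE
    obtain ⟨𝒮, h𝒮E, h𝒮, hEC, hM⟩ := hC E hx
    simp only [mem_filter]
    exact ⟨hE, 𝒮, h𝒮, h𝒮E, fun j => ⟨hM, hEC j, hreg j⟩⟩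
  · by_cases hM : (#(spanned (edgeImages H) (C 𝒮)) : ℝ) < M
    · obtain ⟨j, A, B, hA, hB, hsparse⟩ := hrect (C 𝒮) hM
      have hT : (#(univ.sup 𝒮 j) : ℝ) ≤ lam / 2 * ε ^ 2 * m := by
        refine le_trans ?_ hs
        rw [Finset.sup_apply, sup_eq_biUnion]
        have := card_biUnion_le_card_mul univ (fun t => 𝒮 t j) s fun t _ => h𝒮 t j
        rw [card_univ, Fintype.card_fin] at this
        exact mod_cast this
      refine ⟨j, ?_⟩
      simp only [hM, true_and]
      exact card_isLowerRegular_supersets_le hε hlam hβ hβ' hn hm hA hB hT hsparse.le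
    · refine ⟨Classical.arbitrary _, ?_⟩
      simp only [hM, false_and, filter_false, card_empty, Nat.cast_zero]
      positivity

lemma exists_fingerprint_cost_le_two_pow (M : ℕ) :
    ∃ y τ : ℝ, 0 < y ∧ y ≤ 1 ∧ 0 < τ ∧ ∀ m s : ℕ, s ≤ τ * m →
      ((1 + y) ^ m / y ^ s) ^ M ≤ 2 ^ m := by
  set y : ℝ := 1 / (4 * (M + 1)) with hy
  have hy₀ : 0 < y := by positivity
  have hy₁ : y ≤ 1 := div_le_one_of_le₀ (by linarith [M.cast_nonneg (α := ℝ)]) (by positivity)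
  have hlog : 0 ≤ -Real.log y := neg_nonneg.2 (Real.log_nonpos hy₀.le hy₁)
  set τ : ℝ := 1 / (4 * (M + 1) * (-Real.log y + 1)) with hτ
  have hτ₀ : 0 < τ := by positivity
  refine ⟨y, τ, hy₀, hy₁, hτ₀, fun m s hs => ?_⟩
  have hyM : M * y ≤ 1 / 4 := by
    rw [hy, mul_one_div, div_le_div_iff₀ (by positivity) (by positivity)]
    linarith
  have hτM : M * (τ * -Real.log y) ≤ 1 / 4 := by
    calc M * (τ * -Real.log y) ≤ (M + 1) * (τ * (-Real.log y + 1)) := by gcongr <;> linarith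
      _ = 1 / 4 := by rw [hτ]; field_simp
  calc ((1 + y) ^ m / y ^ s) ^ M ≤ (Real.exp y ^ m / y ^ s) ^ M := by
        gcongr
        linarith [Real.add_one_le_exp y]
    _ = Real.exp (M * (m * y + s * -Real.log y)) := by
        rw [Real.exp_nat_mul, Real.exp_add, Real.exp_nat_mul, Real.exp_nat_mul, Real.exp_neg,
          Real.exp_log hy₀, inv_pow, div_eq_mul_inv]
    _ ≤ Real.exp (m * Real.log 2) := by
        refine Real.exp_le_exp.2 ?_
        calc M * (m * y + s * -Real.log y) ≤ M * (m * y + τ * m * -Real.log y) := by gcongr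
          _ = m * (M * y + M * (τ * -Real.log y)) := by ring
          _ ≤ m * Real.log 2 := by
              gcongr
              linarith [Real.log_two_gt_d9]
    _ = 2 ^ m := by rw [Real.exp_nat_mul, Real.exp_log two_pos]

lemma le_rpow_two_sub_one_div {d : ℝ} (hd : 1 ≤ d) (hn : 0 < n) :
    (n : ℝ) ≤ (n : ℝ) ^ (2 - 1 / d) :=
  Real.self_le_rpow_of_one_le (mod_cast hn) (by linarith [div_le_one_of_le₀ hd (by linarith)])

lemma copy_threshold_lt {m s e : ℕ} {κ σ : ℝ} (hκ : 0 < κ) (hσ : 0 < σ) (hn : 0 < n) (hm : 0 < m)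
    (hs : σ / 2 * m ≤ s) :
    κ * (σ / 16) ^ e / 2 * (n : ℝ) ^ k * (m / (n : ℝ) ^ 2) ^ e <
      (s / (n : ℝ) ^ 2 / 8) ^ e * (κ * (n : ℝ) ^ k) := by
  have hn' : (0 : ℝ) < n := mod_cast hn
  have hm' : (0 : ℝ) < m := mod_cast hm
  calc κ * (σ / 16) ^ e / 2 * (n : ℝ) ^ k * (m / (n : ℝ) ^ 2) ^ e
      = (σ / 2 * m / (n : ℝ) ^ 2 / 8) ^ e * (κ * (n : ℝ) ^ k) / 2 := by
        rw [show σ / 2 * m / (n : ℝ) ^ 2 / 8 = σ / 16 * (m / (n : ℝ) ^ 2) by ring, mul_pow]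
        ring
    _ < (σ / 2 * m / (n : ℝ) ^ 2 / 8) ^ e * (κ * (n : ℝ) ^ k) := half_lt_self (by positivity)
    _ ≤ _ := by gcongr

lemma exists_pos_le_le_mul_le {a b c : ℝ} (r : ℕ) (ha : 0 < a) (hb : 0 < b) (hc : 0 < c) :
    ∃ σ > 0, σ ≤ a ∧ σ ≤ b ∧ r * σ ≤ c := by
  refine ⟨min a (min b (c / (r + 1))), by positivity, min_le_left _ _,
    (min_le_right _ _).trans (min_le_left _ _), ?_⟩
  calc r * min a (min b (c / (r + 1))) ≤ (r + 1) * (c / (r + 1)) := by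
        gcongr
        exacts [le_add_of_nonneg_right zero_le_one, (min_le_right _ _).trans (min_le_right _ _)]
    _ = c := mul_div_cancel₀ c (by positivity)

lemma exists_card_sparseTuples_le_mul_choose [Nonempty (OrientedEdge H)] (hH : 1 ≤ twoDensity H)
    {lam β : ℝ} (hlam : 0 < lam) (hlam' : lam ≤ 1) (hβ : 0 < β) (hβ' : β ≤ 1) :
    ∃ γ ε C : ℝ, 0 < γ ∧ 0 < ε ∧ 0 < C ∧ ∀ n : ℕ, 0 < n → ∀ m : ℕ, m ≤ n ^ 2 →
      C * (n : ℝ) ^ (2 - 1 / twoDensity H) ≤ m →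
        (#(sparseTuples H n m ε lam
          (γ * (n : ℝ) ^ k * ((m : ℝ) / (n : ℝ) ^ 2) ^ edgeCount H)) : ℝ) ≤
            β ^ m * ((n ^ 2).choose m ^ edgeCount H * 2 ^ m) := by
  obtain ⟨ε, κ, hε, hκ, hrect⟩ := exists_sparse_rectangle H
    (fun x _ => sparseDensity_pos hlam hβ x) (sparseDensity_le_one hlam.le hlam' hβ.le hβ')
    (sparseDensity_monotoneOn hlam hβ hβ')
  obtain ⟨r, α, hα, hcont⟩ := exists_copy_containers (one_pos.trans_le hH) hκ
  obtain ⟨y, τ, hy, hy', hτ, hcost⟩ := exists_fingerprint_cost_le_two_pow (edgeCount H * r)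
  obtain ⟨σ, hσ, hστ, hσα, hσr⟩ :=
    exists_pos_le_le_mul_le r hτ hα (by positivity : 0 < lam / 2 * ε ^ 2)
  refine ⟨κ * (σ / 16) ^ edgeCount H / 2, ε, 2 / σ, by positivity, hε, by positivity,
    fun n hn m hm hCm => ?_⟩
  have hXm : (n : ℝ) ^ (2 - 1 / twoDensity H) ≤ σ / 2 * m := by
    rw [div_mul_eq_mul_div, div_le_iff₀ hσ] at hCm
    linarith
  have hσm : 1 ≤ σ / 2 * m :=
    (Nat.one_le_cast.2 hn).trans ((le_rpow_two_sub_one_div hH hn).trans hXm)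
  have hm₀ : 0 < m :=
    Nat.cast_pos.1 (pos_of_mul_pos_right (one_pos.trans_le hσm) (half_pos hσ).le)
  have hm' : (m : ℝ) ≤ (n : ℝ) ^ 2 := mod_cast hm
  set s := ⌈σ / 2 * m⌉₊
  have hs_ge : σ / 2 * m ≤ s := Nat.le_ceil _
  have hs_le : s ≤ σ * m := by
    linarith [Nat.ceil_lt_add_one (zero_le_one.trans hσm)]
  obtain ⟨C, hC⟩ := hcont n hn s (hXm.trans hs_ge) (hs_le.trans (by gcongr))
  refine (card_sparseTuples_le hε hlam hβ hβ' hn hm ?_ hy hy'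
    (div_mul_cancel₀ _ (pow_pos hy s).ne').ge (hrect n hn)
    fun E hE => hC E (hE.trans_lt (copy_threshold_lt hκ hσ hn hm₀ hs_ge))).trans ?_
  · calc (r * s : ℝ) ≤ r * (σ * m) := by gcongr
      _ = r * σ * m := by ring
      _ ≤ _ := by gcongr
  · rw [← pow_mul]
    gcongr
    exact hcost m s (hs_le.trans (by gcongr))

lemma sparseTuples_eq_empty_of_lt [Nonempty (OrientedEdge H)] {m : ℕ} (hm : n ^ 2 < m)
    (ε lam x : ℝ) : sparseTuples H n m ε lam x = ∅ := by
  have hempty : uniformTuples (OrientedEdge H) (Fin n × Fin n) m = ∅ := by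
    rw [← card_eq_zero, card_uniformTuples, card_fin_prod_fin, Nat.choose_eq_zero_of_lt hm,
      zero_pow Fintype.card_ne_zero]
  rw [sparseTuples, hempty, filter_empty]

lemma min_div_two_pow_mul_le {β : ℝ} (hβ : 0 < β) {m : ℕ} (hm : m ≠ 0) (e : ℕ) :
    (min β 1 / 2 ^ (e + 1)) ^ m * 2 ^ m * 2 ^ e ≤ β ^ m :=
  calc (min β 1 / 2 ^ (e + 1)) ^ m * 2 ^ m * 2 ^ e
      ≤ (min β 1 / 2 ^ (e + 1)) ^ m * 2 ^ m * (2 ^ e) ^ m := by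
        gcongr
        exact le_self_pow₀ (one_le_pow₀ one_le_two) hm
    _ = (min β 1) ^ m := by
        rw [← mul_pow, ← mul_pow, mul_assoc, ← pow_succ', div_mul_cancel₀ _ (by positivity)]
    _ ≤ β ^ m := by
        gcongr
        exact min_le_left _ _

open Classical in
lemma exists_card_sparseTuples_le [Nonempty (OrientedEdge H)] (hH : 1 ≤ twoDensity H)
    {lam β : ℝ} (hlam : 0 < lam) (hlam' : lam < 1) (hβ : 0 < β) :
    ∃ γ ε C : ℝ, 0 < γ ∧ 0 < ε ∧ 0 < C ∧ ∀ n : ℕ, 0 < n → ∀ m : ℕ,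
      C * (n : ℝ) ^ (2 - 1 / twoDensity H) ≤ m →
        (#(sparseTuples H n m ε lam
          (γ * (n : ℝ) ^ k * ((m : ℝ) / (n : ℝ) ^ 2) ^ edgeCount H)) : ℝ) ≤
            β ^ m * (#{E ∈ powersetCard m (univ : Finset (Fin n × Fin n)) |
              IsLowerRegular ε lam E} : ℝ) ^ edgeCount H := by
  set β' : ℝ := min β 1 / 2 ^ (edgeCount H + 1) with hβ'
  have hβ'₁ : β' ≤ 1 :=
    div_le_one_of_le₀ ((min_le_right _ _).trans (one_le_pow₀ one_le_two)) (by positivity)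
  obtain ⟨γ, ε, C, hγ, hε, hC, hcount⟩ := exists_card_sparseTuples_le_mul_choose hH hlam hlam'.le
    (by positivity : 0 < β') hβ'₁
  set η : ℝ := ((1 - lam) / 2 * ε ^ 2) ^ 2 with hη
  have hη₀ : 0 < η := by
    have : 0 < 1 - lam := sub_pos.2 hlam'
    positivity
  refine ⟨γ, ε, max C (4 / η), hγ, hε, lt_max_of_lt_left hC, fun n hn m hCm => ?_⟩
  rcases lt_or_ge (n ^ 2) m with hm | hm
  · rw [sparseTuples_eq_empty_of_lt hm, card_empty, Nat.cast_zero]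
    positivity
  have hηm : 4 * (n : ℝ) ≤ η * m := by
    rw [← div_le_iff₀' hη₀, mul_div_right_comm]
    refine le_trans ?_ hCm
    gcongr
    exacts [le_max_right _ _, le_rpow_two_sub_one_div hH hn]
  have hm₀ : m ≠ 0 := by
    rintro rfl
    rw [Nat.cast_zero, mul_zero] at hηm
    exact hn.ne' (mod_cast (by linarith [n.cast_nonneg (α := ℝ)] : (n : ℝ) = 0))
  calc _ ≤ β' ^ m * ((n ^ 2).choose m ^ edgeCount H * 2 ^ m) :=
        hcount n hn m hm ((mul_le_mul_of_nonneg_right (le_max_left _ _) (by positivity)).trans hCm)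
    _ ≤ β' ^ m * ((2 * #{E ∈ powersetCard m univ | IsLowerRegular ε lam E}) ^ edgeCount H *
          2 ^ m) := by
        gcongr
        exact choose_le_two_mul_card_isLowerRegular hε.le hlam.le hlam'.le hn hm hηm
    _ = β' ^ m * 2 ^ m * 2 ^ edgeCount H *
          (#{E ∈ powersetCard m univ | IsLowerRegular ε lam E} : ℝ) ^ edgeCount H := by ring
    _ ≤ _ := by
        gcongr
        exact min_div_two_pow_mul_le hβ hm₀ _

lemma sparseTuples_half_eq_empty {m : ℕ} {lam : ℝ}
    (h : (∀ x y z, H.Adj x y → H.Adj x z → y = z) ∨ 1 ≤ lam) (hn : 2 ≤ n) (hm : 0 < m) :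
    sparseTuples H n m (1 / 2) lam
      (1 / 2 * (n : ℝ) ^ k * ((m : ℝ) / (n : ℝ) ^ 2) ^ edgeCount H) = ∅ := by
  have hn' : (0 : ℝ) < n := mod_cast two_pos.trans_le hn
  have hm' : (0 : ℝ) < m := mod_cast hm
  rw [eq_empty_iff_forall_notMem]
  intro E hE
  simp only [sparseTuples, mem_filter] at hE
  obtain ⟨hE, hreg, hfew⟩ := hE
  have hmany : (n : ℝ) ^ k * ((m : ℝ) / (n : ℝ) ^ 2) ^ edgeCount H ≤
      #(spanned (edgeImages H) E) := by
    rcases h with hmatching | hlam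
    · exact (card_spanned_matching hmatching (two_pos.trans_le hn) hE).ge
    · exact le_card_spanned_of_one_le hlam hn hm hE hreg
  have hpos : 0 < (n : ℝ) ^ k * ((m : ℝ) / (n : ℝ) ^ 2) ^ edgeCount H := by positivity
  linarith

end SparseTuples

end KLR

/-- **K£R conjecture, weak counting version.** For every `H` and `λ, β > 0` there exist
`γ, ε, C > 0` such that for sufficiently large `n` and `m ≥ C n^(2 - 1/m₂(H))`, the conditional
probability that `G_{n,m}^H` has at most `γ n^(v(H)) (m/n²)^(e(H))` canonical copies of `H`,
given that it is `(ε, λ)`-lower-regular, is at most `β^m` (stated in counting form). -/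
theorem klr_weak_counting (k : ℕ) (H : SimpleGraph (Fin k)) (lam β : ℝ)
    (hlam : 0 < lam) (hβ : 0 < β) :
    ∃ γ ε C : ℝ, 0 < γ ∧ 0 < ε ∧ 0 < C ∧
      ∃ n₀ : ℕ, ∀ n : ℕ, n₀ ≤ n → ∀ m : ℕ,
        C * (n : ℝ) ^ (2 - 1 / twoDensity H) ≤ (m : ℝ) →
        (Nat.card {G : SimpleGraph (Fin k × Fin n) //
            MemFamily H m G ∧ (∀ i j, H.Adj i j → LowerRegularPair ε lam G i j) ∧
            (copyCount H G : ℝ) ≤ γ * (n : ℝ) ^ k * ((m : ℝ) / (n : ℝ) ^ 2) ^ edgeCount H} : ℝ)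
          ≤ β ^ m *
            (Nat.card {G : SimpleGraph (Fin k × Fin n) //
              MemFamily H m G ∧ ∀ i j, H.Adj i j → LowerRegularPair ε lam G i j} : ℝ) := by
  by_cases hdeg : (∀ x y z, H.Adj x y → H.Adj x z → y = z) ∨ 1 ≤ lam
  · refine ⟨1 / 2, 1 / 2, 1, by norm_num, by norm_num, one_pos, 2, fun n hn m hm => ?_⟩
    have hn₀ : 0 < n := two_pos.trans_le hn
    have hm₀ : 0 < m := Nat.cast_pos.1 <| hm.trans_lt' <| by
      rw [one_mul]
      exact Real.rpow_pos_of_pos (Nat.cast_pos.2 hn₀) _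
    rw [KLR.card_lowerRegular_copyCount_le (by norm_num) hn₀,
      KLR.sparseTuples_half_eq_empty hdeg hn hm₀, card_empty, Nat.cast_zero]
    positivity
  · push Not at hdeg
    obtain ⟨⟨x, y, z, hxy, hxz, hyz⟩, hlam'⟩ := hdeg
    have : Nonempty (KLR.OrientedEdge H) := ⟨(KLR.exists_orientedEdge hxy).choose⟩
    obtain ⟨γ, ε, C, hγ, hε, hC, hcount⟩ :=
      KLR.exists_card_sparseTuples_le (KLR.one_le_twoDensity hxy hxz hyz) hlam hlam' hβ
    refine ⟨γ, ε, C, hγ, hε, hC, 1, fun n hn m hm => ?_⟩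
    rw [KLR.card_lowerRegular_copyCount_le hε hn, KLR.card_lowerRegular hε hn, Nat.cast_pow]
    exact hcount n hn m hm
end

section
/- For every ε with 0 < ε < 1/6 and every λ ∈ (0,1], there exists a constant C such that the following holds: let H be a graph, let G ∈ G(H, n, m, ε, λ), and let G' ⊆ G be the random subgraph formed by taking, for each edge ij of H, a uniformly random set of m' > Cn edges from G(V_i,V_j). Then, with probability tending to 1 as n → ∞, G' ∈ G(H, n, m', ε, λ/2). -/
open Finset

variable {k n : ℕ}

/-!
The edges of the random subgraph `G'` between `V_i` and `V_j` form a uniformly random `m'`-subset of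
the edges of `G(V_i, V_j)`. For fixed sets `A` and `B` of size at least `ε n`, the number of these
edges between `A` and `B` is therefore hypergeometric, and lower-regularity of `G` makes its mean
at least `λ m' |A| |B| / n ^ 2`, which is at least `λ ε ^ 2 m'`. By a Chernoff bound it drops below
the fraction `λ' / λ` of its mean with probability at most `exp (-c m')`, where
`c = (1 - λ' / λ) ^ 2 / 2 * λ ε ^ 2`. Once `m' ≥ C n` with `C = log 8 / c`, this is at most `8⁻ⁿ`,
small enough for a union bound over the at most `4 ^ n` choices of `(A, B)`.

The Chernoff bound rests on the estimate of `∑ x ^ #(S ∩ F)` over the `s`-subsets `S` of `E` by its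
value for sampling with replacement.
-/

section Hypergeometric

variable {α : Type*} [DecidableEq α]

theorem choose_mul_pow_le_choose_mul_pow {q N : ℕ} (h : q ≤ N) (t : ℕ) :
    q.choose t * N ^ t ≤ N.choose t * q ^ t := by
  suffices q.descFactorial t * N ^ t ≤ N.descFactorial t * q ^ t by
    simp only [Nat.descFactorial_eq_factorial_mul_choose, mul_assoc] at this
    exact Nat.le_of_mul_le_mul_left this t.factorial_pos
  induction t with
  | zero => simp
  | succ t ih =>
    have hfactor : (q - t) * N ≤ (N - t) * q := by
      rw [Nat.sub_mul, Nat.sub_mul, Nat.mul_comm N q]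
      exact Nat.sub_le_sub_left (Nat.mul_le_mul_left t h) _
    calc q.descFactorial (t + 1) * N ^ (t + 1)
        = (q - t) * N * (q.descFactorial t * N ^ t) := by rw [Nat.descFactorial_succ]; ring
      _ ≤ (N - t) * q * (N.descFactorial t * q ^ t) := Nat.mul_le_mul hfactor ih
      _ = N.descFactorial (t + 1) * q ^ (t + 1) := by rw [Nat.descFactorial_succ]; ring

theorem choose_le_choose_mul_div_pow {q N : ℕ} (h : q ≤ N) (t : ℕ) :
    (q.choose t : ℝ) ≤ N.choose t * ((q : ℝ) / N) ^ t := by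
  rcases N.eq_zero_or_pos with rfl | hN
  · obtain rfl := Nat.le_zero.1 h
    cases t <;> simp
  · rw [div_pow, ← mul_div_assoc, le_div_iff₀ (by positivity)]
    exact_mod_cast choose_mul_pow_le_choose_mul_pow h t

theorem sum_powersetCard_choose_card_inter {E Q : Finset α} (hQ : Q ⊆ E) {s t : ℕ} (hts : t ≤ s) :
    ∑ S ∈ E.powersetCard s, (#(S ∩ Q)).choose t = (#Q).choose t * (#E - t).choose (s - t) := by
  calc ∑ S ∈ E.powersetCard s, (#(S ∩ Q)).choose t
      = ∑ S ∈ E.powersetCard s, #{T ∈ Q.powersetCard t | T ⊆ S} := by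
        refine sum_congr rfl fun S _ ↦ ?_
        rw [← card_powersetCard]
        congr 1
        ext T
        simp only [mem_powersetCard, mem_filter, subset_inter_iff]
        tauto
    _ = ∑ T ∈ Q.powersetCard t, #{S ∈ E.powersetCard s | T ⊆ S} := by
        simp only [card_filter]
        exact sum_comm
    _ = ∑ _T ∈ Q.powersetCard t, (#E - t).choose (s - t) := by
        refine sum_congr rfl fun T hT ↦ ?_
        obtain ⟨hTQ, rfl⟩ := mem_powersetCard.1 hT
        exact card_filter_powersetCard_subset T E s (hTQ.trans hQ) hts
    _ = (#Q).choose t * (#E - t).choose (s - t) := by simp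

theorem sum_powersetCard_choose_card_inter_le {E Q : Finset α} (hQ : Q ⊆ E) {s t : ℕ}
    (hts : t ≤ s) :
    (∑ S ∈ E.powersetCard s, (#(S ∩ Q)).choose t : ℝ) ≤
      (#E).choose s * (s.choose t * ((#Q : ℝ) / #E) ^ t) := by
  have hsum : (∑ S ∈ E.powersetCard s, (#(S ∩ Q)).choose t : ℝ) =
      (#Q).choose t * (#E - t).choose (s - t) := by
    exact_mod_cast sum_powersetCard_choose_card_inter hQ hts
  have hchoose : ((#E).choose t : ℝ) * (#E - t).choose (s - t) = (#E).choose s * s.choose t := by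
    exact_mod_cast (Nat.choose_mul hts).symm
  calc (∑ S ∈ E.powersetCard s, (#(S ∩ Q)).choose t : ℝ)
      ≤ (#E).choose t * ((#Q : ℝ) / #E) ^ t * (#E - t).choose (s - t) := by
        rw [hsum]
        gcongr
        exact choose_le_choose_mul_div_pow (card_le_card hQ) t
    _ = (#E).choose s * (s.choose t * ((#Q : ℝ) / #E) ^ t) := by
        rw [mul_right_comm, hchoose, mul_assoc]

theorem pow_sub_eq_sum_choose {R : Type*} [CommRing R] (x : R) {a s : ℕ} (h : a ≤ s) :
    x ^ (s - a) = ∑ t ∈ range (s + 1), (1 - x) ^ t * x ^ (s - t) * a.choose t := by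
  calc x ^ (s - a) = ((1 - x) + x) ^ a * x ^ (s - a) := by simp
    _ = ∑ t ∈ range (a + 1), (1 - x) ^ t * x ^ (s - t) * a.choose t := by
      rw [add_pow, sum_mul]
      refine sum_congr rfl fun t ht ↦ ?_
      have hta : s - t = (a - t) + (s - a) := by grind
      rw [hta, pow_add]
      ring
    _ = ∑ t ∈ range (s + 1), (1 - x) ^ t * x ^ (s - t) * a.choose t := by
      refine sum_subset (range_mono (by lia)) fun t _ ht ↦ ?_
      rw [Nat.choose_eq_zero_of_lt (by simpa using ht)]
      simp

-- Expanding `1 = (1 - x) + x` at the points outside `F` leaves only nonnegative coefficients, so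
-- the bound for the factorial moments can be inserted term by term.
theorem sum_powersetCard_pow_card_inter_le (E F : Finset α) (s : ℕ) {x : ℝ} (hx₀ : 0 ≤ x)
    (hx₁ : x ≤ 1) :
    ∑ S ∈ E.powersetCard s, x ^ #(S ∩ F) ≤
      (#E).choose s * ((1 - x) * ((#(E \ F) : ℝ) / #E) + x) ^ s := by
  have : 0 ≤ 1 - x := sub_nonneg.2 hx₁
  calc ∑ S ∈ E.powersetCard s, x ^ #(S ∩ F)
      = ∑ S ∈ E.powersetCard s, ∑ t ∈ range (s + 1),
          (1 - x) ^ t * x ^ (s - t) * (#(S ∩ (E \ F))).choose t := by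
        refine sum_congr rfl fun S hS ↦ ?_
        obtain ⟨hSE, rfl⟩ := mem_powersetCard.1 hS
        have hcard : #(S ∩ F) = #S - #(S ∩ (E \ F)) := by
          rw [← inter_sdiff_assoc, inter_eq_left.2 hSE, ← card_sdiff_add_card_inter S F,
            Nat.add_sub_cancel_left]
        rw [hcard, pow_sub_eq_sum_choose x (card_le_card inter_subset_left)]
    _ = ∑ t ∈ range (s + 1), (1 - x) ^ t * x ^ (s - t) *
          ∑ S ∈ E.powersetCard s, ((#(S ∩ (E \ F))).choose t : ℝ) := by
        rw [sum_comm]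
        simp only [mul_sum]
    _ ≤ ∑ t ∈ range (s + 1), (1 - x) ^ t * x ^ (s - t) *
          ((#E).choose s * (s.choose t * ((#(E \ F) : ℝ) / #E) ^ t)) := by
        refine sum_le_sum fun t ht ↦ ?_
        gcongr
        exact sum_powersetCard_choose_card_inter_le sdiff_subset (mem_range_succ_iff.1 ht)
    _ = (#E).choose s * ((1 - x) * ((#(E \ F) : ℝ) / #E) + x) ^ s := by
        rw [add_pow, mul_sum]
        refine sum_congr rfl fun t _ ↦ ?_
        rw [mul_pow]
        ring

theorem sum_powersetCard_pow_card_inter_le_exp (E F : Finset α) (s : ℕ) {x : ℝ} (hx₀ : 0 ≤ x)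
    (hx₁ : x ≤ 1) :
    ∑ S ∈ E.powersetCard s, x ^ #(S ∩ F) ≤
      (#E).choose s * Real.exp (-((1 - x) * (s * (#(E ∩ F) / #E)))) := by
  have hx : 0 ≤ 1 - x := sub_nonneg.2 hx₁
  have hratio : (#(E \ F) : ℝ) / #E + #(E ∩ F) / #E ≤ 1 := by
    rw [← add_div]
    exact div_le_one_of_le₀ (by exact_mod_cast (card_sdiff_add_card_inter E F).le) (by positivity)
  have hbase : (1 - x) * ((#(E \ F) : ℝ) / #E) + x ≤
      Real.exp (-((1 - x) * (#(E ∩ F) / #E))) := by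
    have := mul_le_mul_of_nonneg_left hratio hx
    have := Real.add_one_le_exp (-((1 - x) * ((#(E ∩ F) : ℝ) / #E)))
    linarith
  calc ∑ S ∈ E.powersetCard s, x ^ #(S ∩ F)
      ≤ (#E).choose s * ((1 - x) * ((#(E \ F) : ℝ) / #E) + x) ^ s :=
        sum_powersetCard_pow_card_inter_le E F s hx₀ hx₁
    _ ≤ (#E).choose s * Real.exp (-((1 - x) * (#(E ∩ F) / #E))) ^ s := by gcongr
    _ = (#E).choose s * Real.exp (-((1 - x) * (s * (#(E ∩ F) / #E)))) := by
        rw [← Real.exp_nat_mul]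
        ring_nf

theorem sq_sub_one_div_two_le_mul_log {x : ℝ} (hx₀ : 0 < x) (hx₁ : x ≤ 1) :
    (x ^ 2 - 1) / 2 ≤ x * Real.log x := by
  have hsinh : (x - x⁻¹) / 2 ≤ Real.log x := by
    rw [← Real.sinh_log hx₀]
    exact Real.sinh_le_self_iff.2 (Real.log_nonpos hx₀.le hx₁)
  calc (x ^ 2 - 1) / 2 = x * ((x - x⁻¹) / 2) := by field_simp
    _ ≤ x * Real.log x := by gcongr

/-- The Chernoff bound for the lower tail of the hypergeometric distribution: `s * (#(E ∩ F) / #E)`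
is the mean of `#(S ∩ F)` over the `s`-element subsets `S` of `E`. -/
theorem card_filter_card_inter_le_mul_mean_le (E F : Finset α) (s : ℕ) {θ : ℝ} (hθ₀ : 0 < θ)
    (hθ₁ : θ ≤ 1) :
    (#{S ∈ E.powersetCard s | (#(S ∩ F) : ℝ) ≤ θ * (s * (#(E ∩ F) / #E))} : ℝ) ≤
      Real.exp (-((1 - θ) ^ 2 / 2 * (s * (#(E ∩ F) / #E)))) * (#E).choose s := by
  set μ : ℝ := s * (#(E ∩ F) / #E)
  have hμ : 0 ≤ μ := by positivity
  set bad := {S ∈ E.powersetCard s | (#(S ∩ F) : ℝ) ≤ θ * μ}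
  have hmarkov : #bad * Real.exp (Real.log θ * (θ * μ)) ≤
      (#E).choose s * Real.exp (-((1 - θ) * μ)) := by
    calc #bad * Real.exp (Real.log θ * (θ * μ))
        = ∑ _S ∈ bad, θ ^ (θ * μ) := by rw [sum_const, nsmul_eq_mul, Real.rpow_def_of_pos hθ₀]
      _ ≤ ∑ S ∈ bad, θ ^ #(S ∩ F) := by
          refine sum_le_sum fun S hS ↦ ?_
          rw [← Real.rpow_natCast]
          exact Real.rpow_le_rpow_of_exponent_ge hθ₀ hθ₁ (mem_filter.1 hS).2
      _ ≤ ∑ S ∈ E.powersetCard s, θ ^ #(S ∩ F) :=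
          sum_le_sum_of_subset_of_nonneg (filter_subset _ _) fun _ _ _ ↦ by positivity
      _ ≤ (#E).choose s * Real.exp (-((1 - θ) * μ)) :=
          sum_powersetCard_pow_card_inter_le_exp E F s hθ₀.le hθ₁
  have hexponent : -((1 - θ) * μ) - Real.log θ * (θ * μ) ≤ -((1 - θ) ^ 2 / 2 * μ) := by
    have := mul_le_mul_of_nonneg_right (sq_sub_one_div_two_le_mul_log hθ₀ hθ₁) hμ
    linarith
  calc (#bad : ℝ) ≤ (#E).choose s * Real.exp (-((1 - θ) * μ)) / Real.exp (Real.log θ * (θ * μ)) :=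
        (le_div_iff₀ (Real.exp_pos _)).2 hmarkov
    _ = Real.exp (-((1 - θ) * μ) - Real.log θ * (θ * μ)) * (#E).choose s := by
        rw [Real.exp_sub, mul_div_assoc, mul_comm]
    _ ≤ Real.exp (-((1 - θ) ^ 2 / 2 * μ)) * (#E).choose s := by gcongr

end Hypergeometric

section PairEdges

variable {ι V : Type*}

/-- The bipartite graph between the classes `{i} × V` and `{j} × V` whose edges are the pairs
in `T`, each pair listing its endpoint in class `i` first. -/
def pairGraph (i j : ι) (T : Finset (V × V)) : SimpleGraph (ι × V) :=
  .fromRel fun x y ↦ x.1 = i ∧ y.1 = j ∧ (x.2, y.2) ∈ T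

theorem pairGraph_mono {i j : ι} {T T' : Finset (V × V)} (h : T' ⊆ T) :
    pairGraph i j T' ≤ pairGraph i j T := by
  intro x y
  simp only [pairGraph, SimpleGraph.fromRel_adj]
  grind

variable [Fintype V]

open Classical in
/-- The edge set of `G(V_i, V_j)`, as a set of ordered pairs in `V_i × V_j`. -/
noncomputable def pairEdgeFinset (G : SimpleGraph (ι × V)) (i j : ι) : Finset (V × V) :=
  {p | G.Adj (i, p.1) (j, p.2)}

/-- The graph obtained from `G` by taking `T` as the new set of edges between the classes
`i` and `j`. -/
def replacePair (G : SimpleGraph (ι × V)) (i j : ι) (T : Finset (V × V)) :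
    SimpleGraph (ι × V) :=
  G \ pairGraph i j univ ⊔ pairGraph i j T

variable {G G' : SimpleGraph (ι × V)} {i j : ι} {T : Finset (V × V)}

theorem mem_pairEdgeFinset {p : V × V} :
    p ∈ pairEdgeFinset G i j ↔ G.Adj (i, p.1) (j, p.2) := by
  simp [pairEdgeFinset]

theorem pairEdgeFinset_mono (h : G' ≤ G) : pairEdgeFinset G' i j ⊆ pairEdgeFinset G i j :=
  fun _ hp ↦ mem_pairEdgeFinset.2 (h (mem_pairEdgeFinset.1 hp))

theorem card_pairEdgeFinset_comm (G : SimpleGraph (ι × V)) (i j : ι) :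
    #(pairEdgeFinset G i j) = #(pairEdgeFinset G j i) :=
  card_equiv (.prodComm V V) fun p ↦ by simp [mem_pairEdgeFinset, G.adj_comm]

theorem pairGraph_pairEdgeFinset (hij : i ≠ j) :
    pairGraph i j (pairEdgeFinset G i j) = G ⊓ pairGraph i j univ := by
  ext ⟨a, u⟩ ⟨b, v⟩
  simp only [pairGraph, SimpleGraph.fromRel_adj, SimpleGraph.inf_adj, mem_pairEdgeFinset, mem_univ]
  grind [G.adj_comm]

theorem replacePair_le (hij : i ≠ j) (hG' : G' ≤ G) (hT : T ⊆ pairEdgeFinset G i j) :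
    replacePair G' i j T ≤ G := by
  refine sup_le (sdiff_le.trans hG') ((pairGraph_mono hT).trans ?_)
  rw [pairGraph_pairEdgeFinset hij]
  exact inf_le_left

theorem replacePair_replacePair_pairEdgeFinset (hij : i ≠ j) :
    replacePair (replacePair G i j T) i j (pairEdgeFinset G i j) = G := by
  rw [replacePair, replacePair, sup_sdiff, _root_.sdiff_idem,
    sdiff_eq_bot_iff.2 (pairGraph_mono (subset_univ T)), sup_bot_eq, pairGraph_pairEdgeFinset hij,
    sup_comm, sup_inf_sdiff]

theorem pairEdgeFinset_replacePair (hij : i ≠ j) :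
    pairEdgeFinset (replacePair G i j T) i j = T := by
  ext p
  simp [mem_pairEdgeFinset, replacePair, pairGraph, hij]

theorem pairEdgeFinset_replacePair_of_ne {a b : ι} (hab : ¬(a = i ∧ b = j))
    (hba : ¬(b = i ∧ a = j)) :
    pairEdgeFinset (replacePair G i j T) a b = pairEdgeFinset G a b := by
  ext p
  simp only [mem_pairEdgeFinset, replacePair, pairGraph, SimpleGraph.sup_adj,
    SimpleGraph.sdiff_adj, SimpleGraph.fromRel_adj]
  grind

theorem card_pairEdgeFinset_replacePair (hij : i ≠ j) (hT : #T = #(pairEdgeFinset G i j))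
    (a b : ι) : #(pairEdgeFinset (replacePair G i j T) a b) = #(pairEdgeFinset G a b) := by
  by_cases hab : a = i ∧ b = j
  · obtain ⟨rfl, rfl⟩ := hab
    rw [pairEdgeFinset_replacePair hij, hT]
  by_cases hba : b = i ∧ a = j
  · obtain ⟨rfl, rfl⟩ := hba
    rw [card_pairEdgeFinset_comm, pairEdgeFinset_replacePair hij, hT, card_pairEdgeFinset_comm]
  rw [pairEdgeFinset_replacePair_of_ne hab hba]

end PairEdges

section UniformSubgraph

variable {ι V : Type*} [Fintype ι] [Fintype V] {H : SimpleGraph ι} {G G' : SimpleGraph (ι × V)}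
  {s : ℕ}

open Classical in
/-- The sample space of the random subgraph: the subgraphs of `G` with exactly `s` edges between
the classes `i` and `j`, for each edge `ij` of `H`. -/
noncomputable def subgraphsWithPairCount (H : SimpleGraph ι) (G : SimpleGraph (ι × V)) (s : ℕ) :
    Finset (SimpleGraph (ι × V)) :=
  {G' | G' ≤ G ∧ ∀ i j, H.Adj i j → #(pairEdgeFinset G' i j) = s}

theorem mem_subgraphsWithPairCount :
    G' ∈ subgraphsWithPairCount H G s ↔
      G' ≤ G ∧ ∀ i j, H.Adj i j → #(pairEdgeFinset G' i j) = s := by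
  simp [subgraphsWithPairCount]

theorem pairEdgeFinset_mem_powersetCard {i j : ι} (hij : H.Adj i j)
    (hG' : G' ∈ subgraphsWithPairCount H G s) :
    pairEdgeFinset G' i j ∈ (pairEdgeFinset G i j).powersetCard s := by
  obtain ⟨hle, hcard⟩ := mem_subgraphsWithPairCount.1 hG'
  exact mem_powersetCard.2 ⟨pairEdgeFinset_mono hle, hcard i j hij⟩

theorem replacePair_mem_subgraphsWithPairCount {i j : ι} (hij : H.Adj i j) {T : Finset (V × V)}
    (hG' : G' ∈ subgraphsWithPairCount H G s) (hT : T ∈ (pairEdgeFinset G i j).powersetCard s) :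
    replacePair G' i j T ∈ subgraphsWithPairCount H G s := by
  obtain ⟨hle, hcard⟩ := mem_subgraphsWithPairCount.1 hG'
  obtain ⟨hTG, hTs⟩ := mem_powersetCard.1 hT
  refine mem_subgraphsWithPairCount.2 ⟨replacePair_le hij.ne hle hTG, fun a b hab ↦ ?_⟩
  rw [card_pairEdgeFinset_replacePair hij.ne (hTs.trans (hcard i j hij).symm), hcard a b hab]

-- Exchanging the edges of `G'` between the classes `i` and `j` with `T` is an involution of the
-- pairs `(G', T)`, which turns the event for `G'` into the event for `T`.
theorem card_filter_pairEdgeFinset_mul_choose {i j : ι} (hij : H.Adj i j)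
    (P : Finset (V × V) → Prop) [DecidablePred P] :
    #{G' ∈ subgraphsWithPairCount H G s | P (pairEdgeFinset G' i j)} *
        (#(pairEdgeFinset G i j)).choose s =
      #(subgraphsWithPairCount H G s) * #{T ∈ (pairEdgeFinset G i j).powersetCard s | P T} := by
  rw [← card_powersetCard, ← card_product, ← card_product]
  let swap (x : SimpleGraph (ι × V) × Finset (V × V)) :=
    (replacePair x.1 i j x.2, pairEdgeFinset x.1 i j)
  have hswap (x) : swap (swap x) = x :=
    Prod.ext (replacePair_replacePair_pairEdgeFinset hij.ne) (pairEdgeFinset_replacePair hij.ne)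
  refine card_nbij' swap swap ?_ ?_ (fun x _ ↦ hswap x) (fun x _ ↦ hswap x)
  · rintro ⟨G', T⟩ hx
    simp only [coe_product, Set.mem_prod, mem_coe, mem_filter] at hx ⊢
    obtain ⟨⟨hG', hP⟩, hT⟩ := hx
    exact ⟨replacePair_mem_subgraphsWithPairCount hij hG' hT,
      pairEdgeFinset_mem_powersetCard hij hG', hP⟩
  · rintro ⟨G', T⟩ hx
    simp only [coe_product, Set.mem_prod, mem_coe, mem_filter] at hx ⊢
    obtain ⟨hG', hT, hP⟩ := hx
    refine ⟨⟨replacePair_mem_subgraphsWithPairCount hij hG' hT, ?_⟩,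
      pairEdgeFinset_mem_powersetCard hij hG'⟩
    rwa [pairEdgeFinset_replacePair hij.ne]

theorem card_filter_pairEdgeFinset_le {i j : ι} (hij : H.Adj i j)
    (P : Finset (V × V) → Prop) [DecidablePred P] {c : ℝ}
    (hP : (#{T ∈ (pairEdgeFinset G i j).powersetCard s | P T} : ℝ) ≤
      c * (#(pairEdgeFinset G i j)).choose s) :
    (#{G' ∈ subgraphsWithPairCount H G s | P (pairEdgeFinset G' i j)} : ℝ) ≤
      c * #(subgraphsWithPairCount H G s) := by
  obtain hempty | ⟨G', hG'⟩ := (subgraphsWithPairCount H G s).eq_empty_or_nonempty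
  · simp [hempty]
  have hchoose : (0 : ℝ) < (#(pairEdgeFinset G i j)).choose s := by
    rw [← card_powersetCard]
    exact_mod_cast card_pos.2 ⟨_, pairEdgeFinset_mem_powersetCard hij hG'⟩
  refine le_of_mul_le_mul_right ?_ hchoose
  calc (#{G' ∈ subgraphsWithPairCount H G s | P (pairEdgeFinset G' i j)} : ℝ) *
        (#(pairEdgeFinset G i j)).choose s
      = #(subgraphsWithPairCount H G s) *
          #{T ∈ (pairEdgeFinset G i j).powersetCard s | P T} := by
        exact_mod_cast card_filter_pairEdgeFinset_mul_choose hij P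
    _ ≤ #(subgraphsWithPairCount H G s) * (c * (#(pairEdgeFinset G i j)).choose s) := by gcongr
    _ = c * #(subgraphsWithPairCount H G s) * (#(pairEdgeFinset G i j)).choose s := by ring

end UniformSubgraph

theorem card_filter_exists_le_card_mul {ι α : Type*} (W : Finset ι) (A : Finset α)
    (P : ι → α → Prop) [∀ w, DecidablePred (P w)] [DecidablePred fun a ↦ ∃ w ∈ W, P w a] {c : ℝ}
    (hP : ∀ w ∈ W, (#{a ∈ A | P w a} : ℝ) ≤ c) :
    (#{a ∈ A | ∃ w ∈ W, P w a} : ℝ) ≤ #W * c := by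
  classical
  have hunion : ({a ∈ A | ∃ w ∈ W, P w a} : Finset α) = W.biUnion fun w ↦ {a ∈ A | P w a} := by
    ext a
    simp only [mem_filter, mem_biUnion]
    tauto
  calc (#{a ∈ A | ∃ w ∈ W, P w a} : ℝ) ≤ ∑ w ∈ W, (#{a ∈ A | P w a} : ℝ) := by
        rw [hunion]
        exact_mod_cast card_biUnion_le
    _ ≤ #W * c := by simpa using sum_le_card_nsmul W _ c hP

section LowerRegular

variable {H : SimpleGraph (Fin k)} {G G' : SimpleGraph (Fin k × Fin n)} {i j : Fin k}
  {A B : Finset (Fin n)} {ε lam lam' : ℝ} {s : ℕ}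

theorem pairCount_eq_card_pairEdgeFinset (G : SimpleGraph (Fin k × Fin n)) (i j : Fin k) :
    pairCount G i j = #(pairEdgeFinset G i j) :=
  Nat.subtype_card _ fun _ ↦ mem_pairEdgeFinset

theorem mem_subgraphsWithPairCount_iff_pairCount :
    G' ∈ subgraphsWithPairCount H G s ↔
      G' ≤ G ∧ ∀ i j, H.Adj i j → pairCount G' i j = s := by
  simp only [mem_subgraphsWithPairCount, pairCount_eq_card_pairEdgeFinset]

theorem pairCountIn_eq_card_pairEdgeFinset_inter (G : SimpleGraph (Fin k × Fin n)) (i j : Fin k)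
    (A B : Finset (Fin n)) : pairCountIn G i j A B = #(pairEdgeFinset G i j ∩ A ×ˢ B) :=
  Nat.subtype_card _ fun _ ↦ by
    simp only [mem_inter, mem_pairEdgeFinset, mem_product]
    tauto

theorem density_univ_univ (G : SimpleGraph (Fin k × Fin n)) (i j : Fin k) :
    density G i j univ univ = #(pairEdgeFinset G i j) / ((n : ℝ) * n) := by
  simp [density, pairCountIn_eq_card_pairEdgeFinset_inter]

theorem LowerRegularPair.mul_card_mul_card_div_le (hG : LowerRegularPair ε lam G i j)
    (hE : (pairEdgeFinset G i j).Nonempty) (hA : ε * n ≤ #A) (hB : ε * n ≤ #B) :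
    lam * (#A * #B / (n * n)) ≤
      (#(pairEdgeFinset G i j ∩ A ×ˢ B) : ℝ) / #(pairEdgeFinset G i j) := by
  have hE' : (0 : ℝ) < #(pairEdgeFinset G i j) := by exact_mod_cast hE.card_pos
  rcases (by positivity : (0 : ℝ) ≤ #A * #B).eq_or_lt with hAB | hAB
  · rw [← hAB]
    simp only [zero_div, mul_zero]
    positivity
  have hreg := hG A B hA hB
  rw [density_univ_univ, density, pairCountIn_eq_card_pairEdgeFinset_inter,
    le_div_iff₀ hAB] at hreg
  rw [le_div_iff₀ hE']
  calc lam * (#A * #B / (n * n)) * #(pairEdgeFinset G i j)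
      = lam * (#(pairEdgeFinset G i j) / (n * n)) * (#A * #B) := by ring
    _ ≤ #(pairEdgeFinset G i j ∩ A ×ˢ B) := hreg

theorem sq_le_card_mul_card_div (hn : 0 < n) (hε : 0 ≤ ε) (hA : ε * n ≤ #A) (hB : ε * n ≤ #B) :
    ε ^ 2 ≤ (#A : ℝ) * #B / (n * n) := by
  rw [le_div_iff₀ (by positivity)]
  calc ε ^ 2 * (n * n) = (ε * n) * (ε * n) := by ring
    _ ≤ #A * #B := by gcongr

theorem LowerRegularPair.card_filter_density_lt_le (hG : LowerRegularPair ε lam G i j)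
    (hij : H.Adj i j) (hn : 0 < n) (hs : 0 < s) (hε : 0 < ε) (hlam' : 0 < lam')
    (hlt : lam' < lam) (hA : ε * n ≤ #A) (hB : ε * n ≤ #B) :
    (#{G' ∈ subgraphsWithPairCount H G s |
        density G' i j A B < lam' * density G' i j univ univ} : ℝ) ≤
      Real.exp (-((1 - lam' / lam) ^ 2 / 2 * (lam * ε ^ 2) * s)) *
        #(subgraphsWithPairCount H G s) := by
  obtain hempty | ⟨G₁, hG₁⟩ := (subgraphsWithPairCount H G s).eq_empty_or_nonempty
  · simp [hempty]
  have hlam : 0 < lam := hlam'.trans hlt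
  have : (0 : ℝ) < n := by exact_mod_cast hn
  have hE : (pairEdgeFinset G i j).Nonempty := by
    obtain ⟨hsub, hcard⟩ := mem_powersetCard.1 (pairEdgeFinset_mem_powersetCard hij hG₁)
    exact (card_pos.1 (hcard ▸ hs)).mono hsub
  set p : ℝ := #(pairEdgeFinset G i j ∩ A ×ˢ B) / #(pairEdgeFinset G i j)
  have hAB : 0 < (#A : ℝ) * #B :=
    mul_pos ((by positivity : 0 < ε * n).trans_le hA) ((by positivity : 0 < ε * n).trans_le hB)
  have hp : lam * (#A * #B / (n * n)) ≤ p := hG.mul_card_mul_card_div_le hE hA hB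
  have hpε : lam * ε ^ 2 ≤ p :=
    (mul_le_mul_of_nonneg_left (sq_le_card_mul_card_div hn hε.le hA hB) hlam.le).trans hp
  have hchernoff := card_filter_pairEdgeFinset_le hij _
    (card_filter_card_inter_le_mul_mean_le (pairEdgeFinset G i j) (A ×ˢ B) s (div_pos hlam' hlam)
      ((div_le_one hlam).2 hlt.le))
  refine (Nat.cast_le.2 (card_le_card fun G' hG' ↦ ?_)).trans (hchernoff.trans ?_)
  · obtain ⟨hmem, hdens⟩ := mem_filter.1 hG'
    refine mem_filter.2 ⟨hmem, ?_⟩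
    rw [density_univ_univ, density, pairCountIn_eq_card_pairEdgeFinset_inter,
      (mem_subgraphsWithPairCount.1 hmem).2 i j hij, div_lt_iff₀ hAB] at hdens
    calc (#(pairEdgeFinset G' i j ∩ A ×ˢ B) : ℝ)
        ≤ lam' * (s / (n * n)) * (#A * #B) := hdens.le
      _ = lam' / lam * (s * (lam * (#A * #B / (n * n)))) := by field_simp
      _ ≤ lam' / lam * (s * p) := by gcongr
  · rw [mul_assoc _ (lam * ε ^ 2), mul_comm (lam * ε ^ 2)]
    gcongr

open Classical in
theorem LowerRegularPair.card_filter_not_lowerRegularPair_le (hG : LowerRegularPair ε lam G i j)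
    (hij : H.Adj i j) (hn : 0 < n) (hs : 0 < s) (hε : 0 < ε) (hlam' : 0 < lam')
    (hlt : lam' < lam) :
    (#{G' ∈ subgraphsWithPairCount H G s | ¬LowerRegularPair ε lam' G' i j} : ℝ) ≤
      4 ^ n * (Real.exp (-((1 - lam' / lam) ^ 2 / 2 * (lam * ε ^ 2) * s)) *
        #(subgraphsWithPairCount H G s)) := by
  let W : Finset (Finset (Fin n) × Finset (Fin n)) := {w | ε * n ≤ #w.1 ∧ ε * n ≤ #w.2}
  have hW : (#W : ℝ) ≤ 4 ^ n := by
    have : Fintype.card (Finset (Fin n) × Finset (Fin n)) = 4 ^ n := by simp [← mul_pow]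
    exact_mod_cast this ▸ card_le_univ W
  have hwitness (G' : SimpleGraph (Fin k × Fin n)) : ¬LowerRegularPair ε lam' G' i j ↔
      ∃ w ∈ W, density G' i j w.1 w.2 < lam' * density G' i j univ univ := by
    simp [LowerRegularPair, W, and_assoc]
  simp only [hwitness]
  refine (card_filter_exists_le_card_mul W _ _ fun w hw ↦ ?_).trans (by gcongr)
  obtain ⟨hA, hB⟩ := (mem_filter.1 hw).2
  exact hG.card_filter_density_lt_le hij hn hs hε hlam' hlt hA hB

open Classical in
theorem card_filter_not_forall_lowerRegularPair_le
    (hG : ∀ i j, H.Adj i j → LowerRegularPair ε lam G i j) (hn : 0 < n) (hs : 0 < s)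
    (hε : 0 < ε) (hlam' : 0 < lam') (hlt : lam' < lam) :
    (#{G' ∈ subgraphsWithPairCount H G s |
        ¬∀ i j, H.Adj i j → LowerRegularPair ε lam' G' i j} : ℝ) ≤
      k ^ 2 * (4 ^ n * (Real.exp (-((1 - lam' / lam) ^ 2 / 2 * (lam * ε ^ 2) * s)) *
        #(subgraphsWithPairCount H G s))) := by
  let W : Finset (Fin k × Fin k) := {w | H.Adj w.1 w.2}
  have hW : (#W : ℝ) ≤ k ^ 2 := by
    have : Fintype.card (Fin k × Fin k) = k ^ 2 := by simp [sq]
    exact_mod_cast this ▸ card_le_univ W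
  have hwitness (G' : SimpleGraph (Fin k × Fin n)) :
      (¬∀ i j, H.Adj i j → LowerRegularPair ε lam' G' i j) ↔
        ∃ w ∈ W, ¬LowerRegularPair ε lam' G' w.1 w.2 := by
    simp [W]
  simp only [hwitness]
  refine (card_filter_exists_le_card_mul W _ _ fun w hw ↦ ?_).trans (by gcongr)
  have hadj := (mem_filter.1 hw).2
  exact (hG _ _ hadj).card_filter_not_lowerRegularPair_le hadj hn hs hε hlam' hlt

end LowerRegular

theorem exp_neg_mul_le_one_div_pow {a c x : ℝ} {n : ℕ} (ha : 0 < a) (hc : 0 < c)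
    (h : Real.log a / c * n ≤ x) : Real.exp (-(c * x)) ≤ (1 / a) ^ n := by
  rw [div_mul_eq_mul_div, div_le_iff₀ hc] at h
  calc Real.exp (-(c * x)) ≤ Real.exp (n * -Real.log a) := by gcongr; linarith
    _ = (1 / a) ^ n := by rw [Real.exp_nat_mul, Real.exp_neg, Real.exp_log ha, one_div]

theorem edge_subgraph_general (ε lam lam' : ℝ) (hε : 0 < ε) (hlam' : 0 < lam')
    (hlt : lam' < lam) :
    ∃ C : ℝ, ∀ (k : ℕ) (H : SimpleGraph (Fin k)), ∀ ρ : ℝ, 0 < ρ →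
      ∃ n₀ : ℕ, ∀ n : ℕ, n₀ ≤ n → ∀ m' : ℕ, C * (n : ℝ) < (m' : ℝ) →
        ∀ G : SimpleGraph (Fin k × Fin n),
          (∀ i j, H.Adj i j → LowerRegularPair ε lam G i j) →
          (Nat.card {G' : SimpleGraph (Fin k × Fin n) //
              (G' ≤ G ∧ ∀ i j, H.Adj i j → pairCount G' i j = m') ∧
              ¬ (∀ i j, H.Adj i j → LowerRegularPair ε lam' G' i j)} : ℝ)
            ≤ ρ * (Nat.card {G' : SimpleGraph (Fin k × Fin n) //
                G' ≤ G ∧ ∀ i j, H.Adj i j → pairCount G' i j = m'} : ℝ) := by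
  classical
  set c : ℝ := (1 - lam' / lam) ^ 2 / 2 * (lam * ε ^ 2)
  have hlam : 0 < lam := hlam'.trans hlt
  have hc : 0 < c := by
    have := sub_pos.2 ((div_lt_one hlam).2 hlt)
    positivity
  refine ⟨Real.log 8 / c, fun k H ρ hρ ↦ ?_⟩
  have htendsto : Filter.Tendsto (fun n : ℕ ↦ (k : ℝ) ^ 2 * (1 / 2) ^ n) Filter.atTop (nhds 0) := by
    simpa using (tendsto_pow_atTop_nhds_zero_of_lt_one (r := (1 / 2 : ℝ)) (by norm_num)
      (by norm_num)).const_mul ((k : ℝ) ^ 2)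
  obtain ⟨n₀, hn₀⟩ := Filter.eventually_atTop.1
    ((htendsto.eventually_le_const hρ).and (Filter.eventually_gt_atTop 0))
  refine ⟨n₀, fun n hn m' hm' G hG ↦ ?_⟩
  obtain ⟨hnρ, hn_pos⟩ := hn₀ n hn
  have hm'_pos : 0 < m' := by
    have : 0 ≤ Real.log 8 / c * n := by positivity
    exact_mod_cast this.trans_lt hm'
  simp only [← mem_subgraphsWithPairCount_iff_pairCount]
  rw [Nat.subtype_card (subgraphsWithPairCount H G m') fun _ ↦ Iff.rfl,
    Nat.subtype_card {G' ∈ subgraphsWithPairCount H G m' |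
      ¬∀ i j, H.Adj i j → LowerRegularPair ε lam' G' i j} fun _ ↦ mem_filter]
  calc _ ≤ k ^ 2 * (4 ^ n * (Real.exp (-(c * m')) * #(subgraphsWithPairCount H G m'))) :=
        card_filter_not_forall_lowerRegularPair_le hG hn_pos hm'_pos hε hlam' hlt
    _ ≤ k ^ 2 * (4 ^ n * ((1 / 8) ^ n * #(subgraphsWithPairCount H G m'))) := by
        gcongr
        exact exp_neg_mul_le_one_div_pow (by norm_num) hc hm'.le
    _ = k ^ 2 * (1 / 2) ^ n * #(subgraphsWithPairCount H G m') := by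
        rw [← mul_assoc (4 ^ n : ℝ), ← mul_pow, ← mul_assoc]
        norm_num
    _ ≤ ρ * #(subgraphsWithPairCount H G m') := by gcongr

/-- **Lemma 3.1.** For all `0 < ε < 1/6` and `λ ∈ (0,1]` there exists `C` such that: for
`G ∈ 𝒢(H, n, m, ε, λ)`, if `G' ⊆ G` is formed by taking a uniformly random set of `m' > Cn`
edges from each `G(V_i, V_j)`, then with high probability (as `n → ∞`)
`G' ∈ 𝒢(H, n, m', ε, λ/2)`. Stated in counting form: for every `ρ > 0`, for all large `n`,
the proportion of such subgraphs `G'` that fail to be `(ε, λ/2)`-lower-regular is at most `ρ`. -/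
theorem edge_subgraph (ε lam : ℝ) (hε : 0 < ε) (hε' : ε < 1 / 6)
    (hlam : 0 < lam) (hlam' : lam ≤ 1) :
    ∃ C : ℝ, ∀ (k : ℕ) (H : SimpleGraph (Fin k)), ∀ ρ : ℝ, 0 < ρ →
      ∃ n₀ : ℕ, ∀ n : ℕ, n₀ ≤ n → ∀ m m' : ℕ, C * (n : ℝ) < (m' : ℝ) →
        ∀ G : SimpleGraph (Fin k × Fin n),
          MemFamily H m G → (∀ i j, H.Adj i j → LowerRegularPair ε lam G i j) →
          (Nat.card {G' : SimpleGraph (Fin k × Fin n) //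
              (G' ≤ G ∧ ∀ i j, H.Adj i j → pairCount G' i j = m') ∧
              ¬ (∀ i j, H.Adj i j → LowerRegularPair ε (lam / 2) G' i j)} : ℝ)
            ≤ ρ * (Nat.card {G' : SimpleGraph (Fin k × Fin n) //
                G' ≤ G ∧ ∀ i j, H.Adj i j → pairCount G' i j = m'} : ℝ) := by
  obtain ⟨C, hC⟩ := edge_subgraph_general ε lam (lam / 2) hε (half_pos hlam) (half_lt_self hlam)
  exact ⟨C, fun k H ρ hρ ↦ (hC k H ρ hρ).imp fun _ h n hn _ m' hm' G _ ↦ h n hn m' hm' G⟩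
end

section
/- Let Y be a set with N elements and let S be a family of s-element subsets of Y, for some positive integers s and N. Let k < N/4 be a positive integer and let T > 1. Then, for all but at most T^{−k/s}·C(N,m) of the m-element subsets Y_m ⊆ Y, there exists a subset X ⊆ Y_m of size |X| ≤ k such that Y_m∖X contains at most 2^s·T·|S|·(m/N)^s sets from S. (Here C(N,m) denotes the binomial coefficient.) -/
open Finset

/-!
Call an `m`-set `W` exceptional if deleting at most `k` of its elements always leaves more than `B`
members of `S` inside it. Choose members of `S` inside such a `W` one after the other, deleting the
elements of each chosen member: as long as at most `k` elements have been deleted, there are more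
than `B` possible next choices. So `W` contains at least `B ^ z` sequences of `z = ⌊k / s⌋ + 1`
pairwise disjoint members of `S`. Conversely, each of the at most `|S| ^ z` such sequences has a
union of `z s` elements, which lies in at most a proportion `(m / N) ^ (z s)` of all `m`-sets. With
`B = T |S| (m / N) ^ s`, comparing the two counts bounds the proportion of exceptional sets by
`T ^ (-z) ≤ T ^ (-k / s)`.
-/

lemma choose_sub_mul_pow_le {N m u : ℕ} (hmN : m ≤ N) (hum : u ≤ m) :
    (N - u).choose (m - u) * N ^ u ≤ N.choose m * m ^ u := by
  induction u with
  | zero => simp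
  | succ u ih =>
    have hpos : 0 < N - u := by omega
    have hratio : (m - u) * N ≤ (N - u) * m := by
      rw [Nat.sub_mul, Nat.sub_mul, Nat.mul_comm m N]
      exact Nat.sub_le_sub_left (Nat.mul_le_mul_left u hmN) _
    have habsorb : (N - u) * (N - (u + 1)).choose (m - (u + 1)) =
        (N - u).choose (m - u) * (m - u) := by
      convert Nat.add_one_mul_choose_eq (N - (u + 1)) (m - (u + 1)) using 3 <;> omega
    refine Nat.le_of_mul_le_mul_left ?_ hpos
    calc (N - u) * ((N - (u + 1)).choose (m - (u + 1)) * N ^ (u + 1))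
        = (N - u) * (N - (u + 1)).choose (m - (u + 1)) * (N ^ u * N) := by ring
      _ = (N - u).choose (m - u) * N ^ u * ((m - u) * N) := by rw [habsorb]; ring
      _ ≤ N.choose m * m ^ u * ((N - u) * m) := Nat.mul_le_mul (ih (by omega)) hratio
      _ = (N - u) * (N.choose m * m ^ (u + 1)) := by ring

lemma cast_choose_sub_le_mul_div_pow {N m u : ℕ} (hmN : m ≤ N) (hum : u ≤ m) :
    ((N - u).choose (m - u) : ℝ) ≤ N.choose m * ((m : ℝ) / N) ^ u := by
  rcases N.eq_zero_or_pos with rfl | hN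
  · obtain rfl : m = 0 := by omega
    obtain rfl : u = 0 := by omega
    simp
  · rw [div_pow, ← mul_div_assoc, le_div_iff₀ (by positivity)]
    exact_mod_cast choose_sub_mul_pow_le hmN hum

section SetFamily

variable {Y : Type*} [DecidableEq Y] {P Q S : Finset (Finset Y)} {U : Finset Y}
  {M p B T : ℝ} {s k m : ℕ}

/-- The degree of the set `U` in the hypergraph with edge set `P`: the number of edges that contain
`U`. -/
def setDegree (P : Finset (Finset Y)) (U : Finset Y) : ℕ := #{W ∈ P | U ⊆ W}

/-- Spreadness of the family `P`: set degrees decay geometrically, at rate `p`, in the size of the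
set. The family is not normalised by its size; `M` stands for the size of an ambient family, so
that spreadness passes to subfamilies. -/
def IsSpread (P : Finset (Finset Y)) (M p : ℝ) : Prop :=
  ∀ U : Finset Y, (setDegree P U : ℝ) ≤ M * p ^ #U

/-- `W` robustly contains more than `B` members of `S`: deleting at most `k` elements from `W`
never brings their number down to `B`. These are the exceptional sets of the deletion lemma. -/
def IsRobust (S : Finset (Finset Y)) (k : ℕ) (B : ℝ) (W : Finset Y) : Prop :=
  ∀ X ⊆ W, #X ≤ k → B < #{A ∈ S | A ⊆ W \ X}

lemma isRobust_iff_not_exists {W : Finset Y} :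
    IsRobust S k B W ↔ ¬ ∃ X ⊆ W, #X ≤ k ∧ (#{A ∈ S | A ⊆ W \ X} : ℝ) ≤ B := by
  simp [IsRobust]

lemma setDegree_empty : setDegree P ∅ = #P := by simp [setDegree]

lemma setDegree_mono (h : P ⊆ Q) (U : Finset Y) : setDegree P U ≤ setDegree Q U :=
  card_le_card (filter_subset_filter _ h)

lemma isSpread_powersetCard (m : ℕ) (t : Finset Y) :
    IsSpread (powersetCard m t) ((#t).choose m) ((m : ℝ) / #t) := by
  intro U
  by_cases h : setDegree (powersetCard m t) U = 0
  · rw [h, Nat.cast_zero]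
    positivity
  · obtain ⟨W, hW⟩ := card_ne_zero.1 h
    obtain ⟨⟨hWt, rfl⟩, hUW⟩ : (W ⊆ t ∧ #W = m) ∧ U ⊆ W := by simpa using hW
    rw [setDegree, card_filter_powersetCard_subset U t _ (hUW.trans hWt) (card_le_card hUW)]
    exact cast_choose_sub_le_mul_div_pow (card_le_card hWt) (card_le_card hUW)

lemma IsSpread.mono (hQ : IsSpread Q M p) (h : P ⊆ Q) : IsSpread P M p := fun U ↦
  (Nat.cast_le.2 (setDegree_mono h U)).trans (hQ U)

lemma IsSpread.card_le (hP : IsSpread P M p) : (#P : ℝ) ≤ M := by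
  simpa [setDegree_empty] using hP ∅

lemma sum_card_subset_sdiff_eq_sum_setDegree (P S : Finset (Finset Y)) (U : Finset Y) :
    ∑ W ∈ P with U ⊆ W, #{A ∈ S | A ⊆ W \ U} =
      ∑ A ∈ S with Disjoint U A, setDegree P (U ∪ A) := by
  simp_rw [setDegree, card_eq_sum_ones]
  refine sum_comm' fun W A ↦ ?_
  simp only [mem_filter, subset_sdiff, union_subset_iff, disjoint_comm (a := A)]
  tauto

lemma setDegree_mul_le_sum_of_isRobust (hP : ∀ W ∈ P, IsRobust S k B W) (hU : #U ≤ k) :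
    setDegree P U * B ≤ ∑ A ∈ S with Disjoint U A, (setDegree P (U ∪ A) : ℝ) := by
  calc setDegree P U * B
      ≤ ∑ W ∈ P with U ⊆ W, (#{A ∈ S | A ⊆ W \ U} : ℝ) := by
        rw [setDegree, ← nsmul_eq_mul]
        refine card_nsmul_le_sum _ _ _ fun W hW ↦ ?_
        obtain ⟨hWP, hUW⟩ := mem_filter.1 hW
        exact (hP W hWP U hUW hU).le
    _ = ∑ A ∈ S with Disjoint U A, (setDegree P (U ∪ A) : ℝ) :=
        mod_cast sum_card_subset_sdiff_eq_sum_setDegree P S U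

-- By `#U + j * s ≤ k + s`, at most `k` points are deleted before the last of the `j` choices.
lemma IsSpread.setDegree_mul_pow_le (hspread : IsSpread P M p) (hp : 0 ≤ p) (hB : 0 ≤ B)
    (hS : (S : Set (Finset Y)).Sized s) (hrobust : ∀ W ∈ P, IsRobust S k B W) (j : ℕ)
    (hU : #U + j * s ≤ k + s) :
    setDegree P U * B ^ j ≤ M * p ^ #U * (#S * p ^ s) ^ j := by
  induction j generalizing U with
  | zero => simpa using hspread U
  | succ j ih =>
    have hM : 0 ≤ M := (Nat.cast_nonneg _).trans hspread.card_le
    have hUk : #U ≤ k := by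
      rw [add_one_mul] at hU
      omega
    calc setDegree P U * B ^ (j + 1)
        = setDegree P U * B * B ^ j := by ring
      _ ≤ (∑ A ∈ S with Disjoint U A, (setDegree P (U ∪ A) : ℝ)) * B ^ j := by
          gcongr
          exact setDegree_mul_le_sum_of_isRobust hrobust hUk
      _ = ∑ A ∈ S with Disjoint U A, setDegree P (U ∪ A) * B ^ j := sum_mul ..
      _ ≤ ∑ A ∈ S with Disjoint U A, M * p ^ (#U + s) * (#S * p ^ s) ^ j := by
          refine sum_le_sum fun A hA ↦ ?_
          obtain ⟨hAS, hdisj⟩ := mem_filter.1 hA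
          have hcard : #(U ∪ A) = #U + s := by rw [card_union_of_disjoint hdisj, hS hAS]
          rw [← hcard]
          exact ih (by linarith)
      _ ≤ #S * (M * p ^ (#U + s) * (#S * p ^ s) ^ j) := by
          rw [sum_const, nsmul_eq_mul]
          gcongr
          exact filter_subset _ _
      _ = M * p ^ #U * (#S * p ^ s) ^ (j + 1) := by ring

lemma IsRobust.exists_mem_subset {W : Finset Y} (hB : 0 ≤ B) (hW : IsRobust S k B W) :
    ∃ A ∈ S, A ⊆ W := by
  have hpos : 0 < #{A ∈ S | A ⊆ W \ ∅} := by
    exact_mod_cast hB.trans_lt (hW ∅ (empty_subset W) (by simp))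
  obtain ⟨A, hA⟩ := card_pos.1 hpos
  exact ⟨A, by simpa using hA⟩

lemma IsSpread.card_mul_pow_le (hspread : IsSpread P M p) (hp : 0 ≤ p) (hT : 0 ≤ T)
    (hS : (S : Set (Finset Y)).Sized s)
    (hrobust : ∀ W ∈ P, IsRobust S k (T * #S * p ^ s) W) :
    #P * T ^ (k / s + 1) ≤ M := by
  rcases P.eq_empty_or_nonempty with rfl | ⟨W, hW⟩
  · simpa using hspread.card_le
  obtain ⟨A, hAS, hAW⟩ := (hrobust W hW).exists_mem_subset (by positivity)
  have hps : p ^ s ≠ 0 := by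
    intro hzero
    have hdeg : 0 < setDegree P A := card_pos.2 ⟨W, mem_filter.2 ⟨hW, hAW⟩⟩
    have hle := hspread A
    rw [hS hAS, hzero, mul_zero] at hle
    exact hle.not_gt (Nat.cast_pos.2 hdeg)
  have hpos : 0 < (#S * p ^ s) ^ (k / s + 1) := by
    have : 0 < #S := card_pos.2 ⟨A, hAS⟩
    positivity
  have hsize : #(∅ : Finset Y) + (k / s + 1) * s ≤ k + s := by
    rw [card_empty, zero_add, add_one_mul]
    exact Nat.add_le_add_right (Nat.div_mul_le_self k s) s
  refine le_of_mul_le_mul_right ?_ hpos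
  calc #P * T ^ (k / s + 1) * (#S * p ^ s) ^ (k / s + 1)
      = setDegree P ∅ * (T * #S * p ^ s) ^ (k / s + 1) := by rw [setDegree_empty]; ring
    _ ≤ M * p ^ #(∅ : Finset Y) * (#S * p ^ s) ^ (k / s + 1) :=
        hspread.setDegree_mul_pow_le hp (by positivity) hS hrobust _ hsize
    _ = M * (#S * p ^ s) ^ (k / s + 1) := by simp

end SetFamily

lemma rpow_div_le_pow_div_add_one {T : ℝ} (hT : 1 ≤ T) (k s : ℕ) :
    T ^ ((k : ℝ) / s) ≤ T ^ (k / s + 1) := by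
  rw [← Real.rpow_natCast, Nat.cast_add_one, ← Nat.floor_div_eq_div (K := ℝ)]
  exact Real.rpow_le_rpow_of_exponent_le hT (Nat.lt_floor_add_one _).le

lemma rpow_neg_div_le_rpow_neg_div {T T' : ℝ} (hT : 0 < T) (hTT' : T ≤ T') (k s : ℕ) :
    T' ^ (-(k : ℝ) / s) ≤ T ^ (-(k : ℝ) / s) :=
  Real.rpow_le_rpow_of_nonpos hT hTT'
    (div_nonpos_of_nonpos_of_nonneg (neg_nonpos.2 k.cast_nonneg) s.cast_nonneg)

theorem deletion_general_general {Y : Type*} [Fintype Y] [DecidableEq Y]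
    (s k m : ℕ) (hs : 0 < s) (T : ℝ) (hT : 1 ≤ T)
    (S : Finset (Finset Y)) (hS : ∀ A ∈ S, A.card = s) :
    (Nat.card {Ym : Finset Y // Ym.card = m ∧
        ¬ ∃ X : Finset Y, X ⊆ Ym ∧ X.card ≤ k ∧
          ((S.filter fun A => A ⊆ Ym \ X).card : ℝ) ≤
            T * (S.card : ℝ) * ((m : ℝ) / (Fintype.card Y : ℝ)) ^ s} : ℝ)
      ≤ T ^ (-(k : ℝ) / (s : ℝ)) * ((Fintype.card Y).choose m : ℝ) := by
  classical
  set p : ℝ := (m : ℝ) / Fintype.card Y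
  have hT0 : 0 < T := one_pos.trans_le hT
  let P : Finset (Finset Y) := {W ∈ powersetCard m univ | IsRobust S k (T * #S * p ^ s) W}
  have hspread : IsSpread P ((Fintype.card Y).choose m) p :=
    (isSpread_powersetCard m univ).mono (filter_subset _ _)
  have hcount : #P * T ^ (k / s + 1) ≤ (Fintype.card Y).choose m :=
    hspread.card_mul_pow_le (by positivity) hT0.le hS fun W hW ↦ (mem_filter.1 hW).2
  rw [Nat.subtype_card P fun W ↦ by
      rw [mem_filter, mem_powersetCard_univ, isRobust_iff_not_exists],
    neg_div, Real.rpow_neg hT0.le, ← div_eq_inv_mul, le_div_iff₀ (by positivity)]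
  calc #P * T ^ ((k : ℝ) / s)
      ≤ #P * T ^ (k / s + 1) := by gcongr; exact rpow_div_le_pow_div_add_one hT k s
    _ ≤ (Fintype.card Y).choose m := hcount

/-- **Lemma A.1 (general deletion lemma).** Let `Y` be a set with `N` elements and `S` a family
of `s`-element subsets of `Y`. Let `k < N/4` be a positive integer and `T > 1`. Then for all but
at most `T^(-k/s) C(N, m)` of the `m`-element subsets `Y_m ⊆ Y`, there is `X ⊆ Y_m` with
`|X| ≤ k` such that `Y_m \ X` contains at most `2^s T |S| (m/N)^s` sets from `S`. -/
theorem deletion_general {Y : Type*} [Fintype Y] [DecidableEq Y]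
    (N s k m : ℕ) (hY : Fintype.card Y = N) (hs : 0 < s) (hN : 0 < N)
    (hk : 0 < k) (hk4 : (k : ℝ) < (N : ℝ) / 4) (T : ℝ) (hT : 1 < T)
    (S : Finset (Finset Y)) (hS : ∀ A ∈ S, A.card = s) :
    (Nat.card {Ym : Finset Y // Ym.card = m ∧
        ¬ ∃ X : Finset Y, X ⊆ Ym ∧ X.card ≤ k ∧
          ((S.filter fun A => A ⊆ Ym \ X).card : ℝ) ≤
            2 ^ s * T * (S.card : ℝ) * ((m : ℝ) / (N : ℝ)) ^ s} : ℝ)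
      ≤ T ^ (-(k : ℝ) / (s : ℝ)) * (N.choose m : ℝ) := by
  subst hY
  have hT0 : 0 < T := one_pos.trans hT
  have hle : T ≤ 2 ^ s * T := le_mul_of_one_le_left hT0.le (one_le_pow₀ one_le_two)
  exact (deletion_general_general s k m hs (2 ^ s * T) (hT.le.trans hle) S hS).trans
    (mul_le_mul_of_nonneg_right (rpow_neg_div_le_rpow_neg_div hT0 hle k s) (Nat.cast_nonneg _))
end
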